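/- arXiv:1610.06617 — 2 statements merged into one kernel-verified Lean document; each statement's English description precedes it below -/
import Mathlib

section
/- Let K and L be two algebraically closed fields (possibly of different characteristics) and n, m positive integers. Then for every degree d ≥ 0, the K-dimension of the degree-d homogeneous component of R_K(n,m) = K[Mat_{n,n}^m]^{SL_n × SL_n} equals the L-dimension of the degree-d component of R_L(n,m), and the K-dimension of the degree-d component of S_K(n,m) = K[Mat_{n,n}^m]^{GL_n} equals the L-dimension of the degree-d component of S_L(n,m). Equivalently, the Hilbert series H(R(n,m),t) and H(S(n,m),t) are independent of the underlying algebraically closed field. -/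
open MvPolynomial Matrix

/-- Coordinate functions of an `m`-tuple of `n × n` matrices. -/
def matCoords {K : Type} [Field K] {n m : ℕ} (X : Fin m → Matrix (Fin n) (Fin n) K) :
    Fin m × Fin n × Fin n → K :=
  fun p => X p.1 p.2.1 p.2.2

/-- The ring of matrix semi-invariants `R(n,m) = K[Mat_{n,n}^m]^{SL_n × SL_n}`, where
`(A,B)` acts by `(X_1, …, X_m) ↦ (A X_1 B⁻¹, …, A X_m B⁻¹)`. -/
noncomputable def matrixSemiInvariants (K : Type) [Field K] (n m : ℕ) :
    Subalgebra K (MvPolynomial (Fin m × Fin n × Fin n) K) :=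
  ⨅ (A : SpecialLinearGroup (Fin n) K) (B : SpecialLinearGroup (Fin n) K)
    (X : Fin m → Matrix (Fin n) (Fin n) K),
      AlgHom.equalizer
        (aeval (matCoords fun i => A.val * X i * (B⁻¹).val))
        (aeval (matCoords X))

/-- The ring of matrix invariants `S(n,m) = K[Mat_{n,n}^m]^{GL_n}`, where `A` acts by
simultaneous conjugation. -/
noncomputable def matrixInvariants (K : Type) [Field K] (n m : ℕ) :
    Subalgebra K (MvPolynomial (Fin m × Fin n × Fin n) K) :=
  ⨅ (A : GeneralLinearGroup (Fin n) K) (X : Fin m → Matrix (Fin n) (Fin n) K),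
      AlgHom.equalizer
        (aeval (matCoords fun i => A.val * X i * (A⁻¹).val))
        (aeval (matCoords X))

set_option linter.all false

section Comb

variable {σ ι : Type} [Fintype σ] [DecidableEq σ] [Fintype ι] [LinearOrder ι] {N : ℕ}

/-- weight of a monomial -/
def wtE (e : ι × Fin (N+1) ≃ σ) (a : σ →₀ ℕ) : Fin (N+1) → ℕ := fun j => ∑ r, a (e (r, j))

/-- the lattice-word condition -/
def Yam (e : ι × Fin (N+1) ≃ σ) (a : σ →₀ ℕ) : Prop :=
  ∀ (j : Fin N) (r : ι), ∑ s with s ≤ r, a (e (s, j.succ)) ≤ ∑ s with s < r, a (e (s, j.castSucc))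

/-- change the exponents of two adjacent letters -/
noncomputable def setLJ (e : ι × Fin (N+1) ≃ σ) (j : Fin N) (A B : ι → ℕ) (a : σ →₀ ℕ) : σ →₀ ℕ :=
  Finsupp.equivFunOnFinite.symm (fun v =>
    if (e.symm v).2 = j.castSucc then A (e.symm v).1
    else if (e.symm v).2 = j.succ then B (e.symm v).1 else a v)

lemma setLJ_left (e : ι × Fin (N+1) ≃ σ) (j : Fin N) (A B : ι → ℕ) (a : σ →₀ ℕ) (r : ι) :
    setLJ e j A B a (e (r, j.castSucc)) = A r := by
  simp [setLJ]

lemma setLJ_right (e : ι × Fin (N+1) ≃ σ) (j : Fin N) (A B : ι → ℕ) (a : σ →₀ ℕ) (r : ι) :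
    setLJ e j A B a (e (r, j.succ)) = B r := by
  have : j.succ ≠ j.castSucc := by
    intro h; have := congrArg Fin.val h; simp at this
  simp [setLJ, this]

lemma setLJ_other (e : ι × Fin (N+1) ≃ σ) (j : Fin N) (A B : ι → ℕ) (a : σ →₀ ℕ) (r : ι)
    (k : Fin (N+1)) (h1 : k ≠ j.castSucc) (h2 : k ≠ j.succ) :
    setLJ e j A B a (e (r, k)) = a (e (r, k)) := by
  simp [setLJ, h1, h2]

lemma ext_e (e : ι × Fin (N+1) ≃ σ) {a b : σ →₀ ℕ} (h : ∀ r k, a (e (r, k)) = b (e (r, k))) :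
    a = b := by
  ext v
  have := h (e.symm v).1 (e.symm v).2
  simpa using this

/-- closure under generalized Bender--Knuth moves -/
def BK (e : ι × Fin (N+1) ≃ σ) (S : Finset (σ →₀ ℕ)) : Prop :=
  ∀ j : Fin N, ∃ p q : (σ →₀ ℕ) → ι → ℕ, ∀ a ∈ S,
    (∀ r, p a r ≤ a (e (r, j.castSucc))) ∧ (∀ r, q a r ≤ a (e (r, j.succ))) ∧
    (∀ r, ∑ s with s < r, p a s = ∑ s with s ≤ r, q a s) ∧ (∑ s, p a s = ∑ s, q a s) ∧
    ∀ A B : ι → ℕ, (∀ r, A r + B r = a (e (r, j.castSucc)) + a (e (r, j.succ))) →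
      (∀ r, p a r ≤ A r) → (∀ r, q a r ≤ B r) →
      setLJ e j A B a ∈ S ∧ p (setLJ e j A B a) = p a ∧ q (setLJ e j A B a) = q a

/-- weight monomial -/
noncomputable def xw (w : Fin (N+1) → ℕ) : MvPolynomial (Fin (N+1)) ℤ := ∏ j, X j ^ w j

/-- generating function -/
noncomputable def genF (e : ι × Fin (N+1) ≃ σ) (S : Finset (σ →₀ ℕ)) :
    MvPolynomial (Fin (N+1)) ℤ := ∑ a ∈ S, xw (wtE e a)

/-- alternant -/
noncomputable def altP (b : Fin (N+1) → ℕ) : MvPolynomial (Fin (N+1)) ℤ :=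
  Matrix.det (Matrix.of fun i j => (X i : MvPolynomial (Fin (N+1)) ℤ) ^ b j)

/-- staircase -/
def rhoF (j : Fin (N+1)) : ℕ := (Fin.rev j).val

lemma rho_succ (j : Fin N) : (rhoF j.castSucc : ℕ) = rhoF j.succ + 1 := by
  simp [rhoF, Fin.val_rev]; omega

lemma altP_rho_ne : (altP rhoF : MvPolynomial (Fin (N+1)) ℤ) ≠ 0 := by
  have h : (Matrix.of fun i j => (X i : MvPolynomial (Fin (N+1)) ℤ) ^ rhoF j)
      = (Matrix.vandermonde (fun i => (X i : MvPolynomial (Fin (N+1)) ℤ))).submatrix id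
        (Fin.revPerm) := by
    ext i j; simp [Matrix.vandermonde, rhoF]
  rw [altP, h, Matrix.det_permute']
  have h2 : (Matrix.vandermonde (fun i => (X i : MvPolynomial (Fin (N+1)) ℤ))).det ≠ 0 := by
    rw [Matrix.det_vandermonde_ne_zero_iff]
    exact MvPolynomial.X_injective
  refine mul_ne_zero ?_ h2
  rcases Int.units_eq_one_or (Equiv.Perm.sign (Fin.revPerm : Equiv.Perm (Fin (N+1)))) with h | h <;>
    simp [h]

lemma altP_swap (b b' : Fin (N+1) → ℕ) (j : Fin N) (h1 : b' j.castSucc = b j.succ)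
    (h2 : b' j.succ = b j.castSucc) (h3 : ∀ k, k ≠ j.castSucc → k ≠ j.succ → b' k = b k) :
    altP b' = - altP b := by
  have hne : j.castSucc ≠ j.succ := by
    intro h; have := congrArg Fin.val h; simp at this
  have h : (Matrix.of fun i k => (X i : MvPolynomial (Fin (N+1)) ℤ) ^ b' k)
      = (Matrix.of fun i k => (X i : MvPolynomial (Fin (N+1)) ℤ) ^ b k).submatrix id
        (Equiv.swap j.castSucc j.succ) := by
    ext1 i k
    simp only [Matrix.of_apply, Matrix.submatrix_apply, id]
    by_cases hk1 : k = j.castSucc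
    · subst hk1; rw [Equiv.swap_apply_left, h1]
    · by_cases hk2 : k = j.succ
      · subst hk2; rw [Equiv.swap_apply_right, h2]
      · rw [Equiv.swap_apply_of_ne_of_ne hk1 hk2, h3 k hk1 hk2]
  rw [altP, h, Matrix.det_permute', Equiv.Perm.sign_swap hne]
  simp [altP]

lemma altP_eq_zero (b : Fin (N+1) → ℕ) (j : Fin N) (h : b j.castSucc = b j.succ) :
    altP b = 0 := by
  have hne : j.castSucc ≠ j.succ := by
    intro h; have := congrArg Fin.val h; simp at this
  exact Matrix.det_zero_of_column_eq hne (by intro i; simp [h])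

lemma sum_split (f : ι → ℕ) (r : ι) :
    ∑ s, f s = ∑ s with s < r, f s + f r + ∑ s with r < s, f s := by
  have h1 : (∑ s, f s) = ∑ s with s < r, f s + ∑ s with ¬ s < r, f s :=
    (Finset.sum_filter_add_sum_filter_not _ _ _).symm
  have h2 : (Finset.univ.filter (fun s => ¬ s < r)) = insert r (Finset.univ.filter (fun s => r < s)) := by
    ext s; simp [le_iff_eq_or_lt, eq_comm]
  rw [h1, h2, Finset.sum_insert (by simp)]; ring

lemma sum_le_split (f : ι → ℕ) (r : ι) :
    ∑ s with s ≤ r, f s = ∑ s with s < r, f s + f r := by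
  have h2 : (Finset.univ.filter (fun s => s ≤ r)) = insert r (Finset.univ.filter (fun s => s < r)) := by
    ext s; simp [le_iff_eq_or_lt]
  rw [h2, Finset.sum_insert (by simp)]; ring

lemma genF_swap (e : ι × Fin (N+1) ≃ σ) (S : Finset (σ →₀ ℕ)) (hS : BK e S) (j : Fin N) :
    rename (Equiv.swap j.castSucc j.succ) (genF e S) = genF e S := by
  have hne : j.castSucc ≠ j.succ := by
    intro h; have := congrArg Fin.val h; simp at this
  obtain ⟨p, q, H⟩ := hS j
  let g : (σ →₀ ℕ) → (σ →₀ ℕ) := fun a => setLJ e j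
    (fun r => a (e (r, j.succ)) - q a r + p a r) (fun r => a (e (r, j.castSucc)) - p a r + q a r) a
  have hg : ∀ a ∈ S, g a ∈ S ∧ p (g a) = p a ∧ q (g a) = q a := by
    intro a ha
    obtain ⟨h1, h2, h3, h4, h5⟩ := H a ha
    apply h5
    · intro r; have := h1 r; have := h2 r; omega
    · intro r; omega
    · intro r; omega
  have hgg : ∀ a ∈ S, g (g a) = a := by
    intro a ha
    obtain ⟨h1, h2, h3, h4, h5⟩ := H a ha
    obtain ⟨k1, k2, k3⟩ := hg a ha
    apply ext_e e
    intro r k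
    by_cases hk1 : k = j.castSucc
    · subst hk1
      have : g (g a) (e (r, j.castSucc)) = (g a) (e (r, j.succ)) - q (g a) r + p (g a) r :=
        setLJ_left _ _ _ _ _ _
      rw [this, k2, k3]
      have : g a (e (r, j.succ)) = a (e (r, j.castSucc)) - p a r + q a r := setLJ_right _ _ _ _ _ _
      rw [this]; have := h1 r; omega
    · by_cases hk2 : k = j.succ
      · subst hk2
        have : g (g a) (e (r, j.succ)) = (g a) (e (r, j.castSucc)) - p (g a) r + q (g a) r :=
          setLJ_right _ _ _ _ _ _
        rw [this, k2, k3]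
        have : g a (e (r, j.castSucc)) = a (e (r, j.succ)) - q a r + p a r := setLJ_left _ _ _ _ _ _
        rw [this]; have := h2 r; omega
      · have h1 : g (g a) (e (r, k)) = g a (e (r, k)) := setLJ_other _ _ _ _ _ _ _ hk1 hk2
        have h2 : g a (e (r, k)) = a (e (r, k)) := setLJ_other _ _ _ _ _ _ _ hk1 hk2
        rw [h1, h2]
  have key : ∀ (f : ι → ℕ) (g : ι → ℕ), (∀ s, g s ≤ f s) → ∑ s, (f s - g s) = ∑ s, f s - ∑ s, g s :=
    fun f g h => Finset.sum_tsub_distrib _ (fun s _ => h s)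
  rw [genF, map_sum]
  refine Finset.sum_nbij' g g (fun a ha => (hg a ha).1) (fun a ha => (hg a ha).1) hgg hgg ?_
  intro a ha
  obtain ⟨h1, h2, h3, h4, h5⟩ := H a ha
  simp only [xw, map_prod, map_pow, rename_X]
  rw [← Equiv.prod_comp (Equiv.swap j.castSucc j.succ)]
  simp only [Equiv.swap_apply_self]
  apply Finset.prod_congr rfl
  intro k _
  congr 1
  by_cases hk1 : k = j.castSucc
  · subst hk1
    rw [Equiv.swap_apply_left]
    simp only [wtE]
    rw [Finset.sum_congr rfl (fun r _ => setLJ_left e j _ _ a r), Finset.sum_add_distrib,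
      key _ _ h2, h4]
    have := Finset.sum_le_sum (fun r (_ : r ∈ Finset.univ) => h2 r)
    omega
  · by_cases hk2 : k = j.succ
    · subst hk2
      rw [Equiv.swap_apply_right]
      simp only [wtE]
      rw [Finset.sum_congr rfl (fun r _ => setLJ_right e j _ _ a r), Finset.sum_add_distrib,
        key _ _ h1, h4]
      have := Finset.sum_le_sum (fun r (_ : r ∈ Finset.univ) => h1 r)
      omega
    · rw [Equiv.swap_apply_of_ne_of_ne hk1 hk2]
      simp only [wtE]
      exact Finset.sum_congr rfl (fun r _ => (setLJ_other e j _ _ a r k hk1 hk2).symm)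

lemma genF_symm (e : ι × Fin (N+1) ≃ σ) (S : Finset (σ →₀ ℕ)) (hS : BK e S)
    (π : Equiv.Perm (Fin (N+1))) : rename π (genF e S) = genF e S := by
  have hπ : π ∈ Submonoid.closure (Set.range fun i : Fin N => Equiv.swap i.castSucc i.succ) := by
    rw [Equiv.Perm.mclosure_swap_castSucc_succ]; trivial
  induction hπ using Submonoid.closure_induction with
  | mem x hx => obtain ⟨j, rfl⟩ := hx; exact genF_swap e S hS j
  | one => simp
  | mul x y _ _ hx hy =>
    have : (⇑(x * y) : Fin (N+1) → Fin (N+1)) = x ∘ y := rfl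
    rw [this, ← rename_rename, hy, hx]

lemma altP_mul_genF (e : ι × Fin (N+1) ≃ σ) (S : Finset (σ →₀ ℕ)) (hS : BK e S) :
    altP rhoF * genF e S = ∑ a ∈ S, altP (fun j => wtE e a j + rhoF j) := by
  simp only [altP, Matrix.det_apply]
  rw [Finset.sum_comm, Finset.sum_mul]
  apply Finset.sum_congr rfl
  intro π _
  rw [← Finset.smul_sum, smul_mul_assoc]
  congr 1
  conv_lhs => rw [← genF_symm e S hS π]
  rw [genF, map_sum, Finset.mul_sum]
  apply Finset.sum_congr rfl
  intro a _
  simp only [xw, map_prod, map_pow, rename_X, Matrix.of_apply]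
  rw [← Finset.prod_mul_distrib]
  apply Finset.prod_congr rfl
  intro j _
  rw [pow_add, mul_comm]

/-- violation of the lattice condition -/
def Viol (e : ι × Fin (N+1) ≃ σ) (a : σ →₀ ℕ) (r : ι) (j : Fin N) : Prop :=
  ∑ s with s < r, a (e (s, j.castSucc)) < ∑ s with s ≤ r, a (e (s, j.succ))

/-- first violation -/
def FV (e : ι × Fin (N+1) ≃ σ) (a : σ →₀ ℕ) (r : ι) (j : Fin N) : Prop :=
  Viol e a r j ∧ (∀ r' < r, ∀ j', ¬ Viol e a r' j') ∧ ∀ j', j < j' → ¬ Viol e a r j'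

lemma FV_exists (e : ι × Fin (N+1) ≃ σ) (a : σ →₀ ℕ) (h : ¬ Yam e a) : ∃ r j, FV e a r j := by
  classical
  have h0 : ∃ j r, Viol e a r j := by
    simpa [Yam, Viol] using h
  let Rs : Finset ι := Finset.univ.filter (fun r => ∃ j, Viol e a r j)
  have hRs : Rs.Nonempty := by
    obtain ⟨j, r, hr⟩ := h0; exact ⟨r, by simp [Rs]; exact ⟨j, hr⟩⟩
  have hr := Finset.min'_mem Rs hRs
  set r := Rs.min' hRs with hrdef
  let Js : Finset (Fin N) := Finset.univ.filter (fun j => Viol e a r j)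
  have hJs : Js.Nonempty := by
    obtain ⟨j, hj⟩ := (Finset.mem_filter.mp hr).2; exact ⟨j, by simp [Js]; exact hj⟩
  refine ⟨r, Js.max' hJs, (Finset.mem_filter.mp (Finset.max'_mem Js hJs)).2, ?_, ?_⟩
  · intro r' hr' j' hv
    have : r ≤ r' := Finset.min'_le _ _ (by simp [Rs]; exact ⟨j', hv⟩)
    exact absurd hr' (not_lt.mpr this)
  · intro j' hj' hv
    have : j' ≤ Js.max' hJs := Finset.le_max' _ _ (by simp [Js]; exact hv)
    exact absurd hj' (not_lt.mpr this)

lemma FV_unique (e : ι × Fin (N+1) ≃ σ) (a : σ →₀ ℕ) {r r' : ι} {j j' : Fin N}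
    (h : FV e a r j) (h' : FV e a r' j') : r = r' ∧ j = j' := by
  have hr : r = r' := by
    rcases lt_trichotomy r r' with h1 | h1 | h1
    · exact absurd h.1 (h'.2.1 _ h1 _)
    · exact h1
    · exact absurd h'.1 (h.2.1 _ h1 _)
  subst hr
  refine ⟨rfl, ?_⟩
  rcases lt_trichotomy j j' with h1 | h1 | h1
  · exact absurd h'.1 (h.2.2 _ h1)
  · exact h1
  · exact absurd h.1 (h'.2.2 _ h1)

lemma not_Yam_of_FV (e : ι × Fin (N+1) ≃ σ) (a : σ →₀ ℕ) {r : ι} {j : Fin N}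
    (h : FV e a r j) : ¬ Yam e a := fun hY => absurd (hY j r) (not_le.mpr h.1)

lemma toggle_exists (e : ι × Fin (N+1) ≃ σ) (S : Finset (σ →₀ ℕ)) (hS : BK e S) :
    ∃ T : (σ →₀ ℕ) → ι → Fin N → (σ →₀ ℕ), ∀ a ∈ S, ∀ r j, FV e a r j →
      T a r j ∈ S ∧ FV e (T a r j) r j ∧ T (T a r j) r j = a ∧
      wtE e (T a r j) j.castSucc + 1 = wtE e a j.succ ∧
      wtE e (T a r j) j.succ = wtE e a j.castSucc + 1 ∧
      ∀ k, k ≠ j.castSucc → k ≠ j.succ → wtE e (T a r j) k = wtE e a k := by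
  choose p q H using hS
  let x : (σ →₀ ℕ) → ι → Fin N → ℕ := fun a r j =>
    (∑ s with s < r, (a (e (s, j.castSucc)) - p j a s)) + 1
      - ∑ s with s < r, (a (e (s, j.succ)) - q j a s)
  let AA : (σ →₀ ℕ) → ι → Fin N → ι → ℕ := fun a r j s =>
    if s < r then a (e (s, j.castSucc)) else if s = r then
      p j a s + (a (e (s, j.succ)) - q j a s - x a r j) else
      a (e (s, j.succ)) - q j a s + p j a s
  let BB : (σ →₀ ℕ) → ι → Fin N → ι → ℕ := fun a r j s =>
    if s < r then a (e (s, j.succ)) else if s = r then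
      q j a s + x a r j + (a (e (s, j.castSucc)) - p j a s) else
      a (e (s, j.castSucc)) - p j a s + q j a s
  refine ⟨fun a r j => setLJ e j (AA a r j) (BB a r j) a, ?_⟩
  intro a ha r j hF
  obtain ⟨h1, h2, h3, h4, h5⟩ := H j a ha
  have key : ∀ (P : ι → Prop) [DecidablePred P] (f : ι → ℕ) (g : ι → ℕ), (∀ s, g s ≤ f s) →
      ∑ s with P s, (f s - g s) + ∑ s with P s, g s = ∑ s with P s, f s := by
    intro P _ f g h
    rw [← Finset.sum_add_distrib]
    exact Finset.sum_congr rfl (fun s _ => Nat.sub_add_cancel (h s))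
  have hL := fun r => key (fun s => s < r) (fun s => a (e (s, j.castSucc))) (p j a) h1
  have hR := fun r => key (fun s => s < r) (fun s => a (e (s, j.succ))) (q j a) h2
  have hUV : ∑ s with s < r, (a (e (s, j.succ)) - q j a s) ≤
      ∑ s with s < r, (a (e (s, j.castSucc)) - p j a s) := by
    by_cases hne : (Finset.univ.filter (fun s => s < r)).Nonempty
    · set r1 := (Finset.univ.filter (fun s => s < r)).max' hne with hr1
      have hr1r : r1 < r := (Finset.mem_filter.mp (Finset.max'_mem _ hne)).2
      have hfil : (Finset.univ.filter (fun s => s < r)) = Finset.univ.filter (fun s => s ≤ r1) := by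
        ext s
        simp only [Finset.mem_filter, Finset.mem_univ, true_and]
        constructor
        · intro hs; exact Finset.le_max' _ _ (by simpa using hs)
        · intro hs; exact lt_of_le_of_lt hs hr1r
      have hnv := hF.2.1 r1 hr1r j
      simp only [Viol, not_lt] at hnv
      rw [hfil, sum_le_split, sum_le_split]
      rw [sum_le_split] at hnv
      have e1 := hL r1
      have e2 := hR r1
      have e3 := h3 r1
      rw [sum_le_split] at e3
      have := h2 r1
      omega
    · rw [Finset.not_nonempty_iff_eq_empty] at hne
      rw [hne]; simp
  have hv := hF.1
  simp only [Viol] at hv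
  rw [sum_le_split] at hv
  have e1 := hL r
  have e2 := hR r
  have e3 := h3 r
  rw [sum_le_split] at e3
  have hx : x a r j + ∑ s with s < r, (a (e (s, j.succ)) - q j a s) =
      (∑ s with s < r, (a (e (s, j.castSucc)) - p j a s)) + 1 := by
    simp only [x]; omega
  have hxle : x a r j ≤ a (e (r, j.succ)) - q j a r := by
    have := h2 r; omega
  have hmem := h5 (AA a r j) (BB a r j) (by
      intro s
      simp only [AA, BB]
      have := h1 s; have := h2 s
      split_ifs with c1 c2
      · rfl
      · subst c2; omega
      · omega) (by
      intro s
      simp only [AA]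
      have := h1 s
      split_ifs with c1 c2 <;> omega) (by
      intro s
      simp only [BB]
      have := h2 s
      split_ifs with c1 c2 <;> omega)
  obtain ⟨m1, m2, m3⟩ := hmem
  set a' := setLJ e j (AA a r j) (BB a r j) a with ha'
  have aL : ∀ s, a' (e (s, j.castSucc)) = AA a r j s := fun s => setLJ_left _ _ _ _ _ _
  have aR : ∀ s, a' (e (s, j.succ)) = BB a r j s := fun s => setLJ_right _ _ _ _ _ _
  have aO : ∀ s k, k ≠ j.castSucc → k ≠ j.succ → a' (e (s, k)) = a (e (s, k)) :=
    fun s k hk1 hk2 => setLJ_other _ _ _ _ _ _ _ hk1 hk2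
  have alt : ∀ s k, s < r → a' (e (s, k)) = a (e (s, k)) := by
    intro s k hs
    by_cases hk1 : k = j.castSucc
    · subst hk1; rw [aL]; simp [AA, hs]
    · by_cases hk2 : k = j.succ
      · subst hk2; rw [aR]; simp [BB, hs]
      · exact aO s k hk1 hk2
  have sumlt : ∀ r' k, r' ≤ r → ∑ s with s < r', a' (e (s, k)) = ∑ s with s < r', a (e (s, k)) := by
    intro r' k hr'
    apply Finset.sum_congr rfl
    intro s hs
    exact alt s k (lt_of_lt_of_le (Finset.mem_filter.mp hs).2 hr')
  have xeq : x a' r j = x a r j := by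
    simp only [x]
    congr 1
    · congr 1
      apply Finset.sum_congr rfl
      intro s hs
      rw [alt s _ (Finset.mem_filter.mp hs).2, m2]
    · apply Finset.sum_congr rfl
      intro s hs
      rw [alt s _ (Finset.mem_filter.mp hs).2, m3]
  have AAr : AA a r j r = p j a r + (a (e (r, j.succ)) - q j a r - x a r j) := by simp [AA]
  have BBr : BB a r j r = q j a r + x a r j + (a (e (r, j.castSucc)) - p j a r) := by simp [BB]
  have key2 : ∀ (f : ι → ℕ) (g : ι → ℕ), (∀ s, g s ≤ f s) →
      ∑ s with r < s, (f s - g s) + ∑ s with r < s, g s = ∑ s with r < s, f s := by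
    intro f g h
    rw [← Finset.sum_add_distrib]
    exact Finset.sum_congr rfl (fun s _ => Nat.sub_add_cancel (h s))
  have gL := key2 (fun s => a (e (s, j.castSucc))) (p j a) h1
  have gR := key2 (fun s => a (e (s, j.succ))) (q j a) h2
  rw [sum_split _ r, sum_split (q j a) r] at h4
  have hh1 := h1 r
  have hh2 := h2 r
  refine ⟨m1, ⟨?_, ?_, ?_⟩, ?_, ?_, ?_, ?_⟩
  · simp only [Viol]
    rw [sum_le_split, sumlt r _ le_rfl, sumlt r _ le_rfl, aR, BBr]
    omega
  · intro r' hr' j'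
    have := hF.2.1 r' hr' j'
    simp only [Viol] at this ⊢
    rw [sum_le_split] at this ⊢
    rw [sumlt r' _ hr'.le, sumlt r' _ hr'.le, alt r' _ hr']
    exact this
  · intro j' hj'
    have := hF.2.2 j' hj'
    simp only [Viol] at this ⊢
    rw [sum_le_split] at this ⊢
    rw [sumlt r _ le_rfl, sumlt r _ le_rfl, aO r j'.succ]
    · exact this
    · intro h; have := congrArg Fin.val h; simp at this; omega
    · intro h; have := congrArg Fin.val h; simp at this; omega
  · apply ext_e e
    intro s k
    by_cases hk1 : k = j.castSucc
    · subst hk1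
      rw [setLJ_left]
      simp only [AA]
      rw [xeq, m2, m3, aL, aR]
      have := h1 s
      simp only [AA, BB]
      split_ifs with c1 c2 <;> omega
    · by_cases hk2 : k = j.succ
      · subst hk2
        rw [setLJ_right]
        simp only [BB]
        rw [xeq, m2, m3, aL, aR]
        have := h2 s
        simp only [AA, BB]
        split_ifs with c1 c2
        · rfl
        · subst c2; omega
        · omega
      · rw [setLJ_other _ _ _ _ _ _ _ hk1 hk2, aO s k hk1 hk2]
  · simp only [wtE]
    rw [sum_split _ r, sum_split (fun s => a (e (s, j.succ))) r, sumlt r _ le_rfl, aL, AAr]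
    have : ∑ s with r < s, a' (e (s, j.castSucc)) = ∑ s with r < s, (a (e (s, j.succ)) - q j a s)
        + ∑ s with r < s, p j a s := by
      rw [← Finset.sum_add_distrib]
      apply Finset.sum_congr rfl
      intro s hs
      have hs := (Finset.mem_filter.mp hs).2
      rw [aL]
      simp [AA, hs.not_gt, hs.ne']
    rw [this]
    omega
  · simp only [wtE]
    rw [sum_split _ r, sum_split (fun s => a (e (s, j.castSucc))) r, sumlt r _ le_rfl, aR, BBr]
    have : ∑ s with r < s, a' (e (s, j.succ)) = ∑ s with r < s, (a (e (s, j.castSucc)) - p j a s)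
        + ∑ s with r < s, q j a s := by
      rw [← Finset.sum_add_distrib]
      apply Finset.sum_congr rfl
      intro s hs
      have hs := (Finset.mem_filter.mp hs).2
      rw [aR]
      simp [BB, hs.not_gt, hs.ne']
    rw [this]
    omega
  · intro k hk1 hk2
    simp only [wtE]
    exact Finset.sum_congr rfl (fun s _ => aO s k hk1 hk2)

open Classical in
lemma stembridge (e : ι × Fin (N+1) ≃ σ) (S : Finset (σ →₀ ℕ)) (hS : BK e S) :
    altP rhoF * genF e S = ∑ a ∈ S with Yam e a, altP (fun j => wtE e a j + rhoF j) := by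
  rw [altP_mul_genF e S hS, ← Finset.sum_filter_add_sum_filter_not S (Yam e)]
  rw [add_eq_left]
  obtain ⟨T, hT⟩ := toggle_exists e S hS
  have hex : ∀ a ∈ S.filter (fun a => ¬ Yam e a), ∃ rj : ι × Fin N, FV e a rj.1 rj.2 := by
    intro a ha
    obtain ⟨r, j, h⟩ := FV_exists e a (Finset.mem_filter.mp ha).2
    exact ⟨(r, j), h⟩
  rcases (S.filter (fun a => ¬ Yam e a)).eq_empty_or_nonempty with hemp | ⟨a0, ha0⟩
  · rw [hemp]; simp
  have : Nonempty (ι × Fin N) := ⟨(hex a0 ha0).choose⟩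
  choose! c hc using hex
  have hmem : ∀ a ∈ S.filter (fun a => ¬ Yam e a), T a (c a).1 (c a).2 ∈ S.filter (fun a => ¬ Yam e a) := by
    intro a ha
    obtain ⟨h1, h2, -⟩ := hT a (Finset.mem_filter.mp ha).1 _ _ (hc a ha)
    exact Finset.mem_filter.mpr ⟨h1, not_Yam_of_FV e _ h2⟩
  refine Finset.sum_involution (fun a _ => T a (c a).1 (c a).2) ?_ ?_ hmem ?_
  · intro a ha
    obtain ⟨h1, h2, h3, h4, h5, h6⟩ := hT a (Finset.mem_filter.mp ha).1 _ _ (hc a ha)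
    rw [altP_swap (fun j => wtE e a j + rhoF j)
      (fun j => wtE e (T a (c a).1 (c a).2) j + rhoF j) (c a).2]
    · ring
    · simp only [rho_succ]; omega
    · simp only [rho_succ]; omega
    · intro k hk1 hk2; simp only [h6 k hk1 hk2]
  · intro a ha hne heq
    obtain ⟨h1, h2, h3, h4, h5, h6⟩ := hT a (Finset.mem_filter.mp ha).1 _ _ (hc a ha)
    rw [heq] at h4
    apply hne
    apply altP_eq_zero _ (c a).2
    simp only [rho_succ]; omega
  · intro a ha
    obtain ⟨h1, h2, h3, h4, h5, h6⟩ := hT a (Finset.mem_filter.mp ha).1 _ _ (hc a ha)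
    have hu := FV_unique e _ h2 (hc _ (hmem a ha))
    rw [← hu.1, ← hu.2, h3]

end Comb

section Comb2

variable {m N : ℕ}

/-- the index set of variables -/
abbrev Sg (m N : ℕ) := Fin m × Fin (N+1) × Fin (N+1)

/-- rows are `(l,i)`, letters are `j` -/
def eW (m N : ℕ) : (Fin m ×ₗ Fin (N+1)) × Fin (N+1) ≃ Sg m N where
  toFun p := ((ofLex p.1).1, (ofLex p.1).2, p.2)
  invFun v := (toLex (v.1, v.2.1), v.2.2)
  left_inv p := rfl
  right_inv v := rfl

/-- rows are `(l,j)`, letters are `i` -/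
def eV (m N : ℕ) : (Fin m ×ₗ Fin (N+1)) × Fin (N+1) ≃ Sg m N where
  toFun p := ((ofLex p.1).1, p.2, (ofLex p.1).2)
  invFun v := (toLex (v.1, v.2.2), v.2.1)
  left_inv p := rfl
  right_inv v := rfl

@[simp] lemma eW_apply (l : Fin m) (i j : Fin (N+1)) : eW m N (toLex (l, i), j) = (l, i, j) := rfl

@[simp] lemma eV_apply (l : Fin m) (i j : Fin (N+1)) : eV m N (toLex (l, j), i) = (l, i, j) := rfl

@[simp] lemma eW_symm (v : Sg m N) : (eW m N).symm v = (toLex (v.1, v.2.1), v.2.2) := rfl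

@[simp] lemma eV_symm (v : Sg m N) : (eV m N).symm v = (toLex (v.1, v.2.2), v.2.1) := rfl

lemma sum_lex_lt {M : Type*} [AddCommMonoid M] (f : Fin m ×ₗ Fin (N+1) → M) (l : Fin m) (i : Fin (N+1)) :
    ∑ s with s < toLex (l, i), f s
      = ∑ l' with l' < l, ∑ i', f (toLex (l', i')) + ∑ i' with i' < i, f (toLex (l, i')) := by
  rw [Finset.sum_filter, ← Equiv.sum_comp toLex, Fintype.sum_prod_type]
  simp only [Prod.Lex.toLex_lt_toLex]
  rw [← Finset.sum_filter_add_sum_filter_not Finset.univ (fun l' => l' < l)]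
  congr 1
  · apply Finset.sum_congr rfl
    intro l' hl'
    simp [(Finset.mem_filter.mp hl').2]
  · rw [Finset.sum_eq_single l]
    · simp [Finset.sum_filter]
    · intro b hb hbl
      have := (Finset.mem_filter.mp hb).2
      simp [this, hbl]
    · simp

lemma sum_lex_le {M : Type*} [AddCommMonoid M] (f : Fin m ×ₗ Fin (N+1) → M) (l : Fin m) (i : Fin (N+1)) :
    ∑ s with s ≤ toLex (l, i), f s
      = ∑ l' with l' < l, ∑ i', f (toLex (l', i')) + ∑ i' with i' ≤ i, f (toLex (l, i')) := by
  rw [Finset.sum_filter, ← Equiv.sum_comp toLex, Fintype.sum_prod_type]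
  simp only [Prod.Lex.toLex_le_toLex]
  rw [← Finset.sum_filter_add_sum_filter_not Finset.univ (fun l' => l' < l)]
  congr 1
  · apply Finset.sum_congr rfl
    intro l' hl'
    simp [(Finset.mem_filter.mp hl').2]
  · rw [Finset.sum_eq_single l]
    · simp [Finset.sum_filter]
    · intro b hb hbl
      have := (Finset.mem_filter.mp hb).2
      simp [this, hbl]
    · simp

lemma sum_lex_univ {M : Type*} [AddCommMonoid M] (f : Fin m ×ₗ Fin (N+1) → M) :
    ∑ s, f s = ∑ l, ∑ i, f (toLex (l, i)) := by
  rw [← Equiv.sum_comp toLex, Fintype.sum_prod_type]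

/-- degree in each matrix -/
def degL (a : Sg m N →₀ ℕ) (l : Fin m) : ℕ := ∑ i, ∑ j, a (l, i, j)

open Classical in
/-- monomials of total degree `d` whose multidegree satisfies `P` -/
noncomputable def Mon (m N d : ℕ) (P : (Fin m → ℕ) → Prop) : Finset (Sg m N →₀ ℕ) :=
  (Finset.finsuppAntidiag Finset.univ d).filter (fun a => P (degL a))

lemma mem_Mon {d : ℕ} {P : (Fin m → ℕ) → Prop} {a : Sg m N →₀ ℕ} :
    a ∈ Mon m N d P ↔ ∑ l, degL a l = d ∧ P (degL a) := by
  classical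
  rw [Mon, Finset.mem_filter, Finset.mem_finsuppAntidiag]
  have : (Finset.univ : Finset (Sg m N)).sum a = ∑ l, degL a l := by
    simp only [degL, Fintype.sum_prod_type]
  rw [this]; simp

lemma Mon_congr {d : ℕ} {P : (Fin m → ℕ) → Prop} {a b : Sg m N →₀ ℕ} (h : degL a = degL b) :
    a ∈ Mon m N d P ↔ b ∈ Mon m N d P := by
  rw [mem_Mon, mem_Mon, h]

lemma succ_ne_castSucc (j : Fin N) : j.succ ≠ j.castSucc := by
  intro h; have := congrArg Fin.val h; simp at this

/-- sums under a two-place change -/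
lemma sum_two {M : Type*} [AddCommMonoid M] (j : Fin N) (f : Fin (N+1) → M) :
    ∑ k, f k = f j.castSucc + f j.succ + ∑ k with (k ≠ j.castSucc ∧ k ≠ j.succ), f k := by
  have : (Finset.univ : Finset (Fin (N+1))) = insert j.castSucc (insert j.succ
      (Finset.univ.filter (fun k => k ≠ j.castSucc ∧ k ≠ j.succ))) := by
    ext k; simp; tauto
  conv_lhs => rw [this]
  rw [Finset.sum_insert, Finset.sum_insert, add_assoc]
  · simp
  · simp [(succ_ne_castSucc j).symm]

lemma sum_two_eq (j : Fin N) (f g : Fin (N+1) → ℕ)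
    (h : f j.castSucc + f j.succ = g j.castSucc + g j.succ)
    (ho : ∀ k, k ≠ j.castSucc → k ≠ j.succ → f k = g k) : ∑ k, f k = ∑ k, g k := by
  rw [sum_two j f, sum_two j g, h]
  congr 1
  apply Finset.sum_congr rfl
  intro k hk
  have := (Finset.mem_filter.mp hk).2
  exact ho k this.1 this.2

lemma sum_two_lt (j : Fin N) (f g : Fin (N+1) → ℕ)
    (h : f j.castSucc + f j.succ = g j.castSucc + g j.succ)
    (ho : ∀ k, k ≠ j.castSucc → k ≠ j.succ → f k = g k) (c : Fin (N+1)) (hc : c ≠ j.succ) :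
    ∑ k with k < c, f k = ∑ k with k < c, g k := by
  rw [Finset.sum_filter, Finset.sum_filter]
  apply sum_two_eq j
  · have hh : (j.succ < c) ↔ (j.castSucc < c) := by
      constructor
      · intro h; exact lt_trans (Fin.castSucc_lt_succ) h
      · intro h; exact lt_of_le_of_ne (Fin.castSucc_lt_iff_succ_le.mp h) hc.symm
    simp only [hh]
    split_ifs
    · exact h
    · rfl
  · intro k h1 h2; rw [ho k h1 h2]

lemma sum_two_lt' (j : Fin N) (f : Fin (N+1) → ℕ) :
    ∑ k with k < j.succ, f k = ∑ k with k < j.castSucc, f k + f j.castSucc := by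
  rw [← sum_le_split]
  congr 1
  ext k; simp [Fin.lt_def, Fin.le_def, Nat.lt_succ_iff]

end Comb2

section Comb3

variable {m N : ℕ}

/-- prefix sums -/
def preL (a : Sg m N →₀ ℕ) (i : Fin (N+1)) (l : Fin m) (j : Fin (N+1)) : ℕ :=
  ∑ l' with l' < l, ∑ j', a (l', i, j') + ∑ j' with j' < j, a (l, i, j')

lemma YamV_iff (a : Sg m N →₀ ℕ) : Yam (eV m N) a ↔
    ∀ (i : Fin N) (l : Fin m) (j : Fin (N+1)),
      preL a i.succ l j + a (l, i.succ, j) ≤ preL a i.castSucc l j := by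
  have key : ∀ (i : Fin N) (l : Fin m) (j : Fin (N+1)),
      ((∑ s with s ≤ toLex (l, j), a (eV m N (s, i.succ)) ≤
        ∑ s with s < toLex (l, j), a (eV m N (s, i.castSucc))) ↔
      preL a i.succ l j + a (l, i.succ, j) ≤ preL a i.castSucc l j) := by
    intro i l j
    rw [sum_le_split, sum_lex_lt, sum_lex_lt]
    rfl
  constructor
  · intro h i l j
    exact (key i l j).mp (h i (toLex (l, j)))
  · intro h i r
    exact (key i (ofLex r).1 (ofLex r).2).mpr (h i _ _)

lemma degL_setV (j : Fin N) (A B : Fin m ×ₗ Fin (N+1) → ℕ) (a : Sg m N →₀ ℕ)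
    (h : ∀ r, A r + B r = a (eV m N (r, j.castSucc)) + a (eV m N (r, j.succ))) :
    degL (setLJ (eV m N) j A B a) = degL a := by
  funext l
  simp only [degL]
  rw [Finset.sum_comm, Finset.sum_comm (f := fun i j => a (l, i, j))]
  apply Finset.sum_congr rfl
  intro c _
  apply sum_two_eq j
  · have := h (toLex (l, c))
    rw [← setLJ_left (eV m N) j A B a, ← setLJ_right (eV m N) j A B a] at this
    exact this
  · intro k h1 h2
    exact setLJ_other (eV m N) j A B a (toLex (l, c)) k h1 h2

lemma BK_Mon (d : ℕ) (P : (Fin m → ℕ) → Prop) : BK (eV m N) (Mon m N d P) := by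
  intro j
  refine ⟨fun _ _ => 0, fun _ _ => 0, ?_⟩
  intro a ha
  refine ⟨by simp, by simp, by simp, by simp, ?_⟩
  intro A B h _ _
  exact ⟨(Mon_congr (degL_setV j A B a h)).mpr ha, rfl, rfl⟩

open Classical in
/-- lattice monomials of given weight -/
noncomputable def MonV (m N d : ℕ) (P : (Fin m → ℕ) → Prop) (lam : Fin (N+1) → ℕ) :
    Finset (Sg m N →₀ ℕ) :=
  (Mon m N d P).filter (fun a => Yam (eV m N) a ∧ wtE (eV m N) a = lam)

lemma mem_MonV {d : ℕ} {P : (Fin m → ℕ) → Prop} {lam : Fin (N+1) → ℕ} {a : Sg m N →₀ ℕ} :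
    a ∈ MonV m N d P lam ↔ a ∈ Mon m N d P ∧ Yam (eV m N) a ∧ wtE (eV m N) a = lam := by
  classical
  rw [MonV, Finset.mem_filter]

lemma BK_MonV (d : ℕ) (P : (Fin m → ℕ) → Prop) (lam : Fin (N+1) → ℕ) :
    BK (eW m N) (MonV m N d P lam) := by
  intro j
  let ex : (Sg m N →₀ ℕ) → Fin m → Fin N → ℕ := fun a l i =>
    preL a i.succ l j.castSucc + a (l, i.succ, j.castSucc) + a (l, i.succ, j.succ)
      - preL a i.castSucc l j.castSucc
  let p : (Sg m N →₀ ℕ) → Fin m ×ₗ Fin (N+1) → ℕ := fun a s =>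
    Fin.lastCases (motive := fun _ => ℕ) 0 (fun i => ex a (ofLex s).1 i) (ofLex s).2
  let q : (Sg m N →₀ ℕ) → Fin m ×ₗ Fin (N+1) → ℕ := fun a s =>
    Fin.cases (motive := fun _ => ℕ) 0 (fun i => ex a (ofLex s).1 i) (ofLex s).2
  have pc : ∀ a l (i : Fin N), p a (toLex (l, i.castSucc)) = ex a l i := by
    intro a l i; simp [p]
  have pl : ∀ a l, p a (toLex (l, Fin.last N)) = 0 := by
    intro a l; simp [p]
  have qs : ∀ a l (i : Fin N), q a (toLex (l, i.succ)) = ex a l i := by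
    intro a l i; simp [q]
  have q0 : ∀ a l, q a (toLex (l, 0)) = 0 := by
    intro a l; simp [q]
  have pq : ∀ a l, ∑ i, p a (toLex (l, i)) = ∑ i, q a (toLex (l, i)) := by
    intro a l
    rw [Fin.sum_univ_castSucc, Fin.sum_univ_succ, pl, q0]
    simp only [pc, qs]; ring
  have pq2 : ∀ a l (i : Fin (N+1)), ∑ k with k < i, p a (toLex (l, k)) =
      ∑ k with k ≤ i, q a (toLex (l, k)) := by
    intro a l i
    rw [Finset.sum_filter, Finset.sum_filter, Fin.sum_univ_castSucc, Fin.sum_univ_succ, pl, q0]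
    simp only [pc, qs, Fin.castSucc_lt_iff_succ_le]; simp
  refine ⟨p, q, ?_⟩
  intro a ha
  rw [mem_MonV] at ha
  obtain ⟨haM, haY, haw⟩ := ha
  rw [YamV_iff] at haY
  have hlast : ∀ (i : Fin (N+1)) (l : Fin m) (b : Sg m N →₀ ℕ),
      preL b i l j.succ = preL b i l j.castSucc + b (l, i, j.castSucc) := by
    intro i l b
    simp only [preL]
    rw [sum_two_lt' j (fun j' => b (l, i, j'))]; ring
  refine ⟨?_, ?_, ?_, ?_, ?_⟩
  · intro r
    obtain ⟨l, i, rfl⟩ : ∃ l i, r = toLex (l, i) := ⟨(ofLex r).1, (ofLex r).2, rfl⟩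
    show p a _ ≤ a (l, i, j.castSucc)
    refine Fin.lastCases ?_ (fun i => ?_) i
    · rw [pl]; omega
    · rw [pc]
      have := haY i l j.succ
      rw [hlast, hlast] at this
      simp only [ex]; omega
  · intro r
    obtain ⟨l, i, rfl⟩ : ∃ l i, r = toLex (l, i) := ⟨(ofLex r).1, (ofLex r).2, rfl⟩
    show q a _ ≤ a (l, i, j.succ)
    refine Fin.cases ?_ (fun i => ?_) i
    · rw [q0]; omega
    · rw [qs]
      have := haY i l j.castSucc
      simp only [ex]; omega
  · intro r
    obtain ⟨l, i, rfl⟩ : ∃ l i, r = toLex (l, i) := ⟨(ofLex r).1, (ofLex r).2, rfl⟩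
    rw [sum_lex_lt, sum_lex_le, pq2]
    simp only [pq]
  · rw [sum_lex_univ, sum_lex_univ]
    simp only [pq]
  · intro A B hAB hA hB
    set b := setLJ (eW m N) j A B a with hb
    have bL : ∀ l i, b (l, i, j.castSucc) = A (toLex (l, i)) := fun l i =>
      setLJ_left (eW m N) j A B a (toLex (l, i))
    have bR : ∀ l i, b (l, i, j.succ) = B (toLex (l, i)) := fun l i =>
      setLJ_right (eW m N) j A B a (toLex (l, i))
    have bO : ∀ l i k, k ≠ j.castSucc → k ≠ j.succ → b (l, i, k) = a (l, i, k) := fun l i k h1 h2 =>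
      setLJ_other (eW m N) j A B a (toLex (l, i)) k h1 h2
    have hab : ∀ l i, b (l, i, j.castSucc) + b (l, i, j.succ)
        = a (l, i, j.castSucc) + a (l, i, j.succ) := by
      intro l i; rw [bL, bR]; exact hAB (toLex (l, i))
    have hrow : ∀ l i, ∑ k, b (l, i, k) = ∑ k, a (l, i, k) := fun l i =>
      sum_two_eq j _ _ (hab l i) (bO l i)
    have hpre : ∀ i l c, c ≠ j.succ → preL b i l c = preL a i l c := by
      intro i l c hc
      simp only [preL, hrow]
      rw [sum_two_lt j _ _ (hab l i) (bO l i) c hc]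
    have hpj := fun i l => hpre i l j.castSucc (succ_ne_castSucc j).symm
    have hdeg : degL b = degL a := by
      funext l; simp only [degL, hrow]
    have hex : ex b = ex a := by
      funext l i
      simp only [ex, hpj]
      have := hab l i.succ
      omega
    refine ⟨?_, ?_, ?_⟩
    · rw [mem_MonV]
      refine ⟨(Mon_congr hdeg).mpr haM, ?_, ?_⟩
      · rw [YamV_iff]
        intro i l c
        have pA := hA (toLex (l, i.castSucc))
        rw [pc] at pA
        have qB := hB (toLex (l, i.succ))
        rw [qs] at qB
        have s1 := hab l i.succ
        have s2 := hab l i.castSucc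
        by_cases h1 : c = j.castSucc
        · subst h1
          have := haY i l j.castSucc
          rw [hpj, hpj]
          rw [bL, bR] at s1
          rw [bL]
          simp only [ex] at qB; omega
        · by_cases h2 : c = j.succ
          · subst h2
            have := haY i l j.succ
            rw [hlast, hlast] at *
            rw [hpj, hpj]
            rw [bL l i.castSucc] 
            simp only [ex] at pA; omega
          · rw [hpre _ _ _ h2, hpre _ _ _ h2, bO _ _ _ h1 h2]
            exact haY i l c
      · rw [← haw]
        funext i
        simp only [wtE]
        rw [sum_lex_univ, sum_lex_univ]
        exact Finset.sum_congr rfl (fun l _ => hrow l i)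
    · funext s; simp only [p, hex]
    · funext s; simp only [q, hex]

/-- dominant weights -/
def Dom (mu : Fin (N+1) → ℕ) : Prop := ∀ j : Fin N, mu j.succ ≤ mu j.castSucc

lemma Yam_dom {σ ι : Type} [Fintype σ] [DecidableEq σ] [Fintype ι] [LinearOrder ι]
    (e : ι × Fin (N+1) ≃ σ) (a : σ →₀ ℕ) (h : Yam e a) : Dom (wtE e a) := by
  intro j
  rcases isEmpty_or_nonempty ι with hi | hi
  · simp [wtE]
  · obtain ⟨r, hr⟩ := Finite.exists_max (id : ι → ι)
    have := h j r
    have h1 : (Finset.univ.filter (fun s => s ≤ r)) = Finset.univ := by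
      ext s; simpa using hr s
    rw [h1] at this
    refine this.trans ?_
    exact Finset.sum_le_sum_of_subset (Finset.filter_subset _ _)

lemma Yam_tri (e : (Fin 1 ×ₗ Fin (N+1)) × Fin (N+1) ≃ Sg 1 N) (a : Sg 1 N →₀ ℕ) (h : Yam e a)
    (k i : Fin (N+1)) (hik : i < k) : a (e (toLex (0, i), k)) = 0 := by
  have h0 : ∀ k : Fin (N+1), ∑ i with i < k, a (e (toLex (0, i), k)) = 0 := by
    intro k
    induction k using Fin.induction with
    | zero => simp
    | succ k ih =>
      have h1 := h k (toLex (0, k.castSucc))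
      rw [sum_le_split, sum_lex_lt, sum_lex_lt] at h1
      simp only [Fin.isValue, Fin.not_lt_zero, Finset.filter_false, Finset.sum_empty, zero_add] at h1
      rw [ih] at h1
      rw [sum_two_lt' k (fun i => a (e (toLex (0, i), k.succ)))]
      omega
  have := h0 k
  rw [Finset.sum_eq_zero_iff] at this
  exact this i (by simpa using hik)

lemma Yam_diag (e : (Fin 1 ×ₗ Fin (N+1)) × Fin (N+1) ≃ Sg 1 N) (a : Sg 1 N →₀ ℕ)
    (mu : Fin (N+1) → ℕ) (hmu : Dom mu)
    (ha : ∀ i k, a (e (toLex (0, i), k)) = if i = k then mu k else 0) : Yam e a := by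
  intro j r
  obtain ⟨l, i, rfl⟩ : ∃ l i, r = toLex (l, i) := ⟨(ofLex r).1, (ofLex r).2, rfl⟩
  obtain rfl : l = 0 := Subsingleton.elim _ _
  rw [sum_lex_le, sum_lex_lt]
  simp only [Fin.isValue, Fin.not_lt_zero, Finset.filter_false, Finset.sum_empty, zero_add, ha]
  simp only [Finset.sum_ite_eq', Finset.mem_filter, Finset.mem_univ, true_and,
    Fin.castSucc_lt_iff_succ_le]
  split_ifs
  · exact hmu j
  · exact le_rfl

/-- semistandard tableaux of shape `mu` -/
noncomputable def tabS (mu : Fin (N+1) → ℕ) : Finset (Sg 1 N →₀ ℕ) :=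
  MonV 1 N (∑ i, mu i) (fun _ => True) mu

/-- number of semistandard tableaux -/
noncomputable def cK (mu : Fin (N+1) → ℕ) : ℕ := (tabS mu).card

/-- diagonal monomial -/
noncomputable def diagM (mu : Fin (N+1) → ℕ) : Sg 1 N →₀ ℕ :=
  Finsupp.equivFunOnFinite.symm (fun v => if v.2.1 = v.2.2 then mu v.2.2 else 0)

lemma wtE_sum {σ ι : Type} [Fintype σ] [Fintype ι] 
    (e : ι × Fin (N+1) ≃ σ) (a : σ →₀ ℕ) : ∑ j, wtE e a j = ∑ v, a v := by
  simp only [wtE]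
  rw [Finset.sum_comm, ← Equiv.sum_comp e, Fintype.sum_prod_type]

lemma mem_tabS (mu : Fin (N+1) → ℕ) (a : Sg 1 N →₀ ℕ) :
    a ∈ tabS mu ↔ Yam (eV 1 N) a ∧ wtE (eV 1 N) a = mu := by
  rw [tabS, mem_MonV, mem_Mon]
  constructor
  · exact fun h => h.2
  · intro h
    refine ⟨⟨?_, trivial⟩, h⟩
    rw [← h.2, wtE_sum]
    simp only [degL, Fintype.sum_prod_type]

lemma diagM_mem (mu : Fin (N+1) → ℕ) (h : Dom mu) : diagM mu ∈ tabS mu := by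
  rw [mem_tabS]
  refine ⟨Yam_diag _ _ mu h ?_, ?_⟩
  · intro i k
    simp only [diagM, eV_apply, Finsupp.equivFunOnFinite_symm_apply_apply]
    by_cases hh : i = k
    · subst hh; simp
    · rw [if_neg hh, if_neg (Ne.symm hh)]
  · funext k
    rw [wtE, sum_lex_univ]
    simp [diagM]

open Classical in
lemma tabS_W (mu : Fin (N+1) → ℕ) (h : Dom mu) :
    (tabS mu).filter (Yam (eW 1 N)) = {diagM mu} := by
  ext a
  rw [Finset.mem_filter, Finset.mem_singleton]
  constructor
  · rintro ⟨h1, h2⟩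
    rw [mem_tabS] at h1
    ext ⟨l, i, j⟩
    obtain rfl : l = 0 := Subsingleton.elim _ _
    have t1 : ∀ i j, j < i → a (0, i, j) = 0 := fun i j hh => Yam_tri (eV 1 N) a h1.1 i j hh
    have t2 : ∀ i j, i < j → a (0, i, j) = 0 := fun i j hh => Yam_tri (eW 1 N) a h2 j i hh
    simp only [diagM, Finsupp.equivFunOnFinite_symm_apply_apply]
    rcases lt_trichotomy i j with hh | hh | hh
    · rw [if_neg hh.ne, t2 _ _ hh]
    · subst hh
      rw [if_pos rfl, ← h1.2, wtE, sum_lex_univ]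
      simp only [Finset.univ_unique, Finset.sum_singleton]
      rw [Finset.sum_eq_single i]
      · rfl
      · intro b _ hb
        rcases lt_or_gt_of_ne hb with hb | hb
        · exact t1 _ _ hb
        · exact t2 _ _ hb
      · simp
    · rw [if_neg hh.ne', t1 _ _ hh]
  · rintro rfl
    refine ⟨diagM_mem mu h, Yam_diag _ _ mu h ?_⟩
    intro i k
    simp [diagM]

lemma wtW_diagM (mu : Fin (N+1) → ℕ) : wtE (eW 1 N) (diagM mu) = mu := by
  funext k
  rw [wtE, sum_lex_univ]
  simp [diagM]

lemma altP_tabS (mu : Fin (N+1) → ℕ) (h : Dom mu) :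
    altP rhoF * genF (eW 1 N) (tabS mu) = altP (fun j => mu j + rhoF j) := by
  classical
  rw [stembridge _ (tabS mu) (BK_MonV _ _ _)]
  rw [tabS_W mu h, Finset.sum_singleton, wtW_diagM]

lemma cK_pos (mu : Fin (N+1) → ℕ) (h : Dom mu) : 0 < cK mu :=
  Finset.card_pos.mpr ⟨_, diagM_mem mu h⟩

lemma eval_genF {σ ι : Type} [Fintype σ] [DecidableEq σ] [Fintype ι] [LinearOrder ι]
    (e : ι × Fin (N+1) ≃ σ) (S : Finset (σ →₀ ℕ)) :
    MvPolynomial.eval (fun _ => (1 : ℤ)) (genF e S) = S.card := by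
  simp [genF, xw]

open Classical in
lemma card_BK {σ ι : Type} [Fintype σ] [DecidableEq σ] [Fintype ι] [LinearOrder ι]
    (e : ι × Fin (N+1) ≃ σ) (S : Finset (σ →₀ ℕ)) (hS : BK e S) :
    S.card = ∑ a ∈ S with Yam e a, cK (wtE e a) := by
  have h1 : genF e S = ∑ a ∈ S with Yam e a, genF (eW 1 N) (tabS (wtE e a)) := by
    apply mul_left_cancel₀ (altP_rho_ne (N := N))
    rw [stembridge e S hS, Finset.mul_sum]
    apply Finset.sum_congr rfl
    intro a ha
    rw [altP_tabS _ (Yam_dom e a (Finset.mem_filter.mp ha).2)]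
  have h2 := congrArg (MvPolynomial.eval (fun _ => (1 : ℤ))) h1
  rw [map_sum, eval_genF] at h2
  simp only [eval_genF] at h2
  exact_mod_cast h2

end Comb3

section Lead

variable {σ Λ : Type} [Fintype σ] [DecidableEq σ] [LinearOrder Λ] [Finite Λ] (ix : σ ≃ Λ)

/-- comparison key of a monomial -/
def key (ix : σ ≃ Λ) (a : σ →₀ ℕ) : Lex (Λ → ℕ) := toLex (fun k => a (ix.symm k))

lemma key_inj {a b : σ →₀ ℕ} (h : key ix a = key ix b) : a = b := by
  ext v
  have := congrFun (toLex.injective h) (ix v)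
  simpa using this

lemma key_lt {a b : σ →₀ ℕ} (v : σ) (h1 : ∀ w, ix w < ix v → a w = b w) (h2 : a v < b v) :
    key ix a < key ix b := by
  refine ⟨ix v, ?_, ?_⟩
  · intro k hk
    exact h1 (ix.symm k) (by simpa using hk)
  · simpa [key] using h2

variable {K : Type} [Field K]

/-- `b` is the leading exponent of `f` -/
def IsLead (f : MvPolynomial σ K) (b : σ →₀ ℕ) : Prop :=
  coeff b f ≠ 0 ∧ ∀ c, coeff c f ≠ 0 → key ix c ≤ key ix b

lemma exists_lead (f : MvPolynomial σ K) (hf : f ≠ 0) : ∃ b, IsLead ix f b := by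
  obtain ⟨b, hb, h⟩ := Finset.exists_max_image f.support (key ix) (by
    rwa [Finset.nonempty_iff_ne_empty, Ne, MvPolynomial.support_eq_empty])
  refine ⟨b, by simpa using hb, ?_⟩
  intro c hc
  exact h c (by simpa using hc)

/-- the set of leading exponents -/
def leads (M : Submodule K (MvPolynomial σ K)) : Set (σ →₀ ℕ) := {b | ∃ f ∈ M, IsLead ix f b}

/-- all supports lie in `T` -/
def SuppIn (M : Submodule K (MvPolynomial σ K)) (T : Finset (σ →₀ ℕ)) : Prop :=
  ∀ f ∈ M, ∀ c, coeff c f ≠ 0 → c ∈ T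

lemma SuppIn.mono {M M' : Submodule K (MvPolynomial σ K)} {T : Finset (σ →₀ ℕ)} (h : SuppIn M T)
    (hM : M' ≤ M) : SuppIn M' T := fun f hf => h f (hM hf)

lemma SuppIn.finite {M : Submodule K (MvPolynomial σ K)} {T : Finset (σ →₀ ℕ)} (h : SuppIn M T) :
    Module.Finite K M := by
  let φ : M →ₗ[K] (T → K) := LinearMap.pi (fun c => (lcoeff K c.1).comp M.subtype)
  apply Module.Finite.of_injective φ
  rw [← LinearMap.ker_eq_bot, LinearMap.ker_eq_bot']
  intro f hf
  ext c
  by_contra hc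
  have hcT := h f f.2 c (by simpa using hc)
  have := congrFun hf ⟨c, hcT⟩
  exact hc (by simpa [φ] using this)

lemma leads_subset {M : Submodule K (MvPolynomial σ K)} {T : Finset (σ →₀ ℕ)} (h : SuppIn M T) :
    leads ix M ⊆ T := by
  rintro b ⟨f, hf, hb⟩
  exact h f hf b hb.1

lemma finrank_leads {M : Submodule K (MvPolynomial σ K)} {T : Finset (σ →₀ ℕ)} (h : SuppIn M T)
    (S : Finset (σ →₀ ℕ)) (hS : ∀ b, b ∈ S ↔ b ∈ leads ix M) : Module.finrank K M = S.card := by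
  classical
  have := h.finite
  apply le_antisymm
  · let φ : M →ₗ[K] (S → K) := LinearMap.pi (fun c => (lcoeff K c.1).comp M.subtype)
    have hφ : Function.Injective φ := by
      rw [← LinearMap.ker_eq_bot, LinearMap.ker_eq_bot']
      intro f hf
      by_contra hne
      obtain ⟨b, hb⟩ := exists_lead ix f.1 (by simpa using hne)
      have hbS := (hS b).mpr ⟨f.1, f.2, hb⟩
      have := congrFun hf ⟨b, hbS⟩
      exact hb.1 (by simpa [φ] using this)
    simpa using LinearMap.finrank_le_finrank_of_injective hφ
  · have hex : ∀ b : S, ∃ f : M, IsLead ix f.1 b.1 := by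
      intro b
      obtain ⟨f, hf, hb⟩ := (hS b).mp b.2
      exact ⟨⟨f, hf⟩, hb⟩
    choose F hF using hex
    have hli : LinearIndependent K F := by
      rw [Fintype.linearIndependent_iff]
      by_contra! hcon
      obtain ⟨g, hg, i0, hi0⟩ := hcon
      obtain ⟨b, hb, hmax⟩ := Finset.exists_max_image (Finset.univ.filter (fun i => g i ≠ 0))
        (fun i : S => key ix i.1) ⟨i0, by simpa using hi0⟩
      have h1 := congrArg (fun f : M => coeff b.1 f.1) hg
      simp only [Submodule.coe_sum, Submodule.coe_smul, coeff_sum, coeff_smul, Submodule.coe_zero,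
        coeff_zero, smul_eq_mul] at h1
      rw [Finset.sum_eq_single b] at h1
      · rcases mul_eq_zero.mp h1 with h2 | h2
        · exact (Finset.mem_filter.mp hb).2 h2
        · exact (hF b).1 h2
      · intro c _ hcb
        by_cases hc : g c = 0
        · rw [hc, zero_mul]
        · have h2 := hmax c (by simpa using hc)
          by_contra hne
          have h3 := (hF c).2 b.1 (right_ne_zero_of_mul hne)
          exact hcb (Subtype.ext (key_inj ix (le_antisymm h2 h3)))
      · simp
    simpa using hli.fintype_card_le_finrank

end Lead

section Expand

variable {σ τ : Type} [Fintype σ] [DecidableEq σ]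

/-- leading expansion -/
def LTm {B : Type*} [CommRing B] (R : (τ →₀ ℕ) → (τ →₀ ℕ) → Prop) (F : MvPolynomial τ B)
    (m0 : τ →₀ ℕ) (c0 : B) : Prop :=
  ∀ m, coeff m (F - monomial m0 c0) ≠ 0 → R m m0

variable {B : Type*} [CommRing B] {R : (τ →₀ ℕ) → (τ →₀ ℕ) → Prop}

lemma coeff_mul_ne {F G : MvPolynomial τ B} {m : τ →₀ ℕ} (h : coeff m (F * G) ≠ 0) :
    ∃ k l, k + l = m ∧ coeff k F ≠ 0 ∧ coeff l G ≠ 0 := by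
  classical
  rw [coeff_mul] at h
  obtain ⟨x, hx, hne⟩ := Finset.exists_ne_zero_of_sum_ne_zero h
  exact ⟨x.1, x.2, by simpa using hx, left_ne_zero_of_mul hne, right_ne_zero_of_mul hne⟩

lemma coeff_add_ne {F G : MvPolynomial τ B} {m : τ →₀ ℕ} (h : coeff m (F + G) ≠ 0) :
    coeff m F ≠ 0 ∨ coeff m G ≠ 0 := by
  by_contra! hc
  rw [coeff_add, hc.1, hc.2, add_zero] at h
  exact h rfl

lemma coeff_monomial_ne {m0 m : τ →₀ ℕ} {c : B} (h : coeff m (monomial m0 c) ≠ 0) : m = m0 := by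
  classical
  rw [coeff_monomial] at h
  by_contra hc
  rw [if_neg (Ne.symm hc)] at h
  exact h rfl

lemma LTm_mul (h1 : ∀ m m' k, R m m' → R (m + k) (m' + k))
    (h2 : ∀ m m' k k', R m m' → R k k' → R (m + k) (m' + k')) {F G : MvPolynomial τ B}
    {m0 n0 : τ →₀ ℕ} {c d : B} (hF : LTm R F m0 c) (hG : LTm R G n0 d) :
    LTm R (F * G) (m0 + n0) (c * d) := by
  intro m hm
  have : F * G - monomial (m0 + n0) (c * d) = (F - monomial m0 c) * (G - monomial n0 d)
      + ((F - monomial m0 c) * monomial n0 d + (G - monomial n0 d) * monomial m0 c) := by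
    have : (monomial (m0 + n0) (c * d) : MvPolynomial τ B) = monomial m0 c * monomial n0 d := by
      rw [monomial_mul]
    rw [this]; ring
  rw [this] at hm
  rcases coeff_add_ne hm with hm | hm
  · obtain ⟨k, l, rfl, hk, hl⟩ := coeff_mul_ne hm
    exact h2 _ _ _ _ (hF k hk) (hG l hl)
  · rcases coeff_add_ne hm with hm | hm
    · obtain ⟨k, l, rfl, hk, hl⟩ := coeff_mul_ne hm
      rw [coeff_monomial_ne hl]
      exact h1 _ _ _ (hF k hk)
    · obtain ⟨k, l, rfl, hk, hl⟩ := coeff_mul_ne hm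
      rw [coeff_monomial_ne hl, add_comm m0]
      exact h1 _ _ _ (hG k hk)

lemma LTm_one : LTm R (1 : MvPolynomial τ B) 0 1 := by
  intro m hm
  exfalso; apply hm
  simp

lemma LTm_pow (h1 : ∀ m m' k, R m m' → R (m + k) (m' + k))
    (h2 : ∀ m m' k k', R m m' → R k k' → R (m + k) (m' + k')) {F : MvPolynomial τ B}
    {m0 : τ →₀ ℕ} {c : B} (hF : LTm R F m0 c) (n : ℕ) : LTm R (F ^ n) (n • m0) (c ^ n) := by
  induction n with
  | zero => simpa using LTm_one
  | succ n ih =>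
    rw [pow_succ, pow_succ, succ_nsmul]
    exact LTm_mul h1 h2 ih hF

lemma LTm_prod (h1 : ∀ m m' k, R m m' → R (m + k) (m' + k))
    (h2 : ∀ m m' k k', R m m' → R k k' → R (m + k) (m' + k')) {ι : Type} (s : Finset ι)
    (F : ι → MvPolynomial τ B) (m0 : ι → τ →₀ ℕ) (c : ι → B) (hF : ∀ i, LTm R (F i) (m0 i) (c i)) :
    LTm R (∏ i ∈ s, F i) (∑ i ∈ s, m0 i) (∏ i ∈ s, c i) := by
  classical
  induction s using Finset.induction_on with
  | empty => simpa using LTm_one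
  | insert i s hi ih =>
    rw [Finset.prod_insert hi, Finset.prod_insert hi, Finset.sum_insert hi]
    exact LTm_mul h1 h2 (hF i) ih

lemma LTm_hom {K : Type*} [CommRing K] (φ : MvPolynomial σ K →+* MvPolynomial τ B)
    (h1 : ∀ m m' k, R m m' → R (m + k) (m' + k))
    (h2 : ∀ m m' k k', R m m' → R k k' → R (m + k) (m' + k'))
    (h : σ → τ →₀ ℕ) (c : σ → B) (hF : ∀ v, LTm R (φ (X v)) (h v) (c v)) (b : σ →₀ ℕ) :
    LTm R (φ (monomial b 1)) (∑ v, b v • h v) (∏ v, c v ^ b v) := by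
  have : (monomial b (1:K) : MvPolynomial σ K) = ∏ v, X v ^ b v := by
    rw [monomial_eq]; simp [Finsupp.prod_fintype]
  rw [this, map_prod]
  simp only [map_pow]
  exact LTm_prod h1 h2 _ _ _ _ (fun v => LTm_pow h1 h2 (hF v) _)

end Expand

section Act

variable {σ ι : Type} [Fintype σ] [DecidableEq σ] [Fintype ι] [LinearOrder ι] {N : ℕ}
variable (e : ι × Fin (N+1) ≃ σ)

/-- action of matrices on polynomials by letter substitution -/
noncomputable def act {A : Type} [CommRing A] (g : Matrix (Fin (N+1)) (Fin (N+1)) A) :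
    MvPolynomial σ A →ₐ[A] MvPolynomial σ A :=
  aeval (fun v => ∑ j', C (g j' (e.symm v).2) * X (e ((e.symm v).1, j')))

lemma act_X {A : Type} [CommRing A] (g : Matrix (Fin (N+1)) (Fin (N+1)) A) (s : ι) (j : Fin (N+1)) :
    act e g (X (e (s, j))) = ∑ j', C (g j' j) * X (e (s, j')) := by
  simp [act]

lemma act_act {A : Type} [CommRing A] (g h : Matrix (Fin (N+1)) (Fin (N+1)) A)
    (f : MvPolynomial σ A) : act e g (act e h f) = act e (g * h) f := by
  have : (act e g).comp (act e h) = act e (g * h) := by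
    apply algHom_ext
    intro v
    obtain ⟨⟨s, j⟩, rfl⟩ := e.surjective v
    simp only [AlgHom.comp_apply, act_X, map_sum, map_mul, algHom_C, algebraMap_eq,
      Matrix.mul_apply]
    simp only [Finset.mul_sum, Finset.sum_mul]
    rw [Finset.sum_comm]
    refine Finset.sum_congr rfl fun k _ => Finset.sum_congr rfl fun l _ => ?_
    ring
  exact DFunLike.congr_fun this f

lemma act_one {A : Type} [CommRing A] (f : MvPolynomial σ A) : act e (1 : Matrix _ _ A) f = f := by
  have : act e (1 : Matrix _ _ A) = AlgHom.id A _ := by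
    apply algHom_ext
    intro v
    obtain ⟨⟨s, j⟩, rfl⟩ := e.surjective v
    rw [act_X]
    simp [Matrix.one_apply]
  rw [this]; rfl

lemma act_map {A B : Type} [CommRing A] [CommRing B] (ψ : A →+* B)
    (g : Matrix (Fin (N+1)) (Fin (N+1)) A) (f : MvPolynomial σ A) :
    MvPolynomial.map ψ (act e g f) = act e (g.map ψ) (MvPolynomial.map ψ f) := by
  have : (MvPolynomial.map ψ).comp (act e g).toRingHom
      = (act e (g.map ψ)).toRingHom.comp (MvPolynomial.map ψ) := by
    apply ringHom_ext
    · intro a; simp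
    · intro v
      obtain ⟨⟨s, j⟩, rfl⟩ := e.surjective v
      simp [act_X]
  exact DFunLike.congr_fun this f

/-- polynomials all of whose monomials have weight `mu` -/
noncomputable def wtSub (A : Type) [CommRing A] (mu : Fin (N+1) → ℕ) : Submodule A (MvPolynomial σ A) where
  carrier := {f | ∀ b, coeff b f ≠ 0 → wtE e b = mu}
  add_mem' := by
    intro f g hf hg b hb
    rcases coeff_add_ne hb with h | h
    · exact hf b h
    · exact hg b h
  zero_mem' := by intro b hb; simp at hb
  smul_mem' := by
    intro c f hf b hb
    rw [coeff_smul] at hb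
    exact hf b (right_ne_zero_of_mul hb)

lemma mem_wtSub {A : Type} [CommRing A] {mu : Fin (N+1) → ℕ} {f : MvPolynomial σ A} :
    f ∈ wtSub e A mu ↔ ∀ b, coeff b f ≠ 0 → wtE e b = mu := Iff.rfl

/-- invariance under upper unitriangular transvections -/
noncomputable def UInv (K : Type) [Field K] : Submodule K (MvPolynomial σ K) where
  carrier := {f | ∀ i j : Fin (N+1), i < j → ∀ t : K, act e (transvection i j t) f = f}
  add_mem' := by
    intro f g hf hg i j h t
    rw [map_add, hf i j h t, hg i j h t]
  zero_mem' := by intro i j h t; simp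
  smul_mem' := by
    intro c f hf i j h t
    rw [map_smul, hf i j h t]

lemma mem_UInv {K : Type} [Field K] {f : MvPolynomial σ K} : f ∈ UInv e K ↔
    ∀ i j : Fin (N+1), i < j → ∀ t : K, act e (transvection i j t) f = f := Iff.rfl

/-- highest weight vectors -/
noncomputable def hw {K : Type} [Field K] (M : Submodule K (MvPolynomial σ K)) (mu : Fin (N+1) → ℕ) :
    Submodule K (MvPolynomial σ K) := M ⊓ wtSub e K mu ⊓ UInv e K

lemma act_transvection_X {A : Type} [CommRing A] (i j : Fin (N+1)) (t : A) (s : ι) (k : Fin (N+1)) :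
    act e (transvection i j t) (X (e (s, k)))
      = X (e (s, k)) + if k = j then C t * X (e (s, i)) else 0 := by
  rw [act_X]
  simp only [transvection, Matrix.add_apply, map_add, add_mul, Finset.sum_add_distrib,
    Matrix.one_apply, Matrix.single_apply]
  congr 1
  · simp
  · by_cases h : k = j
    · subst h; simp [apply_ite C, ite_mul]
    · simp [h, Ne.symm h]

lemma wtE_add (a b : σ →₀ ℕ) : wtE e (a + b) = wtE e a + wtE e b := by
  funext j; simp [wtE, Finset.sum_add_distrib]

lemma wtE_single (s : ι) (k : Fin (N+1)) : wtE e (Finsupp.single (e (s, k)) 1) = Pi.single k 1 := by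
  classical
  funext j
  simp only [wtE, Finsupp.single_apply, EmbeddingLike.apply_eq_iff_eq, Prod.mk.injEq, Pi.single_apply]
  by_cases h : j = k
  · subst h; simp
  · simp [h, Ne.symm h]

lemma LTm_transvection {A : Type} [CommRing A] (i j : Fin (N+1)) (t : A) (b : σ →₀ ℕ) :
    LTm (fun m m' => ∃ k : ℕ, 0 < k ∧ wtE e m + k • Pi.single j 1 = wtE e m' + k • Pi.single i 1)
      (act e (transvection i j t) (monomial b 1)) b 1 := by
  have h1 := LTm_hom (R := fun m m' => ∃ k : ℕ, 0 < k ∧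
      wtE e m + k • Pi.single j 1 = wtE e m' + k • Pi.single i 1)
    (act e (transvection i j t)).toRingHom ?_ ?_ (fun v => Finsupp.single v 1)
    (fun v => 1) ?_ b
  · have h2 : ∑ v, b v • (Finsupp.single v 1) = b := by
      ext w; simp [Finsupp.finsetSum_apply, Finsupp.single_apply]
    rw [h2] at h1
    simpa using h1
  · rintro m m' k ⟨n, hn, h⟩
    refine ⟨n, hn, ?_⟩
    rw [wtE_add, wtE_add, add_right_comm, h, add_right_comm]
  · rintro m m' k k' ⟨n, hn, h⟩ ⟨n', hn', h'⟩
    refine ⟨n + n', by omega, ?_⟩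
    rw [wtE_add, wtE_add, add_nsmul, add_nsmul, add_add_add_comm, h, h', add_add_add_comm]
  · intro v m hm
    obtain ⟨⟨s, k⟩, rfl⟩ := e.surjective v
    have h3 : (act e (transvection i j t)).toRingHom (X (e (s, k))) - monomial (Finsupp.single (e (s, k)) 1) 1
        = if k = j then C t * X (e (s, i)) else 0 := by
      have := act_transvection_X e i j t s k
      rw [sub_eq_iff_eq_add']
      exact this
    rw [h3] at hm
    split_ifs at hm with hk
    · subst hk
      rw [C_mul_X_eq_monomial] at hm
      rw [coeff_monomial_ne hm]
      refine ⟨1, one_pos, ?_⟩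
      rw [wtE_single, wtE_single]
      simp [add_comm]
    · simp at hm

lemma act_diagonal_monomial {A : Type} [CommRing A] (d : Fin (N+1) → A) (b : σ →₀ ℕ) (c : A) :
    act e (diagonal d) (monomial b c) = monomial b ((∏ j, d j ^ wtE e b j) * c) := by
  have hX : ∀ v, act e (diagonal d) (X v) = C (d (e.symm v).2) * X v := by
    intro v
    obtain ⟨⟨s, k⟩, rfl⟩ := e.surjective v
    rw [act_X]
    simp [Matrix.diagonal_apply, apply_ite C, ite_mul]
  rw [monomial_eq, map_mul, Finsupp.prod_fintype _ _ (by simp), map_prod]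
  simp only [map_pow, hX, mul_pow, Finset.prod_mul_distrib, algHom_C, algebraMap_eq]
  have : ∏ v, (C (d (e.symm v).2) : MvPolynomial σ A) ^ b v = C (∏ j, d j ^ wtE e b j) := by
    rw [map_prod, ← Equiv.prod_comp e, Fintype.prod_prod_type, Finset.prod_comm]
    apply Finset.prod_congr rfl
    intro j _
    simp only [Equiv.symm_apply_apply]
    rw [Finset.prod_pow_eq_pow_sum, C_pow]; rfl
  rw [this, monomial_eq, Finsupp.prod_fintype _ _ (by simp), C_mul]
  ring

lemma coeff_act_diagonal {A : Type} [CommRing A] (d : Fin (N+1) → A) (f : MvPolynomial σ A)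
    (b : σ →₀ ℕ) : coeff b (act e (diagonal d) f) = (∏ j, d j ^ wtE e b j) * coeff b f := by
  classical
  induction f using MvPolynomial.induction_on' with
  | monomial u a =>
    rw [act_diagonal_monomial, coeff_monomial, coeff_monomial]
    split_ifs with h
    · rw [h]
    · simp
  | add p q hp hq => rw [map_add, coeff_add, hp, hq, coeff_add, mul_add]

end Act

section F2

lemma coeff_LTm_sum {σ τ : Type} {K B : Type} [CommRing K] [CommRing B] [Algebra K B]
    (φ : MvPolynomial σ K →ₐ[K] MvPolynomial τ B) (R : (τ →₀ ℕ) → (τ →₀ ℕ) → Prop)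
    (H : (σ →₀ ℕ) → (τ →₀ ℕ)) (c : (σ →₀ ℕ) → B) (hφ : ∀ b, LTm R (φ (monomial b 1)) (H b) (c b))
    (f : MvPolynomial σ K) (M0 : τ →₀ ℕ) (hR : ∀ b, coeff b f ≠ 0 → ¬ R M0 (H b))
    [DecidablePred fun b => H b = M0] :
    coeff M0 (φ f) = ∑ b ∈ f.support with H b = M0, coeff b f • c b := by
  have hf : φ f = ∑ b ∈ f.support, coeff b f • φ (monomial b 1) := by
    conv_lhs => rw [f.as_sum]
    rw [map_sum]
    apply Finset.sum_congr rfl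
    intro b _
    rw [← map_smul, smul_monomial, smul_eq_mul, mul_one]
  rw [hf, coeff_sum, Finset.sum_filter]
  apply Finset.sum_congr rfl
  intro b hb
  have h1 : coeff M0 (φ (monomial b 1) - monomial (H b) (c b)) = 0 := by
    by_contra h
    exact hR b (by simpa using hb) (hφ b M0 h)
  rw [coeff_sub, sub_eq_zero] at h1
  classical
  rw [coeff_smul, h1, coeff_monomial]
  split_ifs <;> simp

variable {σ ι Λ : Type} [Fintype σ] [DecidableEq σ] [Fintype ι] [LinearOrder ι] {N : ℕ}
  [LinearOrder Λ] [Finite Λ] (ix : σ ≃ Λ)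
variable (e : ι × Fin (N+1) ≃ σ)

/-- compatibility of the monomial order with the view -/
def MonoIx (ix : σ ≃ Λ) (e : ι × Fin (N+1) ≃ σ) : Prop :=
  ∀ r s i j, r ≤ s → i ≤ j → ix (e (s, j)) ≤ ix (e (r, i))

variable {K : Type} [Field K]

/-- exponent map of the substitution -/
noncomputable def hExp (j : Fin N) (r : ι) (v : σ) : σ →₀ ℕ :=
  if (e.symm v).2 = j.castSucc ∧ (e.symm v).1 < r then 0
  else if (e.symm v).2 = j.succ ∧ (e.symm v).1 < r then 0
  else if (e.symm v).2 = j.succ ∧ (e.symm v).1 = r then Finsupp.single (e (r, j.castSucc)) 1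
  else Finsupp.single v 1

/-- coefficient map of the substitution -/
def cExp {B : Type} [CommRing B] (xi eta : ι → B) (z : B) (j : Fin N) (r : ι) (v : σ) : B :=
  if (e.symm v).2 = j.castSucc ∧ (e.symm v).1 < r then xi (e.symm v).1
  else if (e.symm v).2 = j.succ ∧ (e.symm v).1 < r then eta (e.symm v).1
  else if (e.symm v).2 = j.succ ∧ (e.symm v).1 = r then z
  else 1

/-- extended exponent map -/
noncomputable def HExp (j : Fin N) (r : ι) (b : σ →₀ ℕ) : σ →₀ ℕ := ∑ v, b v • hExp e j r v

lemma HExp_apply (j : Fin N) (r : ι) (b : σ →₀ ℕ) (w : σ) :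
    HExp e j r b w = ∑ v, b v * hExp e j r v w := by
  simp [HExp, Finsupp.finsetSum_apply]

lemma HExp_same (j : Fin N) (r : ι) (b : σ →₀ ℕ) (s : ι) (k : Fin (N+1))
    (h : r < s ∨ (k ≠ j.castSucc ∧ k ≠ j.succ)) : HExp e j r b (e (s, k)) = b (e (s, k)) := by
  rw [HExp_apply, Finset.sum_eq_single (e (s, k))]
  · have : hExp e j r (e (s, k)) = Finsupp.single (e (s, k)) 1 := by
      simp only [hExp, Equiv.symm_apply_apply]
      rcases h with h | h
      · simp [h.not_gt, h.ne']
      · simp [h.1, h.2]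
    rw [this]; simp
  · intro v _ hv
    have : hExp e j r v (e (s, k)) = 0 := by
      simp only [hExp]
      split_ifs
      · rfl
      · rfl
      · rw [Finsupp.single_apply, if_neg]
        rw [EmbeddingLike.apply_eq_iff_eq]
        rintro h'
        have h1 := (Prod.mk.inj h').1
        have h2 := (Prod.mk.inj h').2
        rcases h with h | h
        · exact h.ne h1
        · exact h.1 h2.symm
      · rw [Finsupp.single_apply, if_neg hv]
    rw [this, mul_zero]
  · simp

lemma HExp_xr (j : Fin N) (r : ι) (b : σ →₀ ℕ) :
    HExp e j r b (e (r, j.castSucc)) = b (e (r, j.castSucc)) + b (e (r, j.succ)) := by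
  rw [HExp_apply, ← Equiv.sum_comp e, Fintype.sum_prod_type, Finset.sum_eq_single r]
  · rw [sum_two j]
    simp [hExp, (succ_ne_castSucc j), (succ_ne_castSucc j).symm]
    intro k h1 h2
    right
    rw [if_neg (fun h => h2 h)]
    rw [Finsupp.single_apply, if_neg]
    simpa using h1
  · intro s _ hs
    apply Finset.sum_eq_zero
    intro k _
    simp only [hExp, Equiv.symm_apply_apply]
    split_ifs with h1 h2 h3
    · simp
    · simp
    · exact absurd h3.2 hs
    · rw [Finsupp.single_apply, if_neg]
      · simp
      · simp [hs]
  · simp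

/-- first substitution -/
noncomputable def phi1 {B : Type} [CommRing B] [Algebra K B] (xi eta : ι → B) (j : Fin N) (r : ι) :
    MvPolynomial σ K →ₐ[K] MvPolynomial σ B :=
  aeval (fun v => monomial (hExp e j r v) (cExp e xi eta (-1) j r v))

/-- relation of correction terms -/
def CRel (j : Fin N) (r : ι) (m m' : σ →₀ ℕ) : Prop :=
  ∃ κ : ι → ℕ, (∃ s, κ s ≠ 0) ∧ (∀ s, s ≤ r → κ s = 0) ∧
    (∀ s, r < s → m (e (s, j.succ)) + κ s = m' (e (s, j.succ))) ∧
    (∀ s, r < s → m (e (s, j.castSucc)) = m' (e (s, j.castSucc)) + κ s) ∧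
    (∀ s k, k ≠ j.castSucc → k ≠ j.succ → m (e (s, k)) = m' (e (s, k)))

lemma CRel_add (j : Fin N) (r : ι) (m m' k : σ →₀ ℕ) (h : CRel e j r m m') :
    CRel e j r (m + k) (m' + k) := by
  obtain ⟨κ, h1, h2, h3, h4, h5⟩ := h
  refine ⟨κ, h1, h2, ?_, ?_, ?_⟩
  · intro s hs; have := h3 s hs; simp only [Finsupp.add_apply]; omega
  · intro s hs; have := h4 s hs; simp only [Finsupp.add_apply]; omega
  · intro s c hc1 hc2; have := h5 s c hc1 hc2; simp only [Finsupp.add_apply]; omega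

lemma CRel_add2 (j : Fin N) (r : ι) (m m' k k' : σ →₀ ℕ) (h : CRel e j r m m') (h' : CRel e j r k k') :
    CRel e j r (m + k) (m' + k') := by
  obtain ⟨κ, ⟨s0, h1⟩, h2, h3, h4, h5⟩ := h
  obtain ⟨κ', _, h2', h3', h4', h5'⟩ := h'
  refine ⟨κ + κ', ⟨s0, ?_⟩, ?_, ?_, ?_, ?_⟩
  · simp only [Pi.add_apply]; omega
  · intro s hs; simp [h2 s hs, h2' s hs]
  · intro s hs; have := h3 s hs; have := h3' s hs; simp only [Finsupp.add_apply, Pi.add_apply]; omega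
  · intro s hs; have := h4 s hs; have := h4' s hs; simp only [Finsupp.add_apply, Pi.add_apply]; omega
  · intro s c hc1 hc2; have := h5 s c hc1 hc2; have := h5' s c hc1 hc2
    simp only [Finsupp.add_apply]; omega

lemma phi1_LTm {B : Type} [CommRing B] [Algebra K B] (xi eta : ι → B) (j : Fin N) (r : ι)
    (b : σ →₀ ℕ) : LTm (CRel e j r) (phi1 (K := K) e xi eta j r (monomial b 1)) (HExp e j r b)
      (∏ v, cExp e xi eta (-1) j r v ^ b v) := by
  refine LTm_hom (phi1 (K := K) e xi eta j r).toRingHom (CRel_add e j r) (CRel_add2 e j r) _ _ ?_ b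
  intro v m hm
  exfalso; apply hm
  simp [phi1]

lemma phi2_LTm {B : Type} [CommRing B] [Algebra K B] (xi eta : ι → B) (j : Fin N) (r : ι)
    (b : σ →₀ ℕ) : LTm (CRel e j r) (((phi1 (K := K) e xi eta j r).comp
      (act e (transvection j.castSucc j.succ (1:K)))) (monomial b 1)) (HExp e j r b)
      (∏ v, cExp e xi (eta + xi) 0 j r v ^ b v) := by
  refine LTm_hom ((phi1 (K := K) e xi eta j r).comp
      (act e (transvection j.castSucc j.succ (1:K)))).toRingHom (CRel_add e j r) (CRel_add2 e j r) _ _ ?_ b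
  intro v m hm
  obtain ⟨⟨s, k⟩, rfl⟩ := e.surjective v
  have h1 : ((phi1 (K := K) e xi eta j r).comp
      (act e (transvection j.castSucc j.succ (1:K)))).toRingHom (X (e (s, k)))
      = monomial (hExp e j r (e (s, k))) (cExp e xi eta (-1) j r (e (s, k))) +
        if k = j.succ then monomial (hExp e j r (e (s, j.castSucc)))
          (cExp e xi eta (-1) j r (e (s, j.castSucc))) else 0 := by
    show (phi1 (K := K) e xi eta j r) (act e (transvection j.castSucc j.succ (1:K)) (X (e (s, k)))) = _
    rw [act_transvection_X]
    split_ifs <;> simp [phi1]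
  rw [h1] at hm
  by_cases hk : k = j.succ
  · subst hk
    rw [if_pos rfl] at hm
    rcases lt_trichotomy s r with hs | hs | hs
    · exfalso; apply hm
      simp [hExp, cExp, hs, hs.ne, succ_ne_castSucc, (succ_ne_castSucc j).symm]
    · subst hs
      exfalso; apply hm
      simp [hExp, cExp, succ_ne_castSucc, (succ_ne_castSucc j).symm]
    · have h2 : m = Finsupp.single (e (s, j.castSucc)) 1 := by
        have : coeff m (monomial (Finsupp.single (e (s, j.castSucc)) 1) (1 : B)) ≠ 0 := by
          simpa [hExp, cExp, hs, hs.ne', hs.not_gt, succ_ne_castSucc, (succ_ne_castSucc j).symm] using hm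
        exact coeff_monomial_ne this
      have h3 : hExp e j r (e (s, j.succ)) = Finsupp.single (e (s, j.succ)) 1 := by
        simp [hExp, hs.ne', hs.not_gt]
      rw [h2, h3]
      have d1 : ∀ s' k', (Finsupp.single (e (s, j.castSucc)) 1 : σ →₀ ℕ) (e (s', k')) =
          if s = s' ∧ j.castSucc = k' then 1 else 0 := by
        intro s' k'; rw [Finsupp.single_apply]; simp
      have d2 : ∀ s' k', (Finsupp.single (e (s, j.succ)) 1 : σ →₀ ℕ) (e (s', k')) =
          if s = s' ∧ j.succ = k' then 1 else 0 := by
        intro s' k'; rw [Finsupp.single_apply]; simp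
      refine ⟨Pi.single s 1, ⟨s, by simp⟩, ?_, ?_, ?_, ?_⟩
      · intro s' hs'
        rw [Pi.single_eq_of_ne]
        exact (lt_of_le_of_lt hs' hs).ne
      · intro s' hs'
        rw [d1, d2]
        simp [(succ_ne_castSucc j).symm, Pi.single_apply, eq_comm]
      · intro s' hs'
        rw [d1, d2]
        simp [(succ_ne_castSucc j), Pi.single_apply, eq_comm]
      · intro s' k' hk1 hk2
        rw [d1, d2]
        simp [hk1.symm, hk2.symm]
  · exfalso; apply hm
    rw [if_neg hk]
    simp [cExp, hk]

end F2

section F2b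
variable {σ ι Λ : Type} [Fintype σ] [DecidableEq σ] [Fintype ι] [LinearOrder ι] {N : ℕ}
  [LinearOrder Λ] [Finite Λ] (ix : σ ≃ Λ)
variable (e : ι × Fin (N+1) ≃ σ)
variable {K : Type} [Field K]

lemma not_CRel (hmono : MonoIx ix e) (f : MvPolynomial σ K) (a b : σ →₀ ℕ) (ha : IsLead ix f a)
    (hb : coeff b f ≠ 0) (j : Fin N) (r : ι) : ¬ CRel e j r (HExp e j r a) (HExp e j r b) := by
  rintro ⟨κ, ⟨s1, hs1⟩, h2, h3, h4, h5⟩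
  obtain ⟨s0, hs0, hmax⟩ := Finset.exists_max_image (Finset.univ.filter (fun s => κ s ≠ 0)) id
    ⟨s1, by simpa using hs1⟩
  have hs0 : κ s0 ≠ 0 := by simpa using hs0
  have hr : r < s0 := by
    by_contra h; exact hs0 (h2 s0 (not_lt.mp h))
  have hlt : key ix a < key ix b := by
    apply key_lt ix (e (s0, j.succ))
    · intro w hw
      obtain ⟨⟨s, k⟩, rfl⟩ := e.surjective w
      by_cases hk1 : k = j.castSucc
      · subst hk1
        have hs : s0 < s := by
          by_contra h
          exact hw.not_ge (hmono s s0 _ _ (not_lt.mp h) (Fin.castSucc_lt_succ).le)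
        have hκ : κ s = 0 := by
          by_contra h
          exact hs.not_ge (hmax s (by simpa using h))
        have := h4 s (hr.trans hs)
        rw [HExp_same _ _ _ _ _ _ (Or.inl (hr.trans hs)), HExp_same _ _ _ _ _ _ (Or.inl (hr.trans hs))] at this
        omega
      · by_cases hk2 : k = j.succ
        · subst hk2
          have hs : s0 < s := by
            by_contra h
            exact hw.not_ge (hmono s s0 _ _ (not_lt.mp h) le_rfl)
          have hκ : κ s = 0 := by
            by_contra h
            exact hs.not_ge (hmax s (by simpa using h))
          have := h3 s (hr.trans hs)
          rw [HExp_same _ _ _ _ _ _ (Or.inl (hr.trans hs)), HExp_same _ _ _ _ _ _ (Or.inl (hr.trans hs))] at this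
          omega
        · have := h5 s k hk1 hk2
          rwa [HExp_same _ _ _ _ _ _ (Or.inr ⟨hk1, hk2⟩), HExp_same _ _ _ _ _ _ (Or.inr ⟨hk1, hk2⟩)] at this
    · have := h3 s0 hr
      rw [HExp_same _ _ _ _ _ _ (Or.inl hr), HExp_same _ _ _ _ _ _ (Or.inl hr)] at this
      omega
  exact hlt.not_ge (ha.2 b hb)

lemma prod_sum_eq (j : Fin N) (r : ι) (b : σ →₀ ℕ) (k0 : Fin (N+1)) :
    ∑ v, (if (e.symm v).2 = k0 ∧ (e.symm v).1 < r then b v else 0) = ∑ s with s < r, b (e (s, k0)) := by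
  rw [← Equiv.sum_comp e, Fintype.sum_prod_type, Finset.sum_filter]
  apply Finset.sum_congr rfl
  intro s _
  simp only [Equiv.symm_apply_apply]
  by_cases h : s < r
  · simp [h]
  · simp [h]

theorem lead_Yam (hmono : MonoIx ix e) (f : MvPolynomial σ K) (mu : Fin (N+1) → ℕ)
    (hf : f ∈ wtSub e K mu)
    (hU : ∀ j : Fin N, act e (transvection j.castSucc j.succ (1:K)) f = f)
    (a : σ →₀ ℕ) (ha : IsLead ix f a) : Yam e a := by
  classical
  intro j r
  let S0 := Polynomial (MvPolynomial σ K)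
  let xi : ι → S0 := fun s => Polynomial.X * Polynomial.C (X (e (s, j.castSucc)))
    - Polynomial.C (X (e (s, j.succ)))
  let eta : ι → S0 := fun s => Polynomial.C (X (e (s, j.succ)))
  have L1 := coeff_LTm_sum (phi1 (K := K) e xi eta j r) (CRel e j r) (HExp e j r) _
    (phi1_LTm e xi eta j r) f (HExp e j r a) (fun b hb => not_CRel ix e hmono f a b ha hb j r)
  have L2 := coeff_LTm_sum _ (CRel e j r) (HExp e j r) _
    (phi2_LTm (K := K) e xi eta j r) f (HExp e j r a) (fun b hb => not_CRel ix e hmono f a b ha hb j r)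
  rw [AlgHom.comp_apply, hU j, L1] at L2
  set D := f.support.filter (fun b => HExp e j r b = HExp e j r a) with hD
  set Q := ∑ b ∈ D, coeff b f • ∏ v, cExp e xi eta (-1) j r v ^ b v with hQ
  -- facts on D
  have hDc : ∀ b ∈ D, coeff b f ≠ 0 := fun b hb => by
    simpa using (Finset.mem_filter.mp hb).1
  have hsame : ∀ b ∈ D, ∀ s k, (r < s ∨ (k ≠ j.castSucc ∧ k ≠ j.succ)) → b (e (s, k)) = a (e (s, k)) := by
    intro b hb s k h
    rw [← HExp_same e j r b s k h, ← HExp_same e j r a s k h, (Finset.mem_filter.mp hb).2]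
  have hxy : ∀ b ∈ D, b (e (r, j.castSucc)) + b (e (r, j.succ)) =
      a (e (r, j.castSucc)) + a (e (r, j.succ)) := by
    intro b hb
    rw [← HExp_xr, ← HExp_xr, (Finset.mem_filter.mp hb).2]
  have hwt : ∀ b ∈ D, ∀ k, ∑ s with s < r, b (e (s, k)) + b (e (r, k)) =
      ∑ s with s < r, a (e (s, k)) + a (e (r, k)) := by
    intro b hb k
    have h1 : wtE e b k = wtE e a k := by rw [hf b (hDc b hb), hf a ha.1]
    simp only [wtE] at h1
    rw [sum_split _ r, sum_split (fun s => a (e (s, k))) r] at h1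
    have h2 : ∑ s with r < s, b (e (s, k)) = ∑ s with r < s, a (e (s, k)) :=
      Finset.sum_congr rfl (fun s hs => hsame b hb s k (Or.inl (Finset.mem_filter.mp hs).2))
    omega
  have hle : ∀ b ∈ D, b (e (r, j.succ)) ≤ a (e (r, j.succ)) := by
    intro b hb
    by_contra! hlt
    have : key ix a < key ix b := by
      refine key_lt ix (e (r, j.succ)) ?_ hlt
      intro w hw
      obtain ⟨⟨s, k⟩, rfl⟩ := e.surjective w
      refine (hsame b hb s k ?_).symm
      by_contra! hc
      have hk : k ≤ j.succ := by
        by_cases h : k = j.castSucc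
        · rw [h]; exact (Fin.castSucc_lt_succ).le
        · exact (hc.2 h).le
      exact hw.not_ge (hmono s r _ _ hc.1 hk)
    exact this.not_ge (ha.2 b (hDc b hb))
  have hDa : a ∈ D := by
    rw [hD, Finset.mem_filter]; exact ⟨by simpa using ha.1, rfl⟩
  -- degree bound
  have hdeg : Q.natDegree ≤ ∑ s with s < r, a (e (s, j.castSucc)) := by
    rw [hQ]
    apply Polynomial.natDegree_sum_le_of_forall_le
    intro b hb
    refine (Polynomial.natDegree_smul_le _ _).trans ?_
    refine (Polynomial.natDegree_prod_le _ _).trans ?_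
    have h1 : ∑ v, (cExp e xi eta (-1) j r v ^ b v).natDegree ≤
        ∑ v, (if (e.symm v).2 = j.castSucc ∧ (e.symm v).1 < r then b v else 0) := by
      apply Finset.sum_le_sum
      intro v _
      refine Polynomial.natDegree_pow_le.trans ?_
      simp only [cExp]
      split_ifs
      · have : (xi (e.symm v).1).natDegree ≤ 1 := by
          simp only [xi]
          refine (Polynomial.natDegree_sub_le _ _).trans ?_
          simp only [Polynomial.natDegree_C, max_le_iff, zero_le, and_true]
          refine Polynomial.natDegree_mul_le.trans ?_
          simp
        nlinarith
      · simp [eta]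
      · have : (-1 : Polynomial (MvPolynomial σ K)).natDegree = 0 := by
          rw [Polynomial.natDegree_neg]; simp
        rw [this]; simp
      · simp
    refine h1.trans ?_
    rw [prod_sum_eq e j]
    have := hwt b hb j.castSucc
    have := hle b hb
    have := hxy b hb
    omega
  -- divisibility
  have hdvd : (Polynomial.X : S0) ^ (∑ s with s ≤ r, a (e (s, j.succ))) ∣ Q := by
    rw [L2]
    apply Finset.dvd_sum
    intro b hb
    rw [Algebra.smul_def]
    apply Dvd.dvd.mul_left
    by_cases hb0 : b (e (r, j.succ)) = 0
    · have h1 : ∑ s with s ≤ r, a (e (s, j.succ)) =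
          ∑ v, (if (e.symm v).2 = j.succ ∧ (e.symm v).1 < r then b v else 0) := by
        rw [prod_sum_eq e j, sum_le_split]
        have := hwt b hb j.succ
        omega
      rw [h1, ← Finset.prod_pow_eq_pow_sum]
      apply Finset.prod_dvd_prod_of_dvd
      intro v _
      by_cases hv : (e.symm v).2 = j.succ ∧ (e.symm v).1 < r
      · rw [if_pos hv]
        apply pow_dvd_pow_of_dvd
        simp only [cExp]
        rw [if_neg (by rw [hv.1]; simp [succ_ne_castSucc]), if_pos hv]
        refine ⟨Polynomial.C (X (e ((e.symm v).1, j.castSucc))), ?_⟩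
        simp [xi, eta]
      · rw [if_neg hv, pow_zero]; exact one_dvd _
    · have : ∏ v, cExp e xi (eta + xi) 0 j r v ^ b v = 0 := by
        apply Finset.prod_eq_zero (Finset.mem_univ (e (r, j.succ)))
        have : cExp e xi (eta + xi) 0 j r (e (r, j.succ)) = 0 := by
          simp [cExp]
        rw [this, zero_pow hb0]
      rw [this]; exact dvd_zero _
  -- nonvanishing
  have hne : Q ≠ 0 := by
    intro hQ0
    let ψ : MvPolynomial σ K →ₐ[K] MvPolynomial σ K := aeval (fun v =>
      if (e.symm v).2 = j.castSucc then X v + X (e ((e.symm v).1, j.succ)) else X v)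
    obtain ⟨χ, χX, χC⟩ : ∃ χ : S0 →ₐ[K] MvPolynomial σ K, χ Polynomial.X = 1 ∧
        ∀ p, χ (Polynomial.C p) = ψ p := by
      refine ⟨{ Polynomial.eval₂RingHom (ψ : MvPolynomial σ K →+* MvPolynomial σ K) 1 with
        commutes' := ?_ }, ?_, ?_⟩
      · intro k
        show Polynomial.eval₂ (ψ : MvPolynomial σ K →+* MvPolynomial σ K) 1
          (algebraMap K (Polynomial (MvPolynomial σ K)) k) = _
        rw [Polynomial.algebraMap_apply, Polynomial.eval₂_C]
        exact ψ.commutes k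
      · exact Polynomial.eval₂_X _ _
      · intro p; exact Polynomial.eval₂_C _ _
    have hχ : ∀ b ∈ D, χ (∏ v, cExp e xi eta (-1) j r v ^ b v) =
        monomial (Finsupp.equivFunOnFinite.symm (fun v =>
          if ((e.symm v).2 = j.castSucc ∨ (e.symm v).2 = j.succ) ∧ (e.symm v).1 < r then b v else 0))
          ((-1) ^ b (e (r, j.succ))) := by
      intro b hb
      have h1 : ∀ v, χ (cExp e xi eta (-1) j r v ^ b v) =
          (X v ^ (if ((e.symm v).2 = j.castSucc ∨ (e.symm v).2 = j.succ) ∧ (e.symm v).1 < r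
            then b v else 0)) * (if v = e (r, j.succ) then (-1) ^ b v else 1) := by
        intro v
        obtain ⟨⟨s, k⟩, rfl⟩ := e.surjective v
        simp only [cExp, Equiv.symm_apply_apply, map_pow, EmbeddingLike.apply_eq_iff_eq, Prod.mk.injEq]
        by_cases hs : s < r
        · by_cases hk1 : k = j.castSucc
          · subst hk1
            simp [hs, hs.ne, xi, χX, χC, ψ, succ_ne_castSucc]
          · by_cases hk2 : k = j.succ
            · subst hk2
              simp [hs, hs.ne, eta, χX, χC, ψ, succ_ne_castSucc]
            · simp [hs.ne, hk1, hk2]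
        · by_cases hs2 : s = r
          · subst hs2
            by_cases hk2 : k = j.succ
            · subst hk2
              simp
            · simp [hk2]
          · simp [hs, hs2]
      rw [map_prod]
      simp only [h1]
      rw [Finset.prod_mul_distrib, Finset.prod_ite_eq' Finset.univ, if_pos (Finset.mem_univ _)]
      rw [monomial_eq, Finsupp.prod_fintype _ _ (by simp), mul_comm]
      simp
    have h2 := congrArg χ hQ0
    rw [hQ, map_sum, map_zero] at h2
    have h3 := congrArg (coeff (Finsupp.equivFunOnFinite.symm (fun v =>
          if ((e.symm v).2 = j.castSucc ∨ (e.symm v).2 = j.succ) ∧ (e.symm v).1 < r then a v else 0))) h2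
    rw [coeff_sum, coeff_zero, Finset.sum_eq_single a] at h3
    · rw [map_smul, hχ a hDa, coeff_smul, coeff_monomial, if_pos rfl] at h3
      have : (-1 : K) ^ a (e (r, j.succ)) ≠ 0 := pow_ne_zero _ (by simp)
      exact ha.1 ((mul_eq_zero.mp h3).resolve_right this)
    · intro b hb hba
      rw [map_smul, hχ b hb, coeff_smul, coeff_monomial, if_neg, smul_zero]
      intro heq
      apply hba
      have h4 : ∀ s k, (k = j.castSucc ∨ k = j.succ) → s < r → b (e (s, k)) = a (e (s, k)) := by
        intro s k hk hs
        have := DFunLike.congr_fun heq (e (s, k))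
        simpa [hk, hs] using this
      apply ext_e e
      intro s k
      by_cases hk : k = j.castSucc ∨ k = j.succ
      · rcases lt_trichotomy s r with hs | hs | hs
        · exact h4 s k hk hs
        · subst hs
          have h5 : ∑ s' with s' < s, b (e (s', k)) = ∑ s' with s' < s, a (e (s', k)) :=
            Finset.sum_congr rfl (fun s' hs' => h4 s' k hk (Finset.mem_filter.mp hs').2)
          have := hwt b hb k
          omega
        · exact hsame b hb s k (Or.inl hs)
      · push Not at hk
        exact hsame b hb s k (Or.inr hk)
    · intro h; exact absurd hDa h
  have := Polynomial.natDegree_le_of_dvd hdvd hne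
  rw [Polynomial.natDegree_X_pow] at this
  exact this.trans hdeg

end F2b

section Grad
variable {σ ι : Type} [Fintype σ] [DecidableEq σ] [Fintype ι] [LinearOrder ι] {N : ℕ}
variable (e : ι × Fin (N+1) ≃ σ)
variable {K : Type} [Field K]

/-- weight component -/
noncomputable def wproj (mu : Fin (N+1) → ℕ) (f : MvPolynomial σ K) : MvPolynomial σ K :=
  ∑ b ∈ f.support with wtE e b = mu, monomial b (coeff b f)

lemma coeff_wproj (mu : Fin (N+1) → ℕ) (f : MvPolynomial σ K) (b : σ →₀ ℕ) :
    coeff b (wproj e mu f) = if wtE e b = mu then coeff b f else 0 := by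
  classical
  rw [wproj, coeff_sum]
  simp only [coeff_monomial]
  rw [Finset.sum_ite_eq']
  simp only [Finset.mem_filter, mem_support_iff]
  by_cases h : coeff b f = 0 <;> simp [h]

lemma wproj_mem (mu : Fin (N+1) → ℕ) (f : MvPolynomial σ K) : wproj e mu f ∈ wtSub e K mu := by
  intro b hb
  rw [coeff_wproj] at hb
  by_contra h
  simp [h] at hb

lemma wproj_mem_of_diag [Infinite K] (M : Submodule K (MvPolynomial σ K))
    (hM : ∀ d : Fin (N+1) → K, ∀ f ∈ M, act e (diagonal d) f ∈ M) (f : MvPolynomial σ K) (hf : f ∈ M)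
    (mu : Fin (N+1) → ℕ) : wproj e mu f ∈ M := by
  classical
  by_contra hcon
  obtain ⟨ℓ, hℓ, hℓM⟩ := Submodule.exists_le_ker_of_notMem hcon
  let W := f.support.image (wtE e)
  have hsum : ∀ d : Fin (N+1) → K,
      act e (diagonal d) f = ∑ nu ∈ W, (∏ j, d j ^ nu j) • wproj e nu f := by
    intro d
    ext b
    rw [coeff_act_diagonal, coeff_sum]
    simp only [coeff_smul, coeff_wproj, smul_eq_mul, mul_ite, mul_zero]
    rw [Finset.sum_ite_eq]
    split_ifs with h
    · rfl
    · have : coeff b f = 0 := by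
        by_contra hb
        exact h (Finset.mem_image_of_mem _ (by simpa using hb))
      rw [this, mul_zero]
  let p : MvPolynomial (Fin (N+1)) K := ∑ nu ∈ W, monomial (Finsupp.equivFunOnFinite.symm nu) (ℓ (wproj e nu f))
  have hp : p = 0 := by
    apply MvPolynomial.funext
    intro d
    have h1 : ℓ (act e (diagonal d) f) = 0 := hℓM (hM d f hf)
    rw [hsum, map_sum] at h1
    rw [map_zero, ← h1]
    simp only [p, map_sum, eval_monomial]
    apply Finset.sum_congr rfl
    intro nu _
    rw [map_smul, Finsupp.prod_fintype _ _ (by simp), smul_eq_mul, mul_comm]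
    simp
  have h2 := congrArg (coeff (Finsupp.equivFunOnFinite.symm mu)) hp
  simp only [p, coeff_sum, coeff_monomial, EmbeddingLike.apply_eq_iff_eq, coeff_zero] at h2
  rw [Finset.sum_ite_eq'] at h2
  split_ifs at h2 with h
  · exact hℓ h2
  · have : wproj e mu f = 0 := by
      ext b
      rw [coeff_wproj, coeff_zero]
      split_ifs with h3
      · by_contra hb
        exact h (h3 ▸ Finset.mem_image_of_mem _ (by simpa using hb))
      · rfl
    rw [this] at hℓ
    simp at hℓ

lemma coeff_act_transv {A : Type} [CommRing A] (i j : Fin (N+1)) (t : A) (F : MvPolynomial σ A)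
    (b : σ →₀ ℕ) (h : ∀ b', coeff b' F ≠ 0 → ∀ k : ℕ, 0 < k →
      wtE e b + k • Pi.single j 1 ≠ wtE e b' + k • Pi.single i 1) :
    coeff b (act e (transvection i j t) F) = coeff b F := by
  classical
  rw [coeff_LTm_sum (act e (transvection i j t)) _ id _ (LTm_transvection e i j t) F b]
  · rw [Finset.sum_filter]
    simp only [id, smul_eq_mul, mul_one]
    rw [Finset.sum_ite_eq']
    split_ifs with hb
    · rfl
    · simp only [mem_support_iff, not_not] at hb; exact hb.symm
  · rintro b' hb' ⟨k, hk, hh⟩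
    exact h b' hb' k hk hh

lemma lex_of_rel {w w' : Fin (N+1) → ℕ} {i j : Fin (N+1)} (hij : i < j) {k : ℕ} (hk : 0 < k)
    (h : w + k • Pi.single j 1 = w' + k • Pi.single i 1) : toLex w' < toLex w := by
  refine ⟨i, ?_, ?_⟩
  · intro l hl
    have := congrFun h l
    have h1 : l ≠ i := hl.ne
    have h2 : l ≠ j := (hl.trans hij).ne
    simp [h1, h2] at this
    exact this.symm
  · have := congrFun h i
    have h2 : i ≠ j := hij.ne
    simp [h2] at this
    show w' i < w i
    omega

end Grad

section Theta
variable {σ ι : Type} [Fintype σ] [DecidableEq σ] [Fintype ι] [LinearOrder ι] {N : ℕ}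
variable (e : ι × Fin (N+1) ≃ σ)
variable (K : Type) [Field K]

/-- generic matrix -/
noncomputable def genM : Matrix (Fin (N+1)) (Fin (N+1)) (MvPolynomial (Sg 1 N) K) :=
  Matrix.of fun i c => X (0, i, c)

variable {K}

/-- action of the generic matrix -/
noncomputable def theta (v : MvPolynomial σ K) : MvPolynomial σ (MvPolynomial (Sg 1 N) K) :=
  act e (genM K) (MvPolynomial.map C v)

/-- coefficients of the generic action -/
noncomputable def thetaC (b : σ →₀ ℕ) : MvPolynomial σ K →ₗ[K] MvPolynomial (Sg 1 N) K where
  toFun v := coeff b (theta e v)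
  map_add' v w := by simp [theta]
  map_smul' k v := by
    simp only [theta, smul_eq_C_mul, map_mul, map_C, algHom_C, algebraMap_eq, coeff_C_mul, RingHom.id_apply]

lemma theta_eval (g : Matrix (Fin (N+1)) (Fin (N+1)) K) (v : MvPolynomial σ K) :
    MvPolynomial.map (MvPolynomial.eval (fun w : Sg 1 N => g w.2.1 w.2.2)) (theta e v) = act e g v := by
  rw [theta, act_map, MvPolynomial.map_map]
  have h1 : (MvPolynomial.eval (fun w : Sg 1 N => g w.2.1 w.2.2)).comp C = RingHom.id K := by
    ext; simp
  have h2 : (genM K).map (MvPolynomial.eval (fun w : Sg 1 N => g w.2.1 w.2.2)) = g := by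
    ext i j; simp [genM]
  rw [h1, h2, MvPolynomial.map_id]

lemma thetaC_eval (x : Sg 1 N → K) (v : MvPolynomial σ K) (b : σ →₀ ℕ) :
    MvPolynomial.eval x (thetaC e b v) = coeff b (act e (Matrix.of fun i c => x (0, i, c)) v) := by
  rw [← theta_eval, coeff_map]
  show _ = MvPolynomial.eval _ (coeff b (theta e v))
  have : (fun w : Sg 1 N => (Matrix.of fun i c => x (0, i, c)) w.2.1 w.2.2) = x := by
    funext ⟨l, i, c⟩
    obtain rfl : l = 0 := Subsingleton.elim _ _
    rfl
  rw [this]; rfl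

lemma map_alg_C (ψ : MvPolynomial (Sg 1 N) K →ₐ[K] MvPolynomial (Sg 1 N) K) (v : MvPolynomial σ K) :
    MvPolynomial.map (ψ : MvPolynomial (Sg 1 N) K →+* MvPolynomial (Sg 1 N) K) (MvPolynomial.map C v)
      = MvPolynomial.map C v := by
  rw [MvPolynomial.map_map]
  congr 2
  ext k; simp

lemma theta_act (h : Matrix (Fin (N+1)) (Fin (N+1)) K) (v : MvPolynomial σ K) :
    theta e (act e h v) = MvPolynomial.map (act (eW 1 N) h :
      MvPolynomial (Sg 1 N) K →+* MvPolynomial (Sg 1 N) K) (theta e v) := by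
  rw [theta, theta, act_map, act_map, map_alg_C, act_act]
  congr 2
  ext1 i c
  simp only [Matrix.mul_apply, Matrix.map_apply, genM, Matrix.of_apply]
  have := act_X (eW 1 N) h (toLex (0, i)) c
  simp only [eW_apply] at this
  rw [RingHom.coe_coe, this]
  exact Finset.sum_congr rfl (fun k _ => mul_comm _ _)

lemma theta_V (h : Matrix (Fin (N+1)) (Fin (N+1)) K) (v : MvPolynomial σ K) :
    MvPolynomial.map (act (eV 1 N) h :
      MvPolynomial (Sg 1 N) K →+* MvPolynomial (Sg 1 N) K) (theta e v) =
      act e (hᵀ.map C) (theta e v) := by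
  rw [theta, act_map, map_alg_C, act_act]
  congr 2
  ext1 i c
  simp only [Matrix.mul_apply, Matrix.map_apply, genM, Matrix.of_apply, Matrix.transpose_apply]
  have := act_X (eV 1 N) h (toLex (0, c)) i
  simp only [eV_apply] at this
  rw [RingHom.coe_coe, this]

lemma thetaC_act (h : Matrix (Fin (N+1)) (Fin (N+1)) K) (v : MvPolynomial σ K) (b : σ →₀ ℕ) :
    thetaC e b (act e h v) = act (eW 1 N) h (thetaC e b v) := by
  show coeff b (theta e (act e h v)) = act (eW 1 N) h (coeff b (theta e v))
  rw [theta_act, coeff_map]; rfl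

lemma thetaC_wt (v : MvPolynomial σ K) (b : σ →₀ ℕ) :
    thetaC e b v ∈ wtSub (eV 1 N) K (wtE e b) := by
  show coeff b (theta e v) ∈ _
  have hmul : ∀ (F G : MvPolynomial σ (MvPolynomial (Sg 1 N) K)),
      (∀ b, coeff b F ∈ wtSub (eV 1 N) K (wtE e b)) → (∀ b, coeff b G ∈ wtSub (eV 1 N) K (wtE e b)) →
      ∀ b, coeff b (F * G) ∈ wtSub (eV 1 N) K (wtE e b) := by
    intro F G hF hG b
    classical
    rw [coeff_mul]
    apply Submodule.sum_mem
    rintro ⟨k, l⟩ hkl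
    have hkl := Finset.HasAntidiagonal.mem_antidiagonal.mp hkl
    simp only at hkl
    subst hkl
    intro c hc
    obtain ⟨c1, c2, rfl, h1, h2⟩ := coeff_mul_ne hc
    rw [wtE_add, wtE_add, hF k c1 h1, hG l c2 h2]
  have hC : ∀ k : K, ∀ b, coeff b (C (C k) : MvPolynomial σ (MvPolynomial (Sg 1 N) K)) ∈
      wtSub (eV 1 N) K (wtE e b) := by
    intro k b
    classical
    rw [coeff_C]
    split_ifs with h
    · subst h
      intro c hc
      rw [coeff_C] at hc
      have : c = 0 := by
        by_contra h; rw [if_neg (Ne.symm h)] at hc; exact hc rfl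
      subst this
      funext i; simp [wtE]
    · exact Submodule.zero_mem _
  suffices ∀ b, coeff b (theta e v) ∈ wtSub (eV 1 N) K (wtE e b) from this b
  induction v using MvPolynomial.induction_on with
  | C k => simpa [theta] using hC k
  | add p q hp hq =>
    intro b
    have : theta e (p + q) = theta e p + theta e q := by simp [theta]
    rw [this, coeff_add]
    exact Submodule.add_mem _ (hp b) (hq b)
  | mul_X p w hp =>
    have : theta e (p * X w) = theta e p * theta e (X w) := by simp [theta]
    rw [this]
    refine hmul _ _ hp ?_
    intro b
    obtain ⟨⟨s, k⟩, rfl⟩ := e.surjective w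
    have : theta (K := K) e (X (e (s, k))) = ∑ j', C (X (0, j', k)) * X (e (s, j')) := by
      simp [theta, act_X, genM]
    rw [this, coeff_sum]
    apply Submodule.sum_mem
    intro j' _
    rw [C_mul_X_eq_monomial]
    intro c hc
    have hb : b = Finsupp.single (e (s, j')) 1 := by
      apply coeff_monomial_ne (c := (X (0, j', k) : MvPolynomial (Sg 1 N) K))
      intro h0; rw [h0] at hc; simp at hc
    subst hb
    rw [coeff_monomial, if_pos rfl, X] at hc
    rw [coeff_monomial_ne hc, wtE_single]
    exact wtE_single (eV 1 N) (toLex (0, k)) j'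

end Theta

section Idx
variable (m N : ℕ)

/-- the variable ordering -/
def ixS : Sg m N ≃ (Fin m ×ₗ (Fin (N+1) ×ₗ Fin (N+1)))ᵒᵈ where
  toFun v := OrderDual.toDual (toLex (v.1, toLex (v.2.1, v.2.2)))
  invFun p := ((ofLex (OrderDual.ofDual p)).1, (ofLex (ofLex (OrderDual.ofDual p)).2).1,
    (ofLex (ofLex (OrderDual.ofDual p)).2).2)
  left_inv p := rfl
  right_inv v := rfl

lemma ixS_le (v w : Sg m N) : ixS m N v ≤ ixS m N w ↔
    (w.1 < v.1 ∨ w.1 = v.1 ∧ (w.2.1 < v.2.1 ∨ w.2.1 = v.2.1 ∧ w.2.2 ≤ v.2.2)) := by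
  show toLex (w.1, toLex (w.2.1, w.2.2)) ≤ toLex (v.1, toLex (v.2.1, v.2.2)) ↔ _
  rw [Prod.Lex.toLex_le_toLex, Prod.Lex.toLex_le_toLex]

lemma mono_V : MonoIx (ixS m N) (eV m N) := by
  intro r s i j hrs hij
  rw [ixS_le]
  have : toLex ((ofLex r).1, (ofLex r).2) ≤ toLex ((ofLex s).1, (ofLex s).2) := hrs
  rw [Prod.Lex.toLex_le_toLex] at this
  simp only [eV, Equiv.coe_fn_mk]
  rcases this with h | ⟨h, h'⟩
  · exact Or.inl h
  · exact Or.inr ⟨h, (hij.lt_or_eq).imp id (fun h => ⟨h, h'⟩)⟩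

lemma mono_W : MonoIx (ixS m N) (eW m N) := by
  intro r s i j hrs hij
  rw [ixS_le]
  have : toLex ((ofLex r).1, (ofLex r).2) ≤ toLex ((ofLex s).1, (ofLex s).2) := hrs
  rw [Prod.Lex.toLex_le_toLex] at this
  simp only [eW, Equiv.coe_fn_mk]
  rcases this with h | ⟨h, h'⟩
  · exact Or.inl h
  · exact Or.inr ⟨h, (h'.lt_or_eq).imp id (fun h => ⟨h, hij⟩)⟩

end Idx

section Bound
variable {N : ℕ} (K : Type) [Field K]

/-- model module -/
noncomputable def Wm (mu : Fin (N+1) → ℕ) : Submodule K (MvPolynomial (Sg 1 N) K) :=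
  wtSub (eV 1 N) K mu ⊓ UInv (eV 1 N) K

lemma Wm_supp (mu : Fin (N+1) → ℕ) : SuppIn (Wm K mu) (Mon 1 N (∑ j, mu j) (fun _ => True)) := by
  intro f hf c hc
  rw [mem_Mon]
  refine ⟨?_, trivial⟩
  rw [← hf.1 c hc, wtE_sum]
  simp only [degL, Fintype.sum_prod_type]

lemma Wm_finrank (mu : Fin (N+1) → ℕ) : Module.finrank K (Wm K mu) ≤ cK mu := by
  classical
  rw [finrank_leads (ixS 1 N) (Wm_supp K mu)
    ((Mon 1 N (∑ j, mu j) (fun _ => True)).filter (· ∈ leads (ixS 1 N) (Wm K mu)))]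
  · apply Finset.card_le_card
    intro a ha
    obtain ⟨_, f, hf, hl⟩ := Finset.mem_filter.mp ha
    rw [mem_tabS]
    refine ⟨lead_Yam (ixS 1 N) (eV 1 N) (mono_V 1 N) f mu hf.1 ?_ a hl, hf.1 a hl.1⟩
    intro j
    exact hf.2 _ _ (Fin.castSucc_lt_succ) _
  · intro b
    simp only [Finset.mem_filter, and_iff_right_iff_imp]
    exact fun h => leads_subset _ (Wm_supp K mu) h

variable {K}
variable {σ ι Λ : Type} [Fintype σ] [DecidableEq σ] [Fintype ι] [LinearOrder ι]
  [LinearOrder Λ] [Finite Λ]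
variable (e : ι × Fin (N+1) ≃ σ)

lemma hw_mono {M M' : Submodule K (MvPolynomial σ K)} (h : M' ≤ M) (mu : Fin (N+1) → ℕ) :
    hw e M' mu ≤ hw e M mu :=
  inf_le_inf_right _ (inf_le_inf_right _ h)

theorem bound [Infinite K] (ix : σ ≃ Λ) (T : Finset (σ →₀ ℕ)) : ∀ (n : ℕ) (M : Submodule K (MvPolynomial σ K)),
    SuppIn M T → (∀ g, ∀ f ∈ M, act e g f ∈ M) → Module.finrank K M ≤ n →
    Module.finrank K M ≤ ∑ mu ∈ T.image (wtE e), Module.finrank K (hw e M mu) * cK mu := by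
  classical
  intro n
  induction n with
  | zero => intro M _ _ h; omega
  | succ n ih =>
  intro M hT hst hn
  have hfin := hT.finite
  by_cases hM : M = ⊥
  · subst hM; simp
  obtain ⟨f0, hf0, hf00⟩ := Submodule.exists_mem_ne_zero_of_ne_bot hM
  let B := T.filter (fun b => ∃ f ∈ M, coeff b f ≠ 0)
  have hB : ∀ b, b ∈ B ↔ ∃ f ∈ M, coeff b f ≠ 0 := by
    intro b
    simp only [B, Finset.mem_filter, and_iff_right_iff_imp]
    rintro ⟨f, hf, h⟩
    exact hT f hf b h
  obtain ⟨b1, hb1⟩ := MvPolynomial.ne_zero_iff.mp hf00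
  obtain ⟨b0, hb0, hmax⟩ := Finset.exists_max_image B (fun b => toLex (wtE e b)) ⟨b1, (hB _).2 ⟨f0, hf0, hb1⟩⟩
  obtain ⟨f1, hf1, hb0f⟩ := (hB b0).1 hb0
  set mu := wtE e b0 with hmu
  have hle : ∀ f ∈ M, ∀ b, coeff b f ≠ 0 → toLex (wtE e b) ≤ toLex mu :=
    fun f hf b hb => hmax b ((hB b).2 ⟨f, hf, hb⟩)
  have hmuT : mu ∈ T.image (wtE e) := Finset.mem_image_of_mem _ (hT f1 hf1 b0 hb0f)
  let Mm := M ⊓ wtSub e K mu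
  have hMm : Mm = hw e M mu := by
    apply le_antisymm _ inf_le_left
    rintro f ⟨hf, hfw⟩
    refine ⟨⟨hf, hfw⟩, ?_⟩
    intro i j hij t
    ext b
    by_cases hb : toLex (wtE e b) ≤ toLex mu
    · apply coeff_act_transv
      intro b' hb' k hk hh
      have := lex_of_rel hij hk hh
      rw [hfw b' hb'] at this
      exact absurd this (not_lt.mpr hb)
    · have h1 : coeff b (act e (transvection i j t) f) = 0 := by
        by_contra h; exact hb (hle _ (hst _ f hf) b h)
      have h2 : coeff b f = 0 := by
        by_contra h; exact hb (hle _ hf b h)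
      rw [h1, h2]
  have hMmT : SuppIn Mm T := hT.mono inf_le_left
  let L := T.filter (· ∈ leads ix Mm)
  have hL : ∀ b, b ∈ L ↔ b ∈ leads ix Mm := by
    intro b
    simp only [L, Finset.mem_filter, and_iff_right_iff_imp]
    exact fun h => leads_subset _ hMmT h
  have hLcard : Module.finrank K Mm = L.card := finrank_leads ix hMmT L hL
  have hLw : ∀ b ∈ L, wtE e b = mu := by
    intro b hb
    obtain ⟨f, hf, hl⟩ := (hL b).1 hb
    exact hf.2 b hl.1
  have hW : ∀ b ∈ L, ∀ v ∈ M, thetaC e b v ∈ Wm K mu := by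
    intro b hb v hv
    refine ⟨hLw b hb ▸ thetaC_wt e v b, ?_⟩
    intro i j hij t
    have h1 : act (eV 1 N) (transvection i j t) (thetaC e b v)
        = coeff b (MvPolynomial.map (act (eV 1 N) (transvection i j t) :
      MvPolynomial (Sg 1 N) K →+* MvPolynomial (Sg 1 N) K) (theta e v)) := by
      rw [coeff_map]; rfl
    have h2 : (transvection i j t)ᵀ.map (C : K → MvPolynomial (Sg 1 N) K) = transvection j i (C t) := by
      ext1 a b
      simp only [transvection, Matrix.map_apply, Matrix.transpose_apply, Matrix.add_apply, map_add,
        Matrix.one_apply, Matrix.single_apply, apply_ite (C : K → MvPolynomial (Sg 1 N) K), map_one, map_zero]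
      congr 1
      · simp [eq_comm]
      · simp [and_comm]
    rw [h1, theta_V, h2]
    apply coeff_act_transv
    intro b' hb' k hk hh
    have h3 := lex_of_rel hij hk hh.symm
    rw [hLw b hb] at h3
    refine absurd h3 (not_lt.mpr ?_)
    by_contra hcon
    apply hb'
    show thetaC e b' v = 0
    apply MvPolynomial.funext
    intro x
    rw [thetaC_eval, map_zero]
    by_contra h4
    exact hcon (hle _ (hst _ v hv) b' h4)
  let φ : M →ₗ[K] (L → Wm K mu) := LinearMap.pi (fun b =>
    ((thetaC e b.1).comp M.subtype).codRestrict (Wm K mu) (fun v => hW b.1 b.2 v.1 v.2))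
  let N' := (LinearMap.ker φ).map M.subtype
  have hN' : ∀ v, v ∈ N' ↔ v ∈ M ∧ ∀ b ∈ L, thetaC e b v = 0 := by
    intro v
    simp only [N', Submodule.mem_map, LinearMap.mem_ker]
    constructor
    · rintro ⟨⟨w, hw⟩, hk, rfl⟩
      refine ⟨hw, fun b hb => ?_⟩
      have := congrArg Subtype.val (congrFun hk ⟨b, hb⟩)
      exact this
    · rintro ⟨hv, h⟩
      refine ⟨⟨v, hv⟩, ?_, rfl⟩
      funext b
      apply Subtype.ext
      exact h b.1 b.2
  have hN'M : N' ≤ M := fun v hv => ((hN' v).1 hv).1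
  have hN'st : ∀ g, ∀ f ∈ N', act e g f ∈ N' := by
    intro g f hf
    rw [hN'] at hf ⊢
    refine ⟨hst g f hf.1, fun b hb => ?_⟩
    rw [thetaC_act, hf.2 b hb, map_zero]
  have hN'mu : N' ⊓ wtSub e K mu = ⊥ := by
    rw [eq_bot_iff]
    rintro v ⟨hv, hvw⟩
    by_contra hv0
    obtain ⟨b, hb⟩ := exists_lead ix v hv0
    have hbL : b ∈ L := (hL b).2 ⟨v, ⟨hN'M hv, hvw⟩, hb⟩
    have h5 := thetaC_eval e (fun w => (1 : Matrix (Fin (N+1)) (Fin (N+1)) K) w.2.1 w.2.2) v b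
    rw [((hN' v).1 hv).2 b hbL, map_zero] at h5
    have h6 : (Matrix.of fun i c => (1 : Matrix (Fin (N+1)) (Fin (N+1)) K) i c) = 1 := rfl
    rw [h6, act_one] at h5
    exact hb.1 h5.symm
  have hrn : Module.finrank K (LinearMap.range φ) + Module.finrank K (LinearMap.ker φ) = Module.finrank K M :=
    LinearMap.finrank_range_add_finrank_ker φ
  have hker : Module.finrank K N' = Module.finrank K (LinearMap.ker φ) :=
    (Submodule.equivMapOfInjective _ M.injective_subtype _).symm.finrank_eq
  have hWfin := (Wm_supp K mu).finite
  have hrange : Module.finrank K (LinearMap.range φ) ≤ Module.finrank K (hw e M mu) * cK mu := by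
    calc Module.finrank K (LinearMap.range φ) ≤ Module.finrank K (L → Wm K mu) := Submodule.finrank_le _
      _ = L.card * Module.finrank K (Wm K mu) := by
        rw [Module.finrank_pi_fintype]; simp
      _ ≤ L.card * cK mu := Nat.mul_le_mul_left _ (Wm_finrank K mu)
      _ = Module.finrank K (hw e M mu) * cK mu := by rw [← hMm, hLcard]
  have hN'T : SuppIn N' T := hT.mono hN'M
  have hlt : Module.finrank K N' < Module.finrank K M := by
    apply Submodule.finrank_lt_finrank_of_lt
    refine lt_of_le_of_ne hN'M ?_
    intro heq
    have h7 : wproj e mu f1 ∈ N' ⊓ wtSub e K mu :=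
      ⟨heq ▸ wproj_mem_of_diag e M (fun d f hf => hst _ f hf) f1 hf1 mu, wproj_mem e mu f1⟩
    rw [hN'mu, Submodule.mem_bot] at h7
    have h8 := congrArg (coeff b0) h7
    rw [coeff_wproj, if_pos rfl, coeff_zero] at h8
    exact hb0f h8
  have h9 := ih N' hN'T hN'st (by omega)
  have h10 : ∑ nu ∈ T.image (wtE e), Module.finrank K (hw e N' nu) * cK nu + Module.finrank K (hw e M mu) * cK mu
      ≤ ∑ nu ∈ T.image (wtE e), Module.finrank K (hw e M nu) * cK nu := by
    rw [← Finset.add_sum_erase _ _ hmuT, ← Finset.add_sum_erase _ _ hmuT]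
    have h11 : hw e N' mu = ⊥ := by rw [hw, hN'mu, bot_inf_eq]
    rw [h11, finrank_bot, zero_mul, zero_add, add_comm]
    apply Nat.add_le_add_left
    apply Finset.sum_le_sum
    intro nu _
    apply Nat.mul_le_mul_right
    have := (hT.mono (M' := hw e M nu) (fun f hf => hf.1.1)).finite
    exact Submodule.finrank_mono (hw_mono e hN'M nu)
  omega
end Bound

section TT
variable {N : ℕ} {K : Type} [Field K]
variable {σ ι Λ : Type} [Fintype σ] [DecidableEq σ] [Fintype ι] [LinearOrder ι]
  [LinearOrder Λ] [Finite Λ]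

theorem leads_hw [Infinite K] (ix : σ ≃ Λ) (e : ι × Fin (N+1) ≃ σ) (hix : MonoIx ix e)
    (M : Submodule K (MvPolynomial σ K)) (T S : Finset (σ →₀ ℕ)) (hT : SuppIn M T)
    (hst : ∀ g, ∀ f ∈ M, act e g f ∈ M) (hS : ∀ b, b ∈ S ↔ b ∈ leads ix M) (hBK : BK e S)
    (mu : Fin (N+1) → ℕ) (a : σ →₀ ℕ) :
    a ∈ leads ix (hw e M mu) ↔ a ∈ S ∧ Yam e a ∧ wtE e a = mu := by
  classical
  have hsub : ∀ mu a, a ∈ leads ix (hw e M mu) → a ∈ S ∧ Yam e a ∧ wtE e a = mu := by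
    rintro mu a ⟨f, hf, hl⟩
    refine ⟨(hS a).2 ⟨f, hf.1.1, hl⟩, lead_Yam ix e hix f mu hf.1.2 ?_ a hl, hf.1.2 a hl.1⟩
    intro j
    exact hf.2 _ _ (Fin.castSucc_lt_succ) _
  let A : (Fin (N+1) → ℕ) → Finset (σ →₀ ℕ) := fun mu => S.filter (fun a => Yam e a ∧ wtE e a = mu)
  let Lh : (Fin (N+1) → ℕ) → Finset (σ →₀ ℕ) := fun mu => (A mu).filter (· ∈ leads ix (hw e M mu))
  have hLh : ∀ mu b, b ∈ Lh mu ↔ b ∈ leads ix (hw e M mu) := by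
    intro mu b
    simp only [Lh, A, Finset.mem_filter, and_iff_right_iff_imp]
    exact fun h => hsub mu b h
  have hLA : ∀ mu, Lh mu ⊆ A mu := fun mu => Finset.filter_subset _ _
  have hfr : ∀ mu, Module.finrank K (hw e M mu) = (Lh mu).card := fun mu =>
    finrank_leads ix (hT.mono (M' := hw e M mu) (fun f hf => hf.1.1)) _ (hLh mu)
  have h1 : S.card ≤ ∑ mu ∈ T.image (wtE e), (Lh mu).card * cK mu := by
    rw [← finrank_leads ix hT S hS]
    refine (bound e ix T _ M hT hst le_rfl).trans (le_of_eq ?_)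
    exact Finset.sum_congr rfl (fun mu _ => by rw [hfr])
  have hST : S ⊆ T := fun b hb => leads_subset ix hT ((hS b).1 hb)
  have h2 : S.card = ∑ mu ∈ T.image (wtE e), (A mu).card * cK mu := by
    rw [card_BK e S hBK]
    rw [← Finset.sum_fiberwise_of_maps_to (t := T.image (wtE e)) (g := wtE e)]
    · apply Finset.sum_congr rfl
      intro nu _
      rw [Finset.filter_filter, Finset.card_eq_sum_ones, Finset.sum_mul]
      apply Finset.sum_congr rfl
      intro a ha
      rw [(Finset.mem_filter.mp ha).2.2, one_mul]
    · intro a ha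
      exact Finset.mem_image_of_mem _ (hST (Finset.mem_filter.mp ha).1)
  have h3 : ∀ mu ∈ T.image (wtE e), (Lh mu).card * cK mu = (A mu).card * cK mu := by
    apply (Finset.sum_eq_sum_iff_of_le ?_).1
    · apply le_antisymm
      · exact Finset.sum_le_sum fun mu _ => Nat.mul_le_mul_right _ (Finset.card_le_card (hLA mu))
      · rw [← h2]; exact h1
    · exact fun mu _ => Nat.mul_le_mul_right _ (Finset.card_le_card (hLA mu))
  refine ⟨hsub mu a, ?_⟩
  rintro ⟨haS, haY, haw⟩
  rw [← hLh]
  have hm : mu ∈ T.image (wtE e) := haw ▸ Finset.mem_image_of_mem _ (hST haS)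
  have hc : 0 < cK mu := cK_pos mu (haw ▸ Yam_dom e a haY)
  have h4 := Nat.eq_of_mul_eq_mul_right hc (h3 mu hm)
  rw [Finset.eq_of_subset_of_card_le (hLA mu) h4.ge]
  exact Finset.mem_filter.mpr ⟨haS, haY, haw⟩
end TT

section ActD
variable {σ ι : Type} [Fintype σ] [DecidableEq σ] [Fintype ι] [LinearOrder ι] {N : ℕ}
variable (e : ι × Fin (N+1) ≃ σ) {K : Type} [Field K]

lemma act_D_monomial {G : Type} [AddCommMonoid G] (D : (σ →₀ ℕ) →+ G)
    (hD : ∀ s j j', D (Finsupp.single (e (s, j)) 1) = D (Finsupp.single (e (s, j')) 1))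
    (g : Matrix (Fin (N+1)) (Fin (N+1)) K) (a : σ →₀ ℕ) :
    ∀ b, coeff b (act e g (monomial a 1)) ≠ 0 → D b = D a := by
  have hmul : ∀ (F G : MvPolynomial σ K) (x y : σ →₀ ℕ),
      (∀ b, coeff b F ≠ 0 → D b = D x) → (∀ b, coeff b G ≠ 0 → D b = D y) →
      (∀ b, coeff b (F * G) ≠ 0 → D b = D (x + y)) := by
    intro F G x y hF hG b hb
    obtain ⟨c1, c2, rfl, h1, h2⟩ := coeff_mul_ne hb
    rw [map_add, map_add, hF _ h1, hG _ h2]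
  have hone : ∀ b, coeff b (act e g (monomial 0 1)) ≠ 0 → D b = D 0 := by
    intro b hb
    have : (monomial (0 : σ →₀ ℕ) (1 : K)) = 1 := rfl
    rw [this, map_one] at hb
    rw [coeff_monomial_ne (m0 := 0) (c := (1:K)) hb]
  have hadd : ∀ x y : σ →₀ ℕ, (∀ b, coeff b (act e g (monomial x 1)) ≠ 0 → D b = D x) →
      (∀ b, coeff b (act e g (monomial y 1)) ≠ 0 → D b = D y) →
      (∀ b, coeff b (act e g (monomial (x + y) 1)) ≠ 0 → D b = D (x + y)) := by
    intro x y hx hy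
    have : (monomial (x + y) (1 : K)) = monomial x 1 * monomial y 1 := by
      rw [monomial_mul, one_mul]
    rw [this, map_mul]
    exact hmul _ _ _ _ hx hy
  induction a using Finsupp.induction_linear with
  | zero => exact hone
  | add x y hx hy => exact hadd x y hx hy
  | single v n =>
    induction n with
    | zero => rw [Finsupp.single_zero]; exact hone
    | succ n ih =>
      rw [Finsupp.single_add]
      refine hadd _ _ ih ?_
      intro b hb
      obtain ⟨⟨s, k⟩, rfl⟩ := e.surjective v
      have : (monomial (Finsupp.single (e (s, k)) 1) (1 : K)) = X (e (s, k)) := rfl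
      rw [this, act_X, coeff_sum] at hb
      obtain ⟨j', _, hj'⟩ := Finset.exists_ne_zero_of_sum_ne_zero hb
      rw [C_mul_X_eq_monomial] at hj'
      rw [coeff_monomial_ne hj', hD]

lemma act_D {G : Type} [AddCommMonoid G] (D : (σ →₀ ℕ) →+ G)
    (hD : ∀ s j j', D (Finsupp.single (e (s, j)) 1) = D (Finsupp.single (e (s, j')) 1))
    (g : Matrix (Fin (N+1)) (Fin (N+1)) K) (f : MvPolynomial σ K) (b : σ →₀ ℕ)
    (hb : coeff b (act e g f) ≠ 0) : ∃ a, coeff a f ≠ 0 ∧ D b = D a := by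
  rw [f.as_sum, map_sum, coeff_sum] at hb
  obtain ⟨a, ha, h⟩ := Finset.exists_ne_zero_of_sum_ne_zero hb
  refine ⟨a, by simpa using ha, ?_⟩
  have : monomial a (coeff a f) = coeff a f • monomial a (1 : K) := by
    rw [smul_monomial, smul_eq_mul, mul_one]
  rw [this, map_smul, coeff_smul] at h
  exact act_D_monomial e D hD g a b (right_ne_zero_of_mul h)

end ActD

section QQ
variable {m N : ℕ} (K : Type) [Field K]

/-- polynomials supported in `T` -/
def NS (T : Finset (Sg m N →₀ ℕ)) : Submodule K (MvPolynomial (Sg m N) K) where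
  carrier := {f | ∀ b, coeff b f ≠ 0 → b ∈ T}
  add_mem' := by
    intro f g hf hg b hb
    rcases coeff_add_ne hb with h | h
    · exact hf b h
    · exact hg b h
  zero_mem' := by intro b hb; simp at hb
  smul_mem' := by
    intro c f hf b hb
    rw [coeff_smul] at hb
    exact hf b (right_ne_zero_of_mul hb)

lemma NS_leads (T : Finset (Sg m N →₀ ℕ)) (b : Sg m N →₀ ℕ) :
    b ∈ T ↔ b ∈ leads (ixS m N) (NS K T) := by
  constructor
  · intro hb
    refine ⟨monomial b 1, ?_, ?_, ?_⟩
    · intro c hc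
      rw [coeff_monomial_ne hc]; exact hb
    · simp
    · intro c hc
      rw [coeff_monomial_ne hc]
  · rintro ⟨f, hf, hl⟩
    exact hf b hl.1

/-- multidegree as an additive map -/
def degLH (m N : ℕ) : (Sg m N →₀ ℕ) →+ (Fin m → ℕ) where
  toFun := degL
  map_zero' := by funext l; simp [degL]
  map_add' a b := by funext l; simp [degL, Finset.sum_add_distrib]

lemma degL_single (v : Sg m N) : degL (Finsupp.single v 1) = Pi.single v.1 1 := by
  classical
  funext l
  obtain ⟨l', i, j⟩ := v
  simp only [degL, Finsupp.single_apply, Prod.mk.injEq, Pi.single_apply]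
  by_cases h : l' = l
  · subst h; simp [Finset.sum_ite_eq, ite_and]
  · simp [h, Ne.symm h]

lemma degLH_V (s : Fin m ×ₗ Fin (N+1)) (j j' : Fin (N+1)) :
    degLH m N (Finsupp.single (eV m N (s, j)) 1) = degLH m N (Finsupp.single (eV m N (s, j')) 1) := by
  show degL _ = degL _
  rw [degL_single, degL_single]; rfl

lemma degLH_W (s : Fin m ×ₗ Fin (N+1)) (j j' : Fin (N+1)) :
    degLH m N (Finsupp.single (eW m N (s, j)) 1) = degLH m N (Finsupp.single (eW m N (s, j')) 1) := by
  show degL _ = degL _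
  rw [degL_single, degL_single]; rfl

/-- weight as an additive map -/
def wtH (m N : ℕ) : (Sg m N →₀ ℕ) →+ (Fin (N+1) → ℕ) where
  toFun := wtE (eV m N)
  map_zero' := by funext l; simp [wtE]
  map_add' a b := wtE_add _ a b

lemma wtH_W (s : Fin m ×ₗ Fin (N+1)) (j j' : Fin (N+1)) :
    wtH m N (Finsupp.single (eW m N (s, j)) 1) = wtH m N (Finsupp.single (eW m N (s, j')) 1) := by
  show wtE (eV m N) _ = wtE (eV m N) _
  have h : ∀ j, eW m N (s, j) = eV m N (toLex ((ofLex s).1, j), (ofLex s).2) := fun j => rfl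
  rw [h, h, wtE_single, wtE_single]

lemma act_comm {A : Type} [CommRing A] (g h : Matrix (Fin (N+1)) (Fin (N+1)) A) (f : MvPolynomial (Sg m N) A) :
    act (eV m N) g (act (eW m N) h f) = act (eW m N) h (act (eV m N) g f) := by
  have : (act (eV m N) g).comp (act (eW m N) h) = (act (eW m N) h).comp (act (eV m N) g) := by
    apply algHom_ext
    rintro ⟨l, i, j⟩
    have h1 := fun i j => act_X (eW m N) h (toLex (l, i)) j
    have h2 := fun i j => act_X (eV m N) g (toLex (l, j)) i
    simp only [eW_apply, eV_apply] at h1 h2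
    simp only [AlgHom.comp_apply, h1, h2, map_sum, map_mul, algHom_C, algebraMap_eq, Finset.mul_sum]
    rw [Finset.sum_comm]
    refine Finset.sum_congr rfl fun k _ => Finset.sum_congr rfl fun l _ => ?_
    ring
  exact DFunLike.congr_fun this f

lemma NS_stable_V (d : ℕ) (P : (Fin m → ℕ) → Prop) (g : Matrix (Fin (N+1)) (Fin (N+1)) K) :
    ∀ f ∈ NS K (Mon m N d P), act (eV m N) g f ∈ NS K (Mon m N d P) := by
  intro f hf b hb
  obtain ⟨a, ha, h⟩ := act_D (eV m N) (degLH m N) degLH_V g f b hb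
  have h' : degL b = degL a := h
  have := hf a ha
  rw [mem_Mon] at this ⊢
  rwa [h']

lemma NS_stable_W (d : ℕ) (P : (Fin m → ℕ) → Prop) (g : Matrix (Fin (N+1)) (Fin (N+1)) K) :
    ∀ f ∈ NS K (Mon m N d P), act (eW m N) g f ∈ NS K (Mon m N d P) := by
  intro f hf b hb
  obtain ⟨a, ha, h⟩ := act_D (eW m N) (degLH m N) degLH_W g f b hb
  have h' : degL b = degL a := h
  have := hf a ha
  rw [mem_Mon] at this ⊢
  rwa [h']

/-- joint highest weight vectors -/
noncomputable def QQ (m N d : ℕ) (P : (Fin m → ℕ) → Prop) (lam : Fin (N+1) → ℕ) :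
    Submodule K (MvPolynomial (Sg m N) K) :=
  hw (eW m N) (hw (eV m N) (NS K (Mon m N d P)) lam) lam

open Classical in
theorem finrank_QQ [Infinite K] (d : ℕ) (P : (Fin m → ℕ) → Prop) (lam : Fin (N+1) → ℕ) :
    Module.finrank K (QQ K m N d P lam) =
      ((MonV m N d P lam).filter (fun a => Yam (eW m N) a ∧ wtE (eW m N) a = lam)).card := by
  have hN0 : SuppIn (NS K (Mon m N d P)) (Mon m N d P) := fun f hf c hc => hf c hc
  have h1 := leads_hw (ixS m N) (eV m N) (mono_V m N) (NS K (Mon m N d P)) (Mon m N d P) (Mon m N d P)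
    hN0 (NS_stable_V K d P) (NS_leads K _) (BK_Mon d P) lam
  have hA : SuppIn (hw (eV m N) (NS K (Mon m N d P)) lam) (Mon m N d P) := hN0.mono (fun f hf => hf.1.1)
  have h2 := leads_hw (ixS m N) (eW m N) (mono_W m N) (hw (eV m N) (NS K (Mon m N d P)) lam)
    (Mon m N d P) (MonV m N d P lam) hA ?_ ?_ (BK_MonV d P lam) lam
  · apply finrank_leads (ixS m N) (hA.mono (M' := QQ K m N d P lam) (fun f hf => hf.1.1))
    intro b
    rw [QQ, h2, Finset.mem_filter]
  · rintro g f ⟨⟨hf1, hf2⟩, hf3⟩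
    refine ⟨⟨NS_stable_W K d P g f hf1, ?_⟩, ?_⟩
    · intro b hb
      obtain ⟨a, ha, h⟩ := act_D (eW m N) (wtH m N) wtH_W g f b hb
      have h' : wtE (eV m N) b = wtE (eV m N) a := h
      rw [h', hf2 a ha]
    · intro i j hij t
      rw [act_comm, hf3 i j hij t]
  · intro b
    rw [h1, mem_MonV]

theorem finrank_QQ_eq (L : Type) [Field L] [Infinite K] [Infinite L] (d : ℕ) (P : (Fin m → ℕ) → Prop)
    (lam : Fin (N+1) → ℕ) :
    Module.finrank K (QQ K m N d P lam) = Module.finrank L (QQ L m N d P lam) := by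
  rw [finrank_QQ, finrank_QQ]

end QQ

lemma pow_inj_of_inf {K : Type} [Field K] [Infinite K] {a b : ℕ} (h : ∀ t : K, t ≠ 0 → t ^ a = t ^ b) :
    a = b := by
  have : (Polynomial.X : Polynomial K) ^ (a + 1) = Polynomial.X ^ (b + 1) := by
    apply Polynomial.funext
    intro t
    by_cases ht : t = 0
    · simp [ht]
    · simp [pow_succ, h t ht]
  have h2 := congrArg Polynomial.natDegree this
  simpa using h2

lemma const_of_inv {K : Type} [Field K] [Infinite K] (P Q : Polynomial K)
    (h : ∀ t : K, t ≠ 0 → P.eval t⁻¹ = Q.eval t) (s : K) : P.eval s = P.eval 0 := by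
  have h1 : Polynomial.X * P.reverse = Polynomial.X * (Q * Polynomial.X ^ P.natDegree) := by
    apply Polynomial.funext
    intro t
    by_cases ht : t = 0
    · simp [ht]
    · have : Invertible (t⁻¹) := invertibleOfNonzero (inv_ne_zero ht)
      have h2 := Polynomial.eval₂_reverse_mul_pow (RingHom.id K) t⁻¹ P
      simp only [invOf_eq_inv, inv_inv, Polynomial.eval₂_id] at h2
      simp only [Polynomial.eval_mul, Polynomial.eval_X, Polynomial.eval_pow]
      rw [← h t ht, ← h2, mul_assoc (Polynomial.eval t _), ← mul_pow, inv_mul_cancel₀ ht, one_pow, mul_one]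
  have h3 := mul_left_cancel₀ Polynomial.X_ne_zero h1
  have h4 : Q.natDegree = 0 := by
    by_cases hQ : Q = 0
    · simp [hQ]
    have h5 := congrArg Polynomial.natDegree h3
    rw [Polynomial.natDegree_mul_X_pow _ hQ] at h5
    have := P.reverse_natDegree_le
    omega
  obtain ⟨q, hq⟩ := Polynomial.natDegree_eq_zero.mp h4
  have h6 : P = Polynomial.C q := by
    have : Polynomial.X * P = Polynomial.X * Polynomial.C q := by
      apply Polynomial.funext
      intro t
      by_cases ht : t = 0
      · simp [ht]
      · have := h t⁻¹ (inv_ne_zero ht)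
        rw [inv_inv, ← hq] at this
        simp at this
        simp only [Polynomial.eval_mul, Polynomial.eval_X, Polynomial.eval_C, this]
    exact mul_left_cancel₀ Polynomial.X_ne_zero this
  rw [h6]; simp

section LemD
variable {σ ι : Type} [Fintype σ] [DecidableEq σ] [Fintype ι] [LinearOrder ι] {N : ℕ}
variable (e : ι × Fin (N+1) ≃ σ) {K : Type} [Field K]

lemma act_poly (G : Matrix (Fin (N+1)) (Fin (N+1)) (Polynomial K)) (f : MvPolynomial σ K) (b : σ →₀ ℕ)
    (t : K) : Polynomial.eval t (coeff b (act e G (MvPolynomial.map Polynomial.C f)))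
      = coeff b (act e (G.map (Polynomial.eval t)) f) := by
  have h := act_map e (Polynomial.evalRingHom t) G (MvPolynomial.map Polynomial.C f)
  rw [MvPolynomial.map_map] at h
  have h1 : (Polynomial.evalRingHom t).comp Polynomial.C = RingHom.id K := by ext; simp
  rw [h1, MvPolynomial.map_id] at h
  have h2 := congrArg (coeff b) h
  rw [coeff_map] at h2
  exact h2

lemma act_diag_of_wt {k : ℕ} {f : MvPolynomial σ K} (hf : f ∈ wtSub e K (fun _ => k)) (D : Fin (N+1) → K) :
    act e (diagonal D) f = (∏ j, D j) ^ k • f := by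
  ext b
  rw [coeff_act_diagonal, coeff_smul, smul_eq_mul]
  by_cases hb : coeff b f = 0
  · rw [hb, mul_zero, mul_zero]
  · rw [hf b hb, Finset.prod_pow]

lemma mat_id (i j : Fin (N+1)) (hij : i ≠ j) (s t : K) (hst : s * t = 1) :
    transvection j i (-s) * diagonal (Function.update 1 i t) * transvection i j 1
      = (1 + single i i (t - 1) + single i j 1 - single j i 1 - single j j 1)
        * diagonal (Function.update 1 j t) := by
  have hd : ∀ i : Fin (N+1), diagonal (Function.update (1 : Fin (N+1) → K) i t) = 1 + single i i (t - 1) := by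
    intro i
    ext a b
    simp only [diagonal_apply, Matrix.add_apply, Matrix.one_apply, single_apply, Function.update_apply, Pi.one_apply]
    by_cases h1 : a = b
    · subst h1
      by_cases h2 : a = i
      · subst h2; simp
      · simp [h2, Ne.symm h2]
    · have : ¬ (i = a ∧ i = b) := fun h => h1 (h.1 ▸ h.2)
      simp [h1, this]
  rw [hd, hd, transvection, transvection]
  have z1 : ∀ (a b : Fin (N+1)) (x y : K), single a i x * single j b y = 0 := by
    intro a b x y; simp [hij]
  have z2 : ∀ (a b : Fin (N+1)) (x y : K), single a j x * single i b y = 0 := by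
    intro a b x y; simp [hij.symm]
  simp only [mul_add, add_mul, sub_mul, mul_one, one_mul, single_mul_single_same, z1, z2, add_zero, sub_zero]
  have hs : ∀ (a b : Fin (N+1)) (c : K), single a b c = c • single a b (1 : K) := by
    intro a b c; rw [smul_single, smul_eq_mul, mul_one]
  rw [hs i i, hs j i (-s), hs j i (-s * _), hs j j (-s), hs i j (t-1), hs j j (t-1), hs j j (-s * _)]
  match_scalars <;> first | ring1 | linear_combination (-1 : K) * hst | linear_combination hst

lemma lower_inv [Infinite K] {k : ℕ} {f : MvPolynomial σ K} (hf : f ∈ wtSub e K (fun _ => k))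
    (hU : f ∈ UInv e K) (i j : Fin (N+1)) (hij : i < j) (s : K) :
    act e (transvection j i s) f = f := by
  classical
  ext b
  let G1 : Matrix (Fin (N+1)) (Fin (N+1)) (Polynomial K) := transvection j i (-Polynomial.X)
  let G2 : Matrix (Fin (N+1)) (Fin (N+1)) (Polynomial K) :=
    1 + single i i (Polynomial.X - 1) + single i j 1 - single j i 1 - single j j 1
  have hG1 : ∀ t, G1.map (Polynomial.eval t) = transvection j i (-t) := by
    intro t
    ext a b
    simp only [G1, transvection, Matrix.map_apply, Matrix.add_apply, Polynomial.eval_add, Matrix.one_apply,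
      single_apply, apply_ite (Polynomial.eval t), Polynomial.eval_one, Polynomial.eval_zero, Polynomial.eval_neg,
      Polynomial.eval_X]
  have hG2 : ∀ t, G2.map (Polynomial.eval t) =
      (1 + single i i (t - 1) + single i j 1 - single j i 1 - single j j 1) := by
    intro t
    ext a b
    simp only [G2, Matrix.map_apply, Matrix.add_apply, Matrix.sub_apply, Polynomial.eval_add, Polynomial.eval_sub, Matrix.one_apply,
      single_apply, apply_ite (Polynomial.eval t), Polynomial.eval_one, Polynomial.eval_zero, Polynomial.eval_neg,
      Polynomial.eval_X]
  have key := const_of_inv (coeff b (act e G1 (MvPolynomial.map Polynomial.C f)))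
    (coeff b (act e G2 (MvPolynomial.map Polynomial.C f))) ?_ (-s)
  · rw [act_poly, act_poly, hG1, hG1, neg_neg, neg_zero, transvection_zero, act_one] at key
    exact key
  · intro t ht
    rw [act_poly, act_poly, hG1, hG2]
    have h1 := congrArg (fun g => act e g f) (mat_id i j hij.ne t⁻¹ t (inv_mul_cancel₀ ht))
    simp only [← act_act] at h1
    rw [hU i j hij 1, act_diag_of_wt e hf, act_diag_of_wt e hf, map_smul, map_smul,
      Finset.prod_update_of_mem (Finset.mem_univ _), Finset.prod_update_of_mem (Finset.mem_univ _)] at h1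
    simp only [Pi.one_apply, Finset.prod_const_one, mul_one] at h1
    rw [smul_right_injective _ (pow_ne_zero k ht) h1]

theorem act_det [Infinite K] {k : ℕ} {f : MvPolynomial σ K} (hf : f ∈ wtSub e K (fun _ => k))
    (hU : f ∈ UInv e K) (g : Matrix (Fin (N+1)) (Fin (N+1)) K) : act e g f = g.det ^ k • f := by
  apply Matrix.diagonal_transvection_induction (fun g => act e g f = g.det ^ k • f) g
  · intro D _
    rw [act_diag_of_wt e hf, det_diagonal]
  · rintro ⟨i, j, hij, c⟩
    show act e (transvection i j c) f = (transvection i j c).det ^ k • f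
    rw [det_transvection_of_ne _ _ hij, one_pow, one_smul]
    rcases lt_or_gt_of_ne hij with h | h
    · exact hU i j h c
    · exact lower_inv e hf hU j i h c
  · intro A B hA hB
    rw [← act_act, hB, map_smul, hA, smul_smul, det_mul, mul_pow, mul_comm]

lemma UInv_of_SL {f : MvPolynomial σ K} (h : ∀ g, g.det = 1 → act e g f = f) : f ∈ UInv e K :=
  fun i j hij t => h _ (det_transvection_of_ne _ _ hij.ne t)

lemma wt_of_SL [Infinite K] {f : MvPolynomial σ K} (h : ∀ g, g.det = 1 → act e g f = f) (b : σ →₀ ℕ)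
    (hb : coeff b f ≠ 0) (i j : Fin (N+1)) : wtE e b i = wtE e b j := by
  classical
  by_cases hij : i = j
  · rw [hij]
  apply pow_inj_of_inf (K := K)
  intro t ht
  have hp : ∀ w : Fin (N+1) → ℕ, ∏ l, (Function.update (Function.update (1 : Fin (N+1) → K) i t) j t⁻¹) l ^ w l
      = t ^ w i * (t⁻¹) ^ w j := by
    intro w
    rw [← Finset.mul_prod_erase _ _ (Finset.mem_univ i),
      ← Finset.mul_prod_erase _ _ (Finset.mem_erase.2 ⟨Ne.symm hij, Finset.mem_univ j⟩)]
    rw [Finset.prod_eq_one]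
    · simp [hij]
    · intro l hl
      simp only [Finset.mem_erase] at hl
      simp [hl.1, hl.2.1]
  have h1 := h (diagonal (Function.update (Function.update 1 i t) j t⁻¹)) (by
    rw [det_diagonal]
    have := hp (fun _ => 1)
    simp only [pow_one] at this
    rw [this, mul_inv_cancel₀ ht])
  have h2 := congrArg (coeff b) h1
  rw [coeff_act_diagonal, hp] at h2
  have h3 := mul_right_cancel₀ hb (h2.trans (one_mul _).symm)
  rw [inv_pow] at h3
  exact (mul_inv_eq_one₀ (pow_ne_zero _ ht)).1 h3

lemma wt_of_diag [Infinite K] {k : ℕ} {f : MvPolynomial σ K}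
    (h : ∀ D : Fin (N+1) → K, (∏ j, D j) ≠ 0 → act e (diagonal D) f = (∏ j, D j) ^ k • f) :
    f ∈ wtSub e K (fun _ => k) := by
  classical
  intro b hb
  funext i
  apply pow_inj_of_inf (K := K)
  intro t ht
  have hp : ∀ w : Fin (N+1) → ℕ, ∏ l, (Function.update (1 : Fin (N+1) → K) i t) l ^ w l = t ^ w i := by
    intro w
    rw [← Finset.mul_prod_erase _ _ (Finset.mem_univ i), Finset.prod_eq_one]
    · simp
    · intro l hl
      simp only [Finset.mem_erase] at hl
      simp [hl.1]
  have hp1 := hp (fun _ => 1)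
  simp only [pow_one] at hp1
  have h1 := h (Function.update 1 i t) (by rw [hp1]; exact ht)
  have h2 := congrArg (coeff b) h1
  rw [coeff_act_diagonal, hp, hp1, coeff_smul, smul_eq_mul] at h2
  exact mul_right_cancel₀ hb h2
end LemD

section Ev
variable {K : Type} [Field K] {m N : ℕ}

lemma matCoords_surj (x : Sg m N → K) : ∃ Y : Fin m → Matrix (Fin (N+1)) (Fin (N+1)) K, matCoords Y = x :=
  ⟨fun l => Matrix.of fun i j => x (l, i, j), rfl⟩

lemma funext_mat [Infinite K] {f g : MvPolynomial (Sg m N) K}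
    (h : ∀ Y : Fin m → Matrix (Fin (N+1)) (Fin (N+1)) K, eval (matCoords Y) f = eval (matCoords Y) g) : f = g := by
  apply MvPolynomial.funext
  intro x
  obtain ⟨Y, rfl⟩ := matCoords_surj x
  exact h Y

lemma eval_actW (g : Matrix (Fin (N+1)) (Fin (N+1)) K) (f : MvPolynomial (Sg m N) K)
    (Y : Fin m → Matrix (Fin (N+1)) (Fin (N+1)) K) :
    eval (matCoords Y) (act (eW m N) g f) = eval (matCoords fun l => Y l * g) f := by
  rw [act, MvPolynomial.eval, MvPolynomial.eval]
  change (eval (matCoords Y)) (aeval _ f) = eval _ f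
  induction f using MvPolynomial.induction_on with
  | C a => simp
  | add p q hp hq => simp only [map_add, hp, hq]
  | mul_X p v hp =>
    rw [map_mul, map_mul, hp, map_mul, aeval_X]
    congr 1
    simp [matCoords, Matrix.mul_apply, mul_comm]

lemma eval_actV (g : Matrix (Fin (N+1)) (Fin (N+1)) K) (f : MvPolynomial (Sg m N) K)
    (Y : Fin m → Matrix (Fin (N+1)) (Fin (N+1)) K) :
    eval (matCoords Y) (act (eV m N) g f) = eval (matCoords fun l => gᵀ * Y l) f := by
  rw [act, MvPolynomial.eval, MvPolynomial.eval]
  change (eval (matCoords Y)) (aeval _ f) = eval _ f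
  induction f using MvPolynomial.induction_on with
  | C a => simp
  | add p q hp hq => simp only [map_add, hp, hq]
  | mul_X p v hp =>
    rw [map_mul, map_mul, hp, map_mul, aeval_X]
    congr 1
    simp [matCoords, Matrix.mul_apply, mul_comm]

lemma mem_semi (f : MvPolynomial (Sg m N) K) : f ∈ matrixSemiInvariants K (N+1) m ↔
    ∀ (A B : SpecialLinearGroup (Fin (N+1)) K) (Y : Fin m → Matrix (Fin (N+1)) (Fin (N+1)) K),
      eval (matCoords fun i => A.val * Y i * (B⁻¹).val) f = eval (matCoords Y) f := by
  simp only [matrixSemiInvariants, Algebra.mem_iInf, AlgHom.mem_equalizer]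
  rfl

lemma mem_inv (f : MvPolynomial (Sg m N) K) : f ∈ matrixInvariants K (N+1) m ↔
    ∀ (A : GeneralLinearGroup (Fin (N+1)) K) (Y : Fin m → Matrix (Fin (N+1)) (Fin (N+1)) K),
      eval (matCoords fun i => A.val * Y i * (A⁻¹).val) f = eval (matCoords Y) f := by
  simp only [matrixInvariants, Algebra.mem_iInf, AlgHom.mem_equalizer]
  rfl

lemma mem_semi' [Infinite K] (f : MvPolynomial (Sg m N) K) : f ∈ matrixSemiInvariants K (N+1) m ↔
    (∀ g, g.det = 1 → act (eV m N) g f = f) ∧ (∀ g, g.det = 1 → act (eW m N) g f = f) := by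
  rw [mem_semi]
  constructor
  · intro h
    constructor
    · intro g hg
      apply funext_mat
      intro Y
      rw [eval_actV]
      have := h ⟨gᵀ, by rw [det_transpose, hg]⟩ 1 Y
      simpa using this
    · intro g hg
      apply funext_mat
      intro Y
      rw [eval_actW]
      obtain ⟨G, rfl⟩ : ∃ G : Matrix.SpecialLinearGroup (Fin (N+1)) K, G.val = g := ⟨⟨g, hg⟩, rfl⟩
      have := h 1 G⁻¹ Y
      rw [inv_inv] at this
      simpa using this
  · rintro ⟨h1, h2⟩ A B Y
    have e1 := h1 (A.val)ᵀ (by rw [det_transpose]; exact A.2)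
    have e2 := h2 (B⁻¹).val (B⁻¹).2
    conv_rhs => rw [← e1, ← e2]
    rw [act_comm] 
    rw [e1]
    conv_rhs => rw [← e1, eval_actW, eval_actV]
    simp [Matrix.mul_assoc]

lemma mem_hom (d : ℕ) (f : MvPolynomial (Sg m N) K) : f ∈ homogeneousSubmodule (Sg m N) K d ↔
    ∀ b, coeff b f ≠ 0 → ∑ l, degL b l = d := by
  rw [mem_homogeneousSubmodule]
  have : ∀ b : Sg m N →₀ ℕ, Finsupp.weight 1 b = ∑ l, degL b l := by
    intro b
    rw [Finsupp.weight_apply, Finsupp.sum_fintype _ _ (by simp)]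
    simp only [degL, Fintype.sum_prod_type, Pi.one_apply, smul_eq_mul, mul_one]
  constructor
  · intro h b hb
    rw [← this]; exact h hb
  · intro h b hb
    rw [this]; exact h b hb

lemma sum_wtE {ι : Type} [Fintype ι] [LinearOrder ι] (e : ι × Fin (N+1) ≃ Sg m N) (b : Sg m N →₀ ℕ) :
    ∑ j, wtE e b j = ∑ l, degL b l := by
  rw [wtE_sum]
  simp only [degL, Fintype.sum_prod_type]

lemma semi_eq [Infinite K] (k : ℕ) :
    Subalgebra.toSubmodule (matrixSemiInvariants K (N+1) m) ⊓ homogeneousSubmodule (Sg m N) K ((N+1)*k)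
      = QQ K m N ((N+1)*k) (fun _ => True) (fun _ => k) := by
  ext f
  rw [Submodule.mem_inf, Subalgebra.mem_toSubmodule, mem_semi', mem_hom]
  constructor
  · rintro ⟨⟨h1, h2⟩, h3⟩
    refine ⟨⟨⟨⟨fun b hb => mem_Mon.2 ⟨h3 b hb, trivial⟩, ?_⟩, UInv_of_SL _ h1⟩, ?_⟩, UInv_of_SL _ h2⟩
    · intro b hb
      funext j
      have h4 := sum_wtE (eV m N) b
      rw [h3 b hb, Finset.sum_congr rfl (fun i _ => wt_of_SL _ h1 b hb i j)] at h4
      simpa using h4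
    · intro b hb
      funext j
      have h4 := sum_wtE (eW m N) b
      rw [h3 b hb, Finset.sum_congr rfl (fun i _ => wt_of_SL _ h2 b hb i j)] at h4
      simpa using h4
  · rintro ⟨⟨⟨⟨h1, h2⟩, h3⟩, h4⟩, h5⟩
    refine ⟨⟨?_, ?_⟩, fun b hb => (mem_Mon.1 (h1 b hb)).1⟩
    · intro g hg
      rw [act_det _ h2 h3, hg, one_pow, one_smul]
    · intro g hg
      rw [act_det _ h4 h5, hg, one_pow, one_smul]

lemma semi_bot [Infinite K] (d : ℕ) (hd : ¬ (N+1) ∣ d) :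
    Subalgebra.toSubmodule (matrixSemiInvariants K (N+1) m) ⊓ homogeneousSubmodule (Sg m N) K d = ⊥ := by
  rw [eq_bot_iff]
  intro f
  rw [Submodule.mem_inf, Subalgebra.mem_toSubmodule, mem_semi', mem_hom]
  rintro ⟨⟨h1, h2⟩, h3⟩
  rw [Submodule.mem_bot]
  ext b
  rw [coeff_zero]
  by_contra hb
  have h4 := sum_wtE (eV m N) b
  rw [h3 b hb, Finset.sum_congr rfl (fun i _ => wt_of_SL _ h1 b hb i 0)] at h4
  apply hd
  simp at h4
  exact ⟨_, h4.symm⟩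

theorem semi_finrank (K L : Type) [Field K] [Field L] [Infinite K] [Infinite L] (m N d : ℕ) :
    Module.finrank K ↥(Subalgebra.toSubmodule (matrixSemiInvariants K (N+1) m) ⊓
          homogeneousSubmodule (Fin m × Fin (N+1) × Fin (N+1)) K d)
        = Module.finrank L ↥(Subalgebra.toSubmodule (matrixSemiInvariants L (N+1) m) ⊓
          homogeneousSubmodule (Fin m × Fin (N+1) × Fin (N+1)) L d) := by
  by_cases h : (N+1) ∣ d
  · obtain ⟨k, rfl⟩ := h
    rw [semi_eq, semi_eq]
    exact finrank_QQ_eq K L _ _ _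
  · rw [semi_bot d h, semi_bot d h, finrank_bot, finrank_bot]
end Ev

section Scale
variable {σ τ : Type} [Fintype σ] [DecidableEq σ] {K : Type} [Field K]

lemma eval_aeval' (F : σ → MvPolynomial τ K) (y : τ → K) (f : MvPolynomial σ K) :
    eval y (aeval F f) = eval (fun v => eval y (F v)) f := by
  induction f using MvPolynomial.induction_on with
  | C a => simp
  | add p q hp hq => simp only [map_add, hp, hq]
  | mul_X p v hp => rw [map_mul, map_mul, hp, map_mul, aeval_X, eval_X]

lemma coeff_scale (s : σ → K) (f : MvPolynomial σ K) (b : σ →₀ ℕ) :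
    coeff b (aeval (fun v => C (s v) * X v : σ → MvPolynomial σ K) f) = (∏ v, s v ^ b v) * coeff b f := by
  classical
  induction f using MvPolynomial.induction_on' with
  | monomial u a =>
    have : aeval (fun v => C (s v) * X v : σ → MvPolynomial σ K) (monomial u a)
        = monomial u (a * ∏ v, s v ^ u v) := by
      rw [aeval_monomial, monomial_eq, Finsupp.prod_fintype _ _ (by simp), Finsupp.prod_fintype _ _ (by simp)]
      simp only [mul_pow, Finset.prod_mul_distrib, algebraMap_eq, map_mul, map_prod, map_pow]
      ring
    rw [this, coeff_monomial, coeff_monomial]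
    split_ifs with h
    · subst h; ring
    · simp
  | add p q hp hq => rw [map_add, coeff_add, coeff_add, hp, hq, mul_add]

lemma scale_supp [Infinite K] (w : σ → ℕ) (c : ℕ) (f : MvPolynomial σ K)
    (h : ∀ t : K, t ≠ 0 → ∀ x, eval (fun v => t ^ w v * x v) f = t ^ c * eval x f) (b : σ →₀ ℕ)
    (hb : coeff b f ≠ 0) : ∑ v, w v * b v = c := by
  apply pow_inj_of_inf (K := K)
  intro t ht
  have h1 : aeval (fun v => C (t ^ w v) * X v : σ → MvPolynomial σ K) f = t ^ c • f := by
    apply MvPolynomial.funext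
    intro x
    rw [eval_aeval', smul_eval, ← h t ht x]
    simp
  have h2 := congrArg (coeff b) h1
  rw [coeff_scale, coeff_smul, smul_eq_mul] at h2
  have h3 := mul_right_cancel₀ hb h2
  rw [← h3, ← Finset.prod_pow_eq_pow_sum]
  simp only [pow_mul]

lemma scale_eval (w : σ → ℕ) (c : ℕ) (f : MvPolynomial σ K)
    (h : ∀ b, coeff b f ≠ 0 → ∑ v, w v * b v = c) (t : K) (x : σ → K) :
    eval (fun v => t ^ w v * x v) f = t ^ c * eval x f := by
  have h1 : aeval (fun v => C (t ^ w v) * X v : σ → MvPolynomial σ K) f = t ^ c • f := by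
    ext b
    rw [coeff_scale, coeff_smul, smul_eq_mul]
    by_cases hb : coeff b f = 0
    · rw [hb, mul_zero, mul_zero]
    · rw [← h b hb, ← Finset.prod_pow_eq_pow_sum]
      simp only [pow_mul]
  have h2 := congrArg (eval x) h1
  rw [eval_aeval', smul_eval] at h2
  rw [← h2]
  simp
end Scale

section SS
variable {K : Type} [Field K] {m N : ℕ}

/-- extend a tuple by one matrix -/
def snocM {R : Type} (Y : Fin m → Matrix (Fin (N+1)) (Fin (N+1)) R) (Z : Matrix (Fin (N+1)) (Fin (N+1)) R) :
    Fin (m+1) → Matrix (Fin (N+1)) (Fin (N+1)) R :=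
  Fin.lastCases (motive := fun _ => Matrix (Fin (N+1)) (Fin (N+1)) R) Z Y

@[simp] lemma snocM_last {R : Type} (Y : Fin m → Matrix (Fin (N+1)) (Fin (N+1)) R) (Z) :
    snocM Y Z (Fin.last m) = Z := by simp [snocM]

@[simp] lemma snocM_castSucc {R : Type} (Y : Fin m → Matrix (Fin (N+1)) (Fin (N+1)) R) (Z) (l : Fin m) :
    snocM Y Z l.castSucc = Y l := by simp [snocM]

lemma snocM_ext {R : Type} {Y Y' : Fin (m+1) → Matrix (Fin (N+1)) (Fin (N+1)) R}
    (h1 : Y (Fin.last m) = Y' (Fin.last m)) (h2 : ∀ l : Fin m, Y l.castSucc = Y' l.castSucc) : Y = Y' := by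
  funext l
  induction l using Fin.lastCases with
  | last => exact h1
  | cast l => exact h2 l

/-- generic matrices -/
noncomputable def genX (K : Type) [Field K] (m N : ℕ) (l : Fin m) :
    Matrix (Fin (N+1)) (Fin (N+1)) (MvPolynomial (Sg m N) K) := Matrix.of fun i j => X (l, i, j)

/-- specialise the last matrix to the identity -/
noncomputable def phiS : MvPolynomial (Sg (m+1) N) K →ₐ[K] MvPolynomial (Sg m N) K :=
  aeval (fun v => snocM (genX K m N) 1 v.1 v.2.1 v.2.2)

/-- substitute `X_l adj Y` -/
noncomputable def psiS : MvPolynomial (Sg m N) K →ₐ[K] MvPolynomial (Sg (m+1) N) K :=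
  aeval (fun v => (genX K (m+1) N v.1.castSucc * (genX K (m+1) N (Fin.last m)).adjugate) v.2.1 v.2.2)

lemma genX_map (l : Fin m) (Y : Fin m → Matrix (Fin (N+1)) (Fin (N+1)) K) :
    (genX K m N l).map (eval (matCoords Y)) = Y l := by
  ext i j; simp [genX, matCoords]

lemma eval_phiS (Y : Fin m → Matrix (Fin (N+1)) (Fin (N+1)) K) (f : MvPolynomial (Sg (m+1) N) K) :
    eval (matCoords Y) (phiS f) = eval (matCoords (snocM Y 1)) f := by
  rw [phiS, eval_aeval']
  congr 2
  funext ⟨l, i, j⟩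
  induction l using Fin.lastCases with
  | last =>
    simp only [snocM_last, matCoords, Matrix.one_apply]
    split_ifs <;> simp
  | cast l => simp [matCoords, genX]

lemma eval_psiS (Y : Fin (m+1) → Matrix (Fin (N+1)) (Fin (N+1)) K) (f : MvPolynomial (Sg m N) K) :
    eval (matCoords Y) (psiS f)
      = eval (matCoords (fun l : Fin m => Y l.castSucc * (Y (Fin.last m)).adjugate)) f := by
  rw [psiS, eval_aeval']
  congr 2
  funext ⟨l, i, j⟩
  have h : ((genX K (m+1) N l.castSucc * (genX K (m+1) N (Fin.last m)).adjugate).map (eval (matCoords Y)))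
      = Y l.castSucc * (Y (Fin.last m)).adjugate := by
    rw [Matrix.map_mul, genX_map]
    have := RingHom.map_adjugate (eval (matCoords Y)) (genX K (m+1) N (Fin.last m))
    simp only [RingHom.mapMatrix_apply] at this
    rw [this, genX_map]
  exact congrFun (congrFun h i) j

lemma hom_scale (d : ℕ) {g : MvPolynomial (Sg m N) K} (hg : g ∈ homogeneousSubmodule (Sg m N) K d) (t : K)
    (Y : Fin m → Matrix (Fin (N+1)) (Fin (N+1)) K) :
    eval (matCoords (fun l => t • Y l)) g = t ^ d * eval (matCoords Y) g := by
  rw [mem_hom] at hg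
  rw [← scale_eval (fun _ => 1) d g ?_ t (matCoords Y)]
  · congr 2
    funext v; simp [matCoords]
  · intro b hb
    rw [← hg b hb]
    simp only [degL, Fintype.sum_prod_type, one_mul]

lemma psi_W [Infinite K] (d : ℕ) {g : MvPolynomial (Sg m N) K} (hg : g ∈ homogeneousSubmodule (Sg m N) K d)
    (h : Matrix (Fin (N+1)) (Fin (N+1)) K) : act (eW (m+1) N) h (psiS g) = h.det ^ d • psiS g := by
  apply funext_mat
  intro Y
  rw [eval_actW, eval_psiS, smul_eval, eval_psiS, ← hom_scale d hg]
  congr 3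
  funext l
  rw [adjugate_mul_distrib, Matrix.mul_assoc, ← Matrix.mul_assoc h, mul_adjugate]
  simp

lemma psi_V [Infinite K] (d : ℕ) {g : MvPolynomial (Sg m N) K} (hg : g ∈ homogeneousSubmodule (Sg m N) K d)
    (hgi : g ∈ matrixInvariants K (N+1) m)
    (h : Matrix (Fin (N+1)) (Fin (N+1)) K) (hh : h.det ≠ 0) :
    act (eV (m+1) N) h (psiS g) = h.det ^ d • psiS g := by
  apply funext_mat
  intro Y
  rw [mem_inv] at hgi
  let A : GL (Fin (N+1)) K := GeneralLinearGroup.mkOfDetNeZero hᵀ (by rwa [det_transpose])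
  have hA : A.val = hᵀ := rfl
  have hadj : hᵀ.adjugate = h.det • (A⁻¹).val := by
    have h1 : hᵀ.adjugate * A.val = h.det • 1 := by rw [hA, adjugate_mul, det_transpose]
    calc hᵀ.adjugate = hᵀ.adjugate * A.val * (A⁻¹).val := by
          rw [Matrix.mul_assoc, ← Units.val_mul, mul_inv_cancel]; simp
      _ = _ := by rw [h1]; simp
  rw [eval_actV, eval_psiS, smul_eval, eval_psiS, ← hgi A (fun l => Y l.castSucc * (Y (Fin.last m)).adjugate), ← hom_scale d hg]
  congr 3
  funext l
  rw [adjugate_mul_distrib, hadj, hA]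
  simp [Matrix.mul_assoc]

lemma sum_degL_last (b : Sg (m+1) N →₀ ℕ) (u v : ℕ) :
    ∑ w : Sg (m+1) N, (if w.1 = Fin.last m then u else v) * b w
      = v * ∑ l : Fin m, degL b l.castSucc + u * degL b (Fin.last m) := by
  rw [Fintype.sum_prod_type, Fin.sum_univ_castSucc]
  simp only [degL, Fintype.sum_prod_type, Finset.mul_sum, (Fin.castSucc_lt_last _).ne, if_false, if_true]

lemma phi_mem [Infinite K] (d : ℕ) {f : MvPolynomial (Sg (m+1) N) K}
    (hf : f ∈ QQ K (m+1) N ((N+1)*d) (fun δ => δ (Fin.last m) = N*d) (fun _ => d)) :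
    phiS f ∈ Subalgebra.toSubmodule (matrixInvariants K (N+1) m) ⊓ homogeneousSubmodule (Sg m N) K d := by
  obtain ⟨⟨⟨⟨h1, h2⟩, h3⟩, h4⟩, h5⟩ := hf
  rw [Submodule.mem_inf, Subalgebra.mem_toSubmodule, mem_inv, mem_hom]
  constructor
  · intro A Y
    rw [eval_phiS, eval_phiS]
    have e1 : act (eV (m+1) N) (A.val)ᵀ (act (eW (m+1) N) (A⁻¹).val f) = f := by
      rw [act_det _ h4 h5, map_smul, act_det _ h2 h3, smul_smul, det_transpose, ← mul_pow, ← det_mul,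
        ← Units.val_mul, inv_mul_cancel]
      simp
    conv_rhs => rw [← e1, eval_actV, eval_actW]
    congr 2
    apply congrArg
    apply snocM_ext
    · simp only [snocM_last, transpose_transpose, mul_one]
      rw [← Units.val_mul, mul_inv_cancel]; simp
    · intro l
      simp
  · have key : ∀ b, coeff b (phiS f) ≠ 0 → ∑ v, (1 : ℕ) * b v = d := by
      intro b hb
      apply scale_supp (fun _ => 1) d (phiS f) _ b hb
      intro t ht x
      obtain ⟨Y, rfl⟩ := matCoords_surj x
      have e1 : (fun v => t ^ 1 * matCoords Y v) = matCoords (fun l => t • Y l) := by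
        funext v; simp [matCoords]
      rw [e1, eval_phiS, eval_phiS]
      rw [← scale_eval (fun v => if v.1 = Fin.last m then 0 else 1) d f ?_ t]
      · congr 2
        funext ⟨l, i, j⟩
        induction l using Fin.lastCases with
        | last => simp [matCoords]
        | cast l => simp [matCoords, (Fin.castSucc_lt_last _).ne]
      · intro b hb
        rw [sum_degL_last]
        have := mem_Mon.1 (h1 b hb)
        rw [Fin.sum_univ_castSucc, this.2] at this
        have := this.1
        rw [add_mul] at this
        omega
    intro b hb
    rw [← key b hb]
    simp only [degL, Fintype.sum_prod_type, one_mul]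

lemma psi_mem [Infinite K] (d : ℕ) {g : MvPolynomial (Sg m N) K}
    (hg : g ∈ Subalgebra.toSubmodule (matrixInvariants K (N+1) m) ⊓ homogeneousSubmodule (Sg m N) K d) :
    psiS g ∈ QQ K (m+1) N ((N+1)*d) (fun δ => δ (Fin.last m) = N*d) (fun _ => d) := by
  rw [Submodule.mem_inf] at hg
  obtain ⟨hgi, hg⟩ := hg
  rw [Subalgebra.mem_toSubmodule] at hgi
  have hV : psiS g ∈ wtSub (eV (m+1) N) K (fun _ => d) := by
    apply wt_of_diag
    intro D hD
    rw [psi_V d hg hgi _ (by rwa [det_diagonal]), det_diagonal]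
  have hW : psiS g ∈ wtSub (eW (m+1) N) K (fun _ => d) := by
    apply wt_of_diag
    intro D hD
    rw [psi_W d hg, det_diagonal]
  refine ⟨⟨⟨⟨?_, hV⟩, UInv_of_SL _ ?_⟩, hW⟩, UInv_of_SL _ ?_⟩
  · intro b hb
    rw [mem_Mon]
    constructor
    · rw [← sum_wtE (eV (m+1) N), hV b hb]; simp
    · have := scale_supp (fun v : Sg (m+1) N => if v.1 = Fin.last m then 1 else 0) (N * d) (psiS g) ?_ b hb
      · rw [sum_degL_last] at this
        simpa using this
      · intro t ht x
        obtain ⟨Y, rfl⟩ := matCoords_surj x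
        have e1 : (fun v : Sg (m+1) N => t ^ (if v.1 = Fin.last m then 1 else 0) * matCoords Y v)
            = matCoords (snocM (fun l => Y l.castSucc) (t • Y (Fin.last m))) := by
          funext ⟨l, i, j⟩
          induction l using Fin.lastCases with
          | last => simp [matCoords]
          | cast l => simp [matCoords, (Fin.castSucc_lt_last _).ne]
        rw [e1, eval_psiS, eval_psiS, pow_mul, ← hom_scale d hg]
        congr 3
        funext l
        simp [adjugate_smul]
  · intro h hh
    rw [psi_V d hg hgi _ (by rw [hh]; exact one_ne_zero), hh, one_pow, one_smul]
  · intro h hh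
    rw [psi_W d hg, hh, one_pow, one_smul]

lemma phi_psi [Infinite K] (g : MvPolynomial (Sg m N) K) : phiS (psiS g) = g := by
  apply funext_mat
  intro Y
  rw [eval_phiS, eval_psiS]
  simp

lemma phi_inj [Infinite K] (d : ℕ) {f : MvPolynomial (Sg (m+1) N) K}
    (hf : f ∈ QQ K (m+1) N ((N+1)*d) (fun δ => δ (Fin.last m) = N*d) (fun _ => d))
    (h0 : phiS f = 0) : f = 0 := by
  obtain ⟨⟨⟨⟨h1, h2⟩, h3⟩, h4⟩, h5⟩ := hf
  have hdet : ∀ Y, eval (matCoords Y) (genX K (m+1) N (Fin.last m)).det = (Y (Fin.last m)).det := by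
    intro Y
    rw [RingHom.map_det, RingHom.mapMatrix_apply, genX_map]
  have h6 : (genX K (m+1) N (Fin.last m)).det * f = 0 := by
    apply funext_mat
    intro Y
    rw [map_mul, hdet, map_zero]
    by_cases hY : (Y (Fin.last m)).det = 0
    · rw [hY, zero_mul]
    · have hu : IsUnit (Y (Fin.last m)).det := isUnit_iff_ne_zero.2 hY
      have e1 : Y = fun l => (snocM (fun l : Fin m => Y l.castSucc * (Y (Fin.last m))⁻¹) 1 l) * Y (Fin.last m) := by
        apply snocM_ext
        · simp
        · intro l
          simp [Matrix.mul_assoc, Matrix.nonsing_inv_mul _ hu]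
      have e2 : eval (matCoords Y) f = 0 := by
        conv_lhs => rw [e1]
        rw [← eval_actW, act_det _ h4 h5, smul_eval, ← eval_phiS, h0, map_zero, mul_zero]
      rw [e2, mul_zero]
  rcases mul_eq_zero.1 h6 with h | h
  · have := hdet (fun _ => 1)
    rw [h] at this
    simp at this
  · exact h

theorem inv_finrank_QQ [Infinite K] (d : ℕ) :
    Module.finrank K ↥(Subalgebra.toSubmodule (matrixInvariants K (N+1) m) ⊓
          homogeneousSubmodule (Sg m N) K d)
      = Module.finrank K (QQ K (m+1) N ((N+1)*d) (fun δ => δ (Fin.last m) = N*d) (fun _ => d)) := by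
  symm
  let φ := ((phiS (K := K) (m := m) (N := N)).toLinearMap.domRestrict
    (QQ K (m+1) N ((N+1)*d) (fun δ => δ (Fin.last m) = N*d) (fun _ => d))).codRestrict
    (Subalgebra.toSubmodule (matrixInvariants K (N+1) m) ⊓ homogeneousSubmodule (Sg m N) K d)
    (fun f => phi_mem d f.2)
  apply LinearEquiv.finrank_eq (LinearEquiv.ofBijective φ ⟨?_, ?_⟩)
  · rw [← LinearMap.ker_eq_bot, LinearMap.ker_eq_bot']
    intro f hf
    apply Subtype.ext
    exact phi_inj d f.2 (congrArg Subtype.val hf)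
  · rintro ⟨g, hg⟩
    exact ⟨⟨psiS g, psi_mem d hg⟩, Subtype.ext (phi_psi g)⟩

theorem inv_finrank (K L : Type) [Field K] [Field L] [Infinite K] [Infinite L] (m N d : ℕ) :
    Module.finrank K ↥(Subalgebra.toSubmodule (matrixInvariants K (N+1) m) ⊓
          homogeneousSubmodule (Fin m × Fin (N+1) × Fin (N+1)) K d)
        = Module.finrank L ↥(Subalgebra.toSubmodule (matrixInvariants L (N+1) m) ⊓
          homogeneousSubmodule (Fin m × Fin (N+1) × Fin (N+1)) L d) := by
  rw [inv_finrank_QQ, inv_finrank_QQ]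
  exact finrank_QQ_eq K L _ _ _
end SS

/-- The Hilbert series of `R(n,m)` and `S(n,m)` are independent of the
underlying algebraically closed field: for every degree `d`, the dimensions of the degree-`d`
homogeneous components over `K` and over `L` agree. -/
theorem stmt_15 (K L : Type) [Field K] [IsAlgClosed K] [Field L] [IsAlgClosed L]
    (n m : ℕ) (hn : 0 < n) (hm : 0 < m) (d : ℕ) :
    Module.finrank K ↥(Subalgebra.toSubmodule (matrixSemiInvariants K n m) ⊓
          homogeneousSubmodule (Fin m × Fin n × Fin n) K d)
        = Module.finrank L ↥(Subalgebra.toSubmodule (matrixSemiInvariants L n m) ⊓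
          homogeneousSubmodule (Fin m × Fin n × Fin n) L d) ∧
      Module.finrank K ↥(Subalgebra.toSubmodule (matrixInvariants K n m) ⊓
          homogeneousSubmodule (Fin m × Fin n × Fin n) K d)
        = Module.finrank L ↥(Subalgebra.toSubmodule (matrixInvariants L n m) ⊓
          homogeneousSubmodule (Fin m × Fin n × Fin n) L d) := by
  obtain ⟨N, rfl⟩ : ∃ N, n = N + 1 := ⟨n - 1, by omega⟩
  have := IsAlgClosed.instInfinite (K := K)
  have := IsAlgClosed.instInfinite (K := L)
  exact ⟨semi_finrank K L m N d, inv_finrank K L m N d⟩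
end

section
/- Let K be an algebraically closed field and n, m positive integers. Then β(S(n,m)) ≤ β(R(n,m+1)): if R(n,m+1) is generated by its homogeneous elements of degree ≤ D, then S(n,m) is generated by its homogeneous elements of degree ≤ D. -/
open MvPolynomial Matrix

namespace Stmt17

lemma eval_smul_of_homog {K σ : Type} [Field K] {f : MvPolynomial σ K} {d : ℕ}
    (hf : f.IsHomogeneous d) (t : K) (x : σ → K) :
    aeval (fun i => t * x i) f = t ^ d * aeval x f := by
  simp only [MvPolynomial.aeval_def, MvPolynomial.eval₂_eq, Finset.mul_sum]
  refine Finset.sum_congr rfl fun s hs => ?_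
  have h1 : ∑ i ∈ s.support, s i = d := by
    have := hf (MvPolynomial.mem_support_iff.mp hs)
    rw [Finsupp.weight_apply] at this
    simpa [Finsupp.sum] using this
  simp only [mul_pow, Finset.prod_mul_distrib, Finset.prod_pow_eq_pow_sum, h1]
  ring

lemma comp_eq {K σ : Type} [Field K] [Infinite K] (f : MvPolynomial σ K) (x y : σ → K)
    (h : ∀ t : K, aeval (fun i => t * x i) f = aeval (fun i => t * y i) f) (d : ℕ) :
    aeval x (homogeneousComponent d f) = aeval y (homogeneousComponent d f) := by
  let P : (σ → K) → Polynomial K := fun z =>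
    ∑ e ∈ Finset.range (f.totalDegree + 1),
      Polynomial.monomial e (aeval z (homogeneousComponent e f))
  have hP : ∀ z t, (P z).eval t = aeval (fun i => t * z i) f := by
    intro z t
    conv_rhs => rw [← sum_homogeneousComponent f]
    rw [map_sum]
    simp only [P, Polynomial.eval_finsetSum, Polynomial.eval_monomial]
    refine Finset.sum_congr rfl fun e _ => ?_
    rw [eval_smul_of_homog (homogeneousComponent_isHomogeneous e f), mul_comm]
  have hxy : P x = P y := Polynomial.funext fun t => by rw [hP, hP, h]
  have hc : ∀ z, d < f.totalDegree + 1 →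
      (P z).coeff d = aeval z (homogeneousComponent d f) := by
    intro z hd
    simp only [P, Polynomial.finsetSum_coeff, Polynomial.coeff_monomial]
    rw [Finset.sum_ite_eq', if_pos (Finset.mem_range.mpr hd)]
  by_cases hd : d < f.totalDegree + 1
  · rw [← hc x hd, ← hc y hd, hxy]
  · rw [homogeneousComponent_eq_zero d f (by omega)]
    simp

lemma mem_S {K : Type} [Field K] {n m : ℕ} {f : MvPolynomial (Fin m × Fin n × Fin n) K} :
    f ∈ matrixInvariants K n m ↔ ∀ (A : GeneralLinearGroup (Fin n) K)
      (X : Fin m → Matrix (Fin n) (Fin n) K),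
      aeval (matCoords fun i => A.val * X i * (A⁻¹).val) f = aeval (matCoords X) f := by
  simp [matrixInvariants, Algebra.mem_iInf, AlgHom.mem_equalizer]

lemma mem_R {K : Type} [Field K] {n m : ℕ} {f : MvPolynomial (Fin m × Fin n × Fin n) K} :
    f ∈ matrixSemiInvariants K n m ↔ ∀ (A B : SpecialLinearGroup (Fin n) K)
      (X : Fin m → Matrix (Fin n) (Fin n) K),
      aeval (matCoords fun i => A.val * X i * (B⁻¹).val) f = aeval (matCoords X) f := by
  simp only [matrixSemiInvariants, Algebra.mem_iInf, AlgHom.mem_equalizer]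

lemma comp_mem_S {K : Type} [Field K] [Infinite K] {n m : ℕ}
    {f : MvPolynomial (Fin m × Fin n × Fin n) K}
    (hf : f ∈ matrixInvariants K n m) (d : ℕ) :
    homogeneousComponent d f ∈ matrixInvariants K n m := by
  rw [mem_S] at hf ⊢
  intro A X
  refine comp_eq f _ _ (fun t => ?_) d
  have := hf A (fun i => t • X i)
  convert this using 3 <;> ext p <;> simp [matCoords]

noncomputable def phi (K : Type) [Field K] (n m : ℕ) :
    MvPolynomial (Fin (m + 1) × Fin n × Fin n) K →ₐ[K] MvPolynomial (Fin m × Fin n × Fin n) K :=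
  aeval fun p => Fin.cases (C ((1 : Matrix (Fin n) (Fin n) K) p.2.1 p.2.2))
    (fun k => X (k, p.2.1, p.2.2)) p.1

lemma aeval_phi {K : Type} [Field K] {n m : ℕ} (Y : Fin m → Matrix (Fin n) (Fin n) K)
    (h : MvPolynomial (Fin (m + 1) × Fin n × Fin n) K) :
    aeval (matCoords Y) (phi K n m h)
      = aeval (matCoords (Fin.cons (1 : Matrix (Fin n) (Fin n) K) Y :
          Fin (m + 1) → Matrix (Fin n) (Fin n) K)) h := by
  rw [phi, ← AlgHom.comp_apply]
  congr 1
  ext ⟨i, j, k⟩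
  refine Fin.cases ?_ (fun i => ?_) i <;> simp [matCoords]

noncomputable def gen (K : Type) [Field K] (n m : ℕ) (i : Fin m) :
    Matrix (Fin n) (Fin n) (MvPolynomial (Fin m × Fin n × Fin n) K) :=
  Matrix.of fun j k => X (i, j, k)

noncomputable def psi (K : Type) [Field K] (n m : ℕ) :
    MvPolynomial (Fin m × Fin n × Fin n) K →ₐ[K] MvPolynomial (Fin (m + 1) × Fin n × Fin n) K :=
  aeval fun p => (adjugate (gen K n (m + 1) 0) * gen K n (m + 1) p.1.succ) p.2.1 p.2.2

lemma aeval_psi {K : Type} [Field K] {n m : ℕ} (Y : Fin (m + 1) → Matrix (Fin n) (Fin n) K)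
    (f : MvPolynomial (Fin m × Fin n × Fin n) K) :
    aeval (matCoords Y) (psi K n m f)
      = aeval (matCoords fun i : Fin m => adjugate (Y 0) * Y i.succ) f := by
  have hg : ∀ i, (aeval (matCoords Y) :
      MvPolynomial (Fin (m + 1) × Fin n × Fin n) K →ₐ[K] K).mapMatrix (gen K n (m + 1) i)
        = Y i := by
    intro i
    ext j k
    simp [gen, matCoords]
  rw [psi, ← AlgHom.comp_apply]
  congr 1
  ext ⟨i, j, k⟩
  rw [AlgHom.comp_apply, aeval_X, aeval_X]
  have := congrFun (congrFun (map_mul (aeval (matCoords Y) :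
      MvPolynomial (Fin (m + 1) × Fin n × Fin n) K →ₐ[K] K).mapMatrix
      (adjugate (gen K n (m + 1) 0)) (gen K n (m + 1) i.succ)) j) k
  rw [AlgHom.map_adjugate, hg, hg] at this
  exact this

lemma matCoords_surj {K : Type} [Field K] {n m : ℕ} (x : Fin m × Fin n × Fin n → K) :
    ∃ Y : Fin m → Matrix (Fin n) (Fin n) K, matCoords Y = x :=
  ⟨fun i => Matrix.of fun j k => x (i, j, k), rfl⟩

lemma phi_psi {K : Type} [Field K] [Infinite K] {n m : ℕ}
    (f : MvPolynomial (Fin m × Fin n × Fin n) K) : phi K n m (psi K n m f) = f := by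
  refine MvPolynomial.funext fun x => ?_
  obtain ⟨Y, rfl⟩ := matCoords_surj x
  have := aeval_phi Y (psi K n m f)
  rw [aeval_psi] at this
  simpa [MvPolynomial.coe_aeval_eq_eval] using this

lemma sl_inv {K : Type} [Field K] {n : ℕ} (B : SpecialLinearGroup (Fin n) K) :
    (B⁻¹).val = adjugate B.val :=
  Matrix.SpecialLinearGroup.coe_inv B

lemma psi_mem {K : Type} [Field K] {n m : ℕ}
    {f : MvPolynomial (Fin m × Fin n × Fin n) K} (hf : f ∈ matrixInvariants K n m) :
    psi K n m f ∈ matrixSemiInvariants K n (m + 1) := by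
  rw [mem_S] at hf
  rw [mem_R]
  intro A B X
  rw [aeval_psi, aeval_psi, 
    ← hf (SpecialLinearGroup.toGL B) (fun i => adjugate (X 0) * X i.succ)]
  congr 2
  refine congrArg matCoords ?_
  funext i
  have hA : adjugate A.val * A.val = 1 := by rw [adjugate_mul, A.2, one_smul]
  have hB : adjugate (adjugate B.val) = B.val := by
    rw [← sl_inv, ← sl_inv, inv_inv]
  have hB' : ((SpecialLinearGroup.toGL B)⁻¹).val = adjugate B.val := by
    rw [← map_inv]; rfl
  rw [hB']
  change _ = B.val * _ * _
  simp only [sl_inv, adjugate_mul_distrib, hB]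
  calc _ = B.val * (adjugate (X 0) * ((adjugate A.val * A.val) * X i.succ)) * adjugate B.val := by
        simp only [Matrix.mul_assoc]
    _ = _ := by rw [hA, Matrix.one_mul]

lemma exists_sl {K : Type} [Field K] [IsAlgClosed K] {n : ℕ} (hn : 0 < n)
    (A : GeneralLinearGroup (Fin n) K) : ∃ B : SpecialLinearGroup (Fin n) K,
      ∀ Y : Matrix (Fin n) (Fin n) K, A.val * Y * (A⁻¹).val = B.val * Y * (B⁻¹).val := by
  obtain ⟨c, hc⟩ := IsAlgClosed.exists_pow_nat_eq (A.val.det) hn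
  have hdet : A.val.det ≠ 0 := A.det.ne_zero
  have hc0 : c ≠ 0 := by
    rintro rfl
    rw [zero_pow hn.ne'] at hc
    exact hdet hc.symm
  have hB : (c⁻¹ • A.val).det = 1 := by
    rw [det_smul, Fintype.card_fin, ← hc, inv_pow, inv_mul_cancel₀ (pow_ne_zero _ hc0)]
  let B : SpecialLinearGroup (Fin n) K := ⟨c⁻¹ • A.val, hB⟩
  refine ⟨B, fun Y => ?_⟩
  have hAA : A.val * (A⁻¹).val = 1 := by
    rw [← Units.val_mul, mul_inv_cancel]; rfl
  have h2 : adjugate (c⁻¹ • A.val) = c • (A⁻¹).val := by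
    have h3 : adjugate (c⁻¹ • A.val) * (c⁻¹ • A.val) = 1 := by
      rw [adjugate_mul, hB, one_smul]
    have h4 : (c⁻¹ • A.val) * (c • (A⁻¹).val) = 1 := by
      rw [Matrix.smul_mul, Matrix.mul_smul, smul_smul, inv_mul_cancel₀ hc0, one_smul, hAA]
    exact left_inv_eq_right_inv h3 h4
  rw [sl_inv B]
  change _ = (c⁻¹ • A.val) * Y * adjugate (c⁻¹ • A.val)
  rw [h2, Matrix.smul_mul, Matrix.smul_mul, Matrix.mul_smul, smul_smul, inv_mul_cancel₀ hc0,
    one_smul]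

lemma phi_mem {K : Type} [Field K] [IsAlgClosed K] {n m : ℕ} (hn : 0 < n)
    {h : MvPolynomial (Fin (m + 1) × Fin n × Fin n) K}
    (hh : h ∈ matrixSemiInvariants K n (m + 1)) : phi K n m h ∈ matrixInvariants K n m := by
  rw [mem_R] at hh
  rw [mem_S]
  intro A Y
  obtain ⟨B, hB⟩ := exists_sl hn A
  rw [aeval_phi, aeval_phi, ← hh B B (Fin.cons 1 Y)]
  congr 2
  refine congrArg matCoords ?_
  funext i
  refine Fin.cases ?_ (fun i => ?_) i
  · simp only [Fin.cons_zero, Matrix.mul_one]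
    rw [sl_inv, mul_adjugate, B.2, one_smul]
  · simp only [Fin.cons_succ, hB]

lemma phi_deg {K : Type} [Field K] {n m d : ℕ}
    {h : MvPolynomial (Fin (m + 1) × Fin n × Fin n) K} (hh : h.IsHomogeneous d) :
    (phi K n m h).totalDegree ≤ d := by
  rw [phi, MvPolynomial.aeval_def, MvPolynomial.eval₂_eq]
  refine (totalDegree_finsetSum _ _).trans (Finset.sup_le fun s hs => ?_)
  have h1 : ∑ i ∈ s.support, s i = d := by
    have := hh (MvPolynomial.mem_support_iff.mp hs)
    rw [Finsupp.weight_apply] at this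
    simpa [Finsupp.sum] using this
  refine (totalDegree_mul _ _).trans ?_
  rw [MvPolynomial.algebraMap_eq, totalDegree_C, zero_add, ← h1]
  refine (totalDegree_finsetProd _ _).trans (Finset.sum_le_sum fun p _ => ?_)
  refine (totalDegree_pow _ _).trans ?_
  refine (Nat.mul_le_mul_left _ (?_ : _ ≤ 1)).trans (mul_one _).le
  obtain ⟨i, j, k⟩ := p
  refine Fin.cases ?_ (fun i => ?_) i
  · simp
  · simp

end Stmt17

/-- `β(S(n,m)) ≤ β(R(n,m+1))`: if `R(n,m+1)` is generated by its homogeneous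
elements of degree `≤ D`, then so is `S(n,m)`. -/
theorem stmt_17 (K : Type) [Field K] [IsAlgClosed K] (n m : ℕ) (hn : 0 < n) (hm : 0 < m)
    (D : ℕ)
    (hR : Algebra.adjoin K
        {f | f ∈ matrixSemiInvariants K n (m + 1) ∧ ∃ d ≤ D, f.IsHomogeneous d}
      = matrixSemiInvariants K n (m + 1)) :
    Algebra.adjoin K
        {f | f ∈ matrixInvariants K n m ∧ ∃ d ≤ D, f.IsHomogeneous d}
      = matrixInvariants K n m := by
  have : Infinite K := IsAlgClosed.instInfinite
  apply le_antisymm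
  · exact Algebra.adjoin_le fun f hf => hf.1
  · intro f hf
    have h1 := Stmt17.psi_mem hf
    rw [← hR] at h1
    rw [← Stmt17.phi_psi f]
    have h2 : Stmt17.phi K n m (Stmt17.psi K n m f) ∈
        (Algebra.adjoin K {f | f ∈ matrixSemiInvariants K n (m + 1) ∧
          ∃ d ≤ D, f.IsHomogeneous d}).map (Stmt17.phi K n m) :=
      ⟨_, h1, rfl⟩
    rw [AlgHom.map_adjoin] at h2
    refine Algebra.adjoin_le ?_ h2
    rintro _ ⟨h, ⟨hh, d, hd, hhom⟩, rfl⟩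
    have hS := Stmt17.phi_mem hn hh
    have hdeg := Stmt17.phi_deg (n := n) (m := m) hhom
    change Stmt17.phi K n m h ∈ Algebra.adjoin K _
    rw [← sum_homogeneousComponent (Stmt17.phi K n m h)]
    refine Subalgebra.sum_mem _ fun e he => Algebra.subset_adjoin ?_
    refine ⟨Stmt17.comp_mem_S hS e, e, ?_, homogeneousComponent_isHomogeneous e _⟩
    have := Finset.mem_range.mp he
    omega
end
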